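/- arXiv:2102.08806 — 2 statements merged into one kernel-verified Lean document; each statement's English description precedes it below -/
import Mathlib

section
/- Let n ≥ 2, 2 ≤ p ≤ ∞ and α ≥ 0. Let γ : I → ℝⁿ be a smooth, injective, regular, non-degenerate curve on a compact interval I, and let χ ∈ C_c^∞(ℝ) be nonnegative, not identically zero, and supported in the interior of I. If there exists a constant C such that ‖A_γ f‖_{L^p_α(ℝⁿ)} ≤ C ‖f‖_{L^p(ℝⁿ)} for every Schwartz function f, then α ≤ min{(1/n)(1/2 + 1/p), 1/p}. -/
open MeasureTheory Set
open scoped FourierTransform RealInnerProductSpace ENNReal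

noncomputable section

/-- Euclidean space ℝⁿ. -/
abbrev Euc (n : ℕ) := EuclideanSpace ℝ (Fin n)

/-- The averaging operator `A_γ f (x) = ∫ f(x - γ(s)) χ(s) ds`. -/
def avgOp {n : ℕ} (γ : ℝ → Euc n) (χ : ℝ → ℝ) (f : Euc n → ℂ) : Euc n → ℂ :=
  fun x => ∫ s : ℝ, f (x - γ s) * (χ s : ℂ)

/-- The `L^p` Sobolev norm `‖𝓕⁻¹[(1+|ξ|²)^{α/2} 𝓕 g]‖_{L^p}` of order `α`. -/
def sobolevNorm {n : ℕ} (p : ℝ≥0∞) (α : ℝ) (g : Euc n → ℂ) : ℝ≥0∞ :=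
  eLpNorm (𝓕⁻ (fun ξ : Euc n => (((1 + ‖ξ‖ ^ 2) ^ (α / 2) : ℝ) : ℂ) * 𝓕 g ξ)) p volume

/-- Non-degeneracy: `|det(γ'(s), …, γ⁽ⁿ⁾(s))| ≥ c₀ > 0` on `I`. -/
def NonDeg {n : ℕ} (γ : ℝ → Euc n) (I : Set ℝ) : Prop :=
  ∃ c₀ > (0 : ℝ), ∀ s ∈ I,
    c₀ ≤ |(Matrix.of fun i j : Fin n => iteratedDeriv ((j : ℕ) + 1) γ s i).det|

/-!
Apply the bound to sums of `N` Gaussian wave packets of width `1 / N`, centred at the points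
`-γ(t_ν)` of a grid of spacing about `1 / N`, and pair the outputs, after applying
`(1 - Δ)^(α/2)`, with modulated Gaussians of width `1 / N` at the origin. The packets barely
overlap, which controls the `L^p` norm of the input, whereas the average over `γ` moves each of them
to the origin for a parameter interval of length about `1 / N`, so that all outputs meet there.

* At frequency zero, averaging over translates of the grid turns the pairing into the energy
  `∫ ⟨ξ⟩^α |m(ξ)|² dξ` of the multiplier `m` over `|ξ| ≲ N`, which is at least of order
  `N^(n - 1 + α)`. This gives `α ≤ 1 / p`, and for `n = 2` the other condition follows.
* Let `e(t)` annihilate `γ'(t), …, γ⁽ⁿ⁻¹⁾(t)`. At frequency `ε N^n e(t_ν)` the phase is essentially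
  constant for `|s - t_ν| ≲ 1 / N`, so each diagonal pairing keeps its full size while the
  derivative gains `N^(nα)`. For `n ≥ 3` these frequencies are `N²`-separated: off-diagonal pairings
  are negligible and the test functions almost orthogonal, so that testing against all of them costs
  only `N^(1/2)`. This gives `nα ≤ 1 / 2 + 1 / p`.
-/

open Module (finrank)
open scoped Real SchwartzMap

section Gaussian

theorem exists_one_add_pow_mul_exp_neg_mul_sq_le {b : ℝ} (hb : 0 < b) (j : ℕ) :
    ∃ C : ℝ, ∀ r : ℝ, 0 ≤ r → (1 + r) ^ j * Real.exp (-(b * r ^ 2)) ≤ C := by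
  refine ⟨(4 / b) ^ j * j.factorial * Real.exp b, fun r hr => ?_⟩
  have exp_ge : (b * (1 + r ^ 2)) ^ j ≤ Real.exp (b * (1 + r ^ 2)) * j.factorial :=
    (div_le_iff₀ (by positivity)).1 (Real.pow_div_factorial_le_exp _ (by positivity) j)
  have one_add_le : 1 + r ≤ 4 / b * (b * (1 + r ^ 2)) := by
    rw [← mul_assoc, div_mul_cancel₀ _ hb.ne']
    nlinarith [sq_nonneg (r - 1)]
  calc (1 + r) ^ j * Real.exp (-(b * r ^ 2))
      ≤ (4 / b * (b * (1 + r ^ 2))) ^ j * Real.exp (-(b * r ^ 2)) := by gcongr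
    _ ≤ (4 / b) ^ j * (Real.exp (b * (1 + r ^ 2)) * j.factorial) * Real.exp (-(b * r ^ 2)) := by
        rw [mul_pow]; gcongr
    _ = (4 / b) ^ j * j.factorial * (Real.exp (b * (1 + r ^ 2)) * Real.exp (-(b * r ^ 2))) := by
        ring
    _ = (4 / b) ^ j * j.factorial * Real.exp b := by rw [← Real.exp_add]; ring_nf

variable {V : Type*} [NormedAddCommGroup V] [InnerProductSpace ℝ V]

theorem exists_norm_iteratedFDeriv_exp_neg_mul_norm_sq_le {b : ℝ} (hb : 0 < b) (m : ℕ) :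
    ∃ (k : ℕ) (C : ℝ), 0 ≤ C ∧ ∀ x : V,
      ‖iteratedFDeriv ℝ m (fun x : V => Real.exp (-(b * ‖x‖ ^ 2))) x‖ ≤
        C * ((1 + ‖x‖) ^ k * Real.exp (-(b * ‖x‖ ^ 2))) := by
  have sq_growth : (fun x : V => ‖x‖ ^ 2).HasTemperateGrowth := by fun_prop
  obtain ⟨k, C, hC, sq_deriv_le⟩ := sq_growth.norm_iteratedFDeriv_le_uniform m
  refine ⟨k * m, m.factorial * (1 + b) ^ m * (1 + C) ^ m, by positivity, fun x => ?_⟩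
  have exp_deriv_le : ∀ i ≤ m, ‖iteratedFDeriv ℝ i (fun u : ℝ => Real.exp (-b * u)) (‖x‖ ^ 2)‖ ≤
      (1 + b) ^ m * Real.exp (-(b * ‖x‖ ^ 2)) := by
    intro i hi
    rw [norm_iteratedFDeriv_eq_norm_iteratedDeriv, iteratedDeriv_exp_const_mul, norm_mul, norm_pow,
      norm_neg, Real.norm_of_nonneg hb.le, Real.norm_of_nonneg (Real.exp_nonneg _), neg_mul]
    gcongr
    calc b ^ i ≤ (1 + b) ^ i := by gcongr; linarith
      _ ≤ (1 + b) ^ m := pow_le_pow_right₀ (by linarith) hi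
  have sq_deriv_le_pow : ∀ i, 1 ≤ i → i ≤ m →
      ‖iteratedFDeriv ℝ i (fun x : V => ‖x‖ ^ 2) x‖ ≤ ((1 + C) * (1 + ‖x‖) ^ k) ^ i := by
    intro i hi him
    have one_le : 1 ≤ (1 + C) * (1 + ‖x‖) ^ k :=
      one_le_mul_of_one_le_of_one_le (by linarith) (one_le_pow₀ (by linarith [norm_nonneg x]))
    calc _ ≤ C * (1 + ‖x‖) ^ k := sq_deriv_le i him x
      _ ≤ (1 + C) * (1 + ‖x‖) ^ k := by gcongr; linarith
      _ ≤ _ := le_self_pow₀ one_le (by omega)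
  have comp_eq : (fun x : V => Real.exp (-(b * ‖x‖ ^ 2))) =
      (fun u : ℝ => Real.exp (-b * u)) ∘ fun x : V => ‖x‖ ^ 2 := by ext; simp
  rw [comp_eq]
  refine (norm_iteratedFDeriv_comp_le (N := (⊤ : ℕ∞)) (by fun_prop) sq_growth.1
    (by exact_mod_cast le_top) x exp_deriv_le sq_deriv_le_pow).trans_eq ?_
  rw [mul_pow, pow_mul]
  ring

theorem exists_schwartzMap_eq_exp_neg_mul_norm_sq {b : ℝ} (hb : 0 < b) :
    ∃ g : 𝓢(V, ℝ), ∀ x, g x = Real.exp (-(b * ‖x‖ ^ 2)) := by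
  refine ⟨⟨fun x => Real.exp (-(b * ‖x‖ ^ 2)),
    (contDiff_const.mul (contDiff_norm_sq ℝ)).neg.exp, fun k m => ?_⟩, fun _ => rfl⟩
  obtain ⟨j, C, hC, deriv_le⟩ := exists_norm_iteratedFDeriv_exp_neg_mul_norm_sq_le (V := V) hb m
  obtain ⟨B, hB⟩ := exists_one_add_pow_mul_exp_neg_mul_sq_le hb (k + j)
  refine ⟨C * B, fun x => ?_⟩
  calc _ ≤ (1 + ‖x‖) ^ k * (C * ((1 + ‖x‖) ^ j * Real.exp (-(b * ‖x‖ ^ 2)))) := by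
        gcongr
        · linarith
        · exact deriv_le x
    _ = C * ((1 + ‖x‖) ^ (k + j) * Real.exp (-(b * ‖x‖ ^ 2))) := by ring
    _ ≤ C * B := by gcongr; exact hB _ (norm_nonneg x)

/-- The `L¹`-normalised Gaussian at spatial scale `1 / N`. -/
def gaussDensity (N : ℝ) (x : V) : ℝ :=
  N ^ finrank ℝ V * Real.exp (-(π * N ^ 2 * ‖x‖ ^ 2))

/-- The Gaussian at frequency scale `N` centred at `η`, normalised to have peak value `1`. -/
def freqGauss (N : ℝ) (η ξ : V) : ℝ :=
  Real.exp (-(π / N ^ 2 * ‖ξ - η‖ ^ 2))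

/-- The wave packet of frequency `ξ` and spatial scale `1 / N` centred at `y`. -/
def wavePacket (N : ℝ) (ξ y x : V) : ℂ :=
  𝐞 ⟪ξ, x - y⟫ * (gaussDensity N (x - y) : ℂ)

theorem gaussDensity_nonneg {N : ℝ} (hN : 0 ≤ N) (x : V) : 0 ≤ gaussDensity N x := by
  unfold gaussDensity; positivity

theorem gaussDensity_le {N : ℝ} (hN : 0 ≤ N) (x : V) : gaussDensity N x ≤ N ^ finrank ℝ V :=
  mul_le_of_le_one_right (by positivity) (Real.exp_le_one_iff.2 (neg_nonpos.2 (by positivity)))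

@[fun_prop]
theorem continuous_gaussDensity (N : ℝ) : Continuous (gaussDensity N : V → ℝ) := by
  unfold gaussDensity; fun_prop

theorem norm_wavePacket {N : ℝ} (hN : 0 ≤ N) (ξ y x : V) :
    ‖wavePacket N ξ y x‖ = gaussDensity N (x - y) := by
  rw [wavePacket, norm_mul, Circle.norm_coe, one_mul, Complex.norm_real,
    Real.norm_of_nonneg (gaussDensity_nonneg hN _)]

theorem hasTemperateGrowth_fourierChar : (fun t : ℝ => (𝐞 t : ℂ)).HasTemperateGrowth := by
  have iteratedDeriv_eq : ∀ m : ℕ,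
      iteratedDeriv m (fun t : ℝ => (𝐞 t : ℂ)) = fun t => (2 * π * Complex.I) ^ m * 𝐞 t := by
    intro m
    induction m with
    | zero => simp
    | succ m ih =>
      ext t
      rw [iteratedDeriv_succ, ih, ((Real.hasDerivAt_fourierChar t).const_mul _).deriv]
      ring
  have contDiff : ContDiff ℝ (⊤ : ℕ∞) fun t : ℝ => (𝐞 t : ℂ) := by
    simp_rw [Real.fourierChar_apply]
    exact ((Complex.ofRealCLM.contDiff.comp
      (contDiff_const.mul contDiff_id)).mul contDiff_const).cexp
  refine ⟨contDiff, fun m => ⟨0, (2 * π) ^ m, fun x => ?_⟩⟩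
  rw [norm_iteratedFDeriv_eq_norm_iteratedDeriv, iteratedDeriv_eq]
  simp [abs_of_pos Real.pi_pos, Circle.norm_coe]

theorem exists_schwartzMap_eq_wavePacket {N : ℝ} (hN : 0 < N) (ξ y : V) :
    ∃ g : 𝓢(V, ℂ), ∀ x, g x = wavePacket N ξ y x := by
  obtain ⟨g, hg⟩ :=
    exists_schwartzMap_eq_exp_neg_mul_norm_sq (V := V) (by positivity : 0 < π * N ^ 2)
  have modulation_growth :
      (fun x : V => (𝐞 ⟪ξ, x⟫ : ℂ) * ((N ^ finrank ℝ V : ℝ) : ℂ)).HasTemperateGrowth :=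
    (hasTemperateGrowth_fourierChar.comp (f := fun x : V => ⟪ξ, x⟫) (by fun_prop)).mul (.const _)
  refine ⟨SchwartzMap.compSubConstCLM ℂ y (SchwartzMap.smulLeftCLM ℂ
    (fun x : V => (𝐞 ⟪ξ, x⟫ : ℂ) * ((N ^ finrank ℝ V : ℝ) : ℂ))
    (SchwartzMap.postcompCLM Complex.ofRealCLM g)), fun x => ?_⟩
  rw [SchwartzMap.compSubConstCLM_apply, SchwartzMap.smulLeftCLM_apply_apply modulation_growth]
  simp [hg, wavePacket, gaussDensity, mul_assoc]

theorem continuous_neg_inner : Continuous fun q : V × V => (-innerₗ V) q.1 q.2 := by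
  simp only [LinearMap.neg_apply, innerₗ_apply_apply]
  fun_prop

variable [FiniteDimensional ℝ V] [MeasurableSpace V] [BorelSpace V]

theorem integrable_one_add_norm_pow_mul_exp_neg_mul_norm_sq {b : ℝ} (hb : 0 < b) (j : ℕ) (ξ₀ : V) :
    Integrable fun ξ : V => (1 + ‖ξ - ξ₀‖) ^ j * Real.exp (-(b * ‖ξ - ξ₀‖ ^ 2)) := by
  suffices centered : Integrable fun ξ : V => (1 + ‖ξ‖) ^ j * Real.exp (-(b * ‖ξ‖ ^ 2)) from
    centered.comp_sub_right ξ₀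
  obtain ⟨g, hg⟩ := exists_schwartzMap_eq_exp_neg_mul_norm_sq (V := V) (half_pos hb)
  obtain ⟨C, hC⟩ := exists_one_add_pow_mul_exp_neg_mul_sq_le (half_pos hb) j
  refine (g.integrable.const_mul C).mono' (Continuous.aestronglyMeasurable (by fun_prop))
    (.of_forall fun x => ?_)
  rw [Real.norm_of_nonneg (by positivity), hg]
  calc _ = ((1 + ‖x‖) ^ j * Real.exp (-(b / 2 * ‖x‖ ^ 2))) * Real.exp (-(b / 2 * ‖x‖ ^ 2)) := by
        rw [mul_assoc, ← Real.exp_add]; ring_nf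
    _ ≤ _ := by gcongr; exact hC _ (norm_nonneg x)

theorem integrable_exp_neg_mul_norm_sub_sq {b : ℝ} (hb : 0 < b) (ξ₀ : V) :
    Integrable fun ξ : V => Real.exp (-(b * ‖ξ - ξ₀‖ ^ 2)) := by
  simpa using integrable_one_add_norm_pow_mul_exp_neg_mul_norm_sq hb 0 ξ₀

theorem integral_fourierChar_mul_exp_neg_mul_norm_sub_sq {b : ℝ} (hb : 0 < b) (ξ₀ y : V) :
    ∫ ξ : V, (𝐞 (-⟪y, ξ⟫) : ℂ) * (Real.exp (-(b * ‖ξ - ξ₀‖ ^ 2)) : ℝ) =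
      𝐞 (-⟪y, ξ₀⟫) *
        (((π / b) ^ ((finrank ℝ V : ℝ) / 2) * Real.exp (-(π ^ 2 * ‖y‖ ^ 2 / b)) : ℝ) : ℂ) := by
  have centered := fourier_gaussian_innerProductSpace (V := V) (b := (b : ℂ)) (by simpa using hb) y
  rw [Real.fourier_eq] at centered
  have factor : ∀ ξ : V, (𝐞 (-⟪y, ξ + ξ₀⟫) : ℂ) * (Real.exp (-(b * ‖ξ + ξ₀ - ξ₀‖ ^ 2)) : ℝ) =
      𝐞 (-⟪y, ξ₀⟫) * (𝐞 (-⟪ξ, y⟫) • Complex.exp (-(b : ℂ) * (‖ξ‖ : ℂ) ^ 2)) := by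
    intro ξ
    rw [inner_add_right, neg_add, AddChar.map_add_eq_mul, Circle.coe_mul, Circle.smul_def,
      add_sub_cancel_right, real_inner_comm y ξ]
    push_cast
    rw [smul_eq_mul, neg_mul]
    ring
  rw [← integral_add_right_eq_self _ ξ₀]
  simp_rw [factor]
  rw [integral_const_mul, centered]
  push_cast
  rw [Complex.ofReal_cpow (by positivity)]
  push_cast
  ring_nf

theorem integrable_gaussDensity {N : ℝ} (hN : 0 < N) : Integrable (gaussDensity N : V → ℝ) := by
  have gauss := integrable_exp_neg_mul_norm_sub_sq (by positivity : 0 < π * N ^ 2) (0 : V)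
  simp only [sub_zero] at gauss
  exact gauss.const_mul _

theorem pow_mul_inv_sq_rpow_half {N : ℝ} (hN : 0 < N) (d : ℕ) :
    N ^ d * (π / (π * N ^ 2)) ^ ((d : ℝ) / 2) = 1 := by
  have base_eq : π / (π * N ^ 2) = N⁻¹ ^ 2 := by
    have := Real.pi_ne_zero
    field_simp
  rw [base_eq, ← Real.rpow_natCast N⁻¹ 2, ← Real.rpow_mul (by positivity), Nat.cast_two,
    mul_div_cancel₀ _ two_ne_zero, Real.rpow_natCast, ← mul_pow, mul_inv_cancel₀ hN.ne', one_pow]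

theorem integral_fourierChar_mul_gaussDensity {N : ℝ} (hN : 0 < N) (η ξ : V) :
    ∫ x : V, (𝐞 (-⟪ξ - η, x⟫) : ℂ) * (gaussDensity N x : ℂ) = (freqGauss N η ξ : ℂ) := by
  have gauss := integral_fourierChar_mul_exp_neg_mul_norm_sub_sq
    (by positivity : 0 < π * N ^ 2) (0 : V) (ξ - η)
  simp only [sub_zero, inner_zero_right, neg_zero, AddChar.map_zero_eq_one, Circle.coe_one,
    one_mul] at gauss
  simp_rw [gaussDensity, Complex.ofReal_mul (N ^ finrank ℝ V), mul_left_comm]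
  rw [integral_const_mul, gauss, ← Complex.ofReal_mul, ← mul_assoc, pow_mul_inv_sq_rpow_half hN,
    one_mul, freqGauss]
  congr 3
  have := Real.pi_ne_zero
  field_simp

theorem integral_gaussDensity {N : ℝ} (hN : 0 < N) : ∫ x : V, gaussDensity N x = 1 := by
  have transform_zero := integral_fourierChar_mul_gaussDensity hN (0 : V) 0
  simp only [sub_zero, inner_zero_left, neg_zero, AddChar.map_zero_eq_one, Circle.coe_one, one_mul,
    integral_complex_ofReal] at transform_zero
  simpa [freqGauss] using Complex.ofReal_injective transform_zero

theorem fourier_wavePacket {N : ℝ} (hN : 0 < N) (ξ₀ y ξ : V) :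
    𝓕 (wavePacket N ξ₀ y) ξ = 𝐞 (-⟪y, ξ⟫) * (freqGauss N ξ₀ ξ : ℂ) := by
  rw [Real.fourier_eq, ← integral_add_right_eq_self _ y,
    ← integral_fourierChar_mul_gaussDensity hN, ← integral_const_mul]
  congr 1 with x
  rw [wavePacket, add_sub_cancel_right, Circle.smul_def, smul_eq_mul, ← mul_assoc, ← mul_assoc,
    ← Circle.coe_mul, ← Circle.coe_mul, ← AddChar.map_add_eq_mul, ← AddChar.map_add_eq_mul]
  have phase_eq : -⟪x + y, ξ⟫ + ⟪ξ₀, x⟫ = -⟪y, ξ⟫ + -⟪ξ - ξ₀, x⟫ := by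
    rw [inner_add_left, inner_sub_left, real_inner_comm]
    ring
  rw [phase_eq]

theorem continuous_fourierInv {F : V → ℂ} (hF : Integrable F) : Continuous (𝓕⁻ F) :=
  VectorFourier.fourierIntegral_continuous Real.continuous_fourierChar continuous_neg_inner hF

theorem norm_fourierInv_le (F : V → ℂ) (x : V) : ‖𝓕⁻ F x‖ ≤ ∫ ξ, ‖F ξ‖ :=
  VectorFourier.norm_fourierIntegral_le_integral_norm _ _ _ _ _

theorem integral_fourierInv_mul_eq {F g : V → ℂ} (hF : Integrable F) (hg : Integrable g) :
    ∫ x, 𝓕⁻ F x * g x = ∫ ξ, F ξ * 𝓕⁻ g ξ := by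
  have flip_eq : (-innerₗ V).flip = -innerₗ V := by
    ext x y
    simp [real_inner_comm]
  have self_adjoint := VectorFourier.integral_fourierIntegral_smul_eq_flip (e := 𝐞)
    (μ := (volume : Measure V)) (ν := volume) (L := -innerₗ V) Real.continuous_fourierChar
    continuous_neg_inner hF hg
  rw [flip_eq] at self_adjoint
  exact self_adjoint

theorem integrable_fourierChar_mul_gaussDensity {N : ℝ} (hN : 0 < N) (η : V) :
    Integrable fun x : V => (𝐞 (-⟪η, x⟫) : ℂ) * (gaussDensity N x : ℂ) :=
  (integrable_gaussDensity hN).ofReal.bdd_mul (c := 1)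
    (Continuous.aestronglyMeasurable (by fun_prop)) (.of_forall fun x => (Circle.norm_coe _).le)

theorem fourierInv_fourierChar_mul_gaussDensity {N : ℝ} (hN : 0 < N) (η ξ : V) :
    𝓕⁻ (fun x : V => (𝐞 (-⟪η, x⟫) : ℂ) * (gaussDensity N x : ℂ)) ξ = (freqGauss N η ξ : ℂ) := by
  rw [← integral_fourierChar_mul_gaussDensity hN, Real.fourierInv_eq, ← integral_neg_eq_self]
  congr 1 with x
  rw [Circle.smul_def, smul_eq_mul, ← mul_assoc, ← Circle.coe_mul, ← AddChar.map_add_eq_mul]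
  simp only [gaussDensity, norm_neg, inner_neg_right, inner_neg_left, inner_sub_left,
    real_inner_comm]
  congr 4
  ring

end Gaussian

section LpBounds

variable {X E : Type*} [MeasurableSpace X] [NormedAddCommGroup E] {μ ν : Measure X}

theorem lintegral_enorm_rpow_le_of_norm_le {f : X → E} (hf : Integrable f μ) {P A B : ℝ}
    (hP : 1 ≤ P) (hA : 0 < A) (norm_le : ∀ x, ‖f x‖ ≤ A) (integral_le : ∫ x, ‖f x‖ ∂μ ≤ B) :
    ∫⁻ x, ‖f x‖ₑ ^ P ∂μ ≤ ENNReal.ofReal (A ^ (P - 1) * B) := by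
  have pointwise : ∀ x, ‖f x‖ₑ ^ P ≤ ENNReal.ofReal (A ^ (P - 1)) * ‖f x‖ₑ := by
    intro x
    have enorm_le : ‖f x‖ₑ ≤ ENNReal.ofReal A := by
      rw [← ofReal_norm]
      exact ENNReal.ofReal_le_ofReal (norm_le x)
    calc ‖f x‖ₑ ^ P = ‖f x‖ₑ ^ (P - 1) * ‖f x‖ₑ ^ (1 : ℝ) := by
          rw [← ENNReal.rpow_add_of_nonneg _ _ (by linarith) one_pos.le, sub_add_cancel]
      _ ≤ ENNReal.ofReal A ^ (P - 1) * ‖f x‖ₑ := by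
          rw [ENNReal.rpow_one]
          gcongr
      _ = ENNReal.ofReal (A ^ (P - 1)) * ‖f x‖ₑ := by rw [ENNReal.ofReal_rpow_of_pos hA]
  calc ∫⁻ x, ‖f x‖ₑ ^ P ∂μ ≤ ∫⁻ x, ENNReal.ofReal (A ^ (P - 1)) * ‖f x‖ₑ ∂μ :=
        lintegral_mono pointwise
    _ = ENNReal.ofReal (A ^ (P - 1)) * ENNReal.ofReal (∫ x, ‖f x‖ ∂μ) := by
        rw [lintegral_const_mul' _ _ ENNReal.ofReal_ne_top,
          ofReal_integral_norm_eq_lintegral_enorm hf]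
    _ ≤ _ := by
        rw [ENNReal.ofReal_mul (by positivity)]
        gcongr

theorem eLpNorm_le_of_norm_le_of_integral_norm_le {p : ℝ≥0∞} (hp : 1 ≤ p) {f : X → E}
    (hf : Integrable f μ) {A B : ℝ} (hA : 0 < A) (norm_le : ∀ x, ‖f x‖ ≤ A)
    (integral_le : ∫ x, ‖f x‖ ∂μ ≤ B) :
    eLpNorm f p μ ≤ ENNReal.ofReal (A ^ (1 - (1 / p).toReal) * B ^ (1 / p).toReal) := by
  rcases eq_or_ne p ∞ with rfl | hp_top
  · simpa using eLpNormEssSup_le_of_ae_bound (.of_forall norm_le)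
  have hp_one : 1 ≤ p.toReal := by
    rw [← ENNReal.toReal_one]
    exact ENNReal.toReal_mono hp_top hp
  have hB : 0 ≤ B := (integral_nonneg fun x => norm_nonneg _).trans integral_le
  rw [eLpNorm_eq_lintegral_rpow_enorm_toReal (one_pos.trans_le hp).ne' hp_top, ENNReal.toReal_div,
    ENNReal.toReal_one]
  calc (∫⁻ x, ‖f x‖ₑ ^ p.toReal ∂μ) ^ (1 / p.toReal)
      ≤ ENNReal.ofReal (A ^ (p.toReal - 1) * B) ^ (1 / p.toReal) := by
        gcongr
        exact lintegral_enorm_rpow_le_of_norm_le hf hp_one hA norm_le integral_le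
    _ = _ := by
        rw [ENNReal.ofReal_rpow_of_nonneg (by positivity) (by positivity),
          Real.mul_rpow (by positivity) hB, ← Real.rpow_mul hA.le]
        congr 3
        field_simp

theorem eLpNorm_le_of_le_smul_measure [IsProbabilityMeasure ν] {c : ℝ≥0∞} (hν : ν ≤ c • μ)
    {p q : ℝ≥0∞} (hqp : q ≤ p) {f : X → E} (hf : AEStronglyMeasurable f ν) :
    eLpNorm f q ν ≤ c ^ (1 / p).toReal * eLpNorm f p μ :=
  calc eLpNorm f q ν ≤ eLpNorm f p ν := eLpNorm_le_eLpNorm_of_exponent_le hqp hf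
    _ ≤ eLpNorm f p (c • μ) := eLpNorm_mono_measure f hν
    _ ≤ c ^ (1 / p).toReal * eLpNorm f p μ := eLpNorm_smul_measure_le c f p μ

theorem enorm_integral_mul_le_eLpNorm_two_mul_eLpNorm_two {f g : X → ℂ}
    (hf : AEStronglyMeasurable f ν) (hg : AEStronglyMeasurable g ν) :
    ‖∫ x, f x * g x ∂ν‖ₑ ≤ eLpNorm f 2 ν * eLpNorm g 2 ν :=
  calc ‖∫ x, f x * g x ∂ν‖ₑ ≤ eLpNorm (f • g) 1 ν := by
        rw [eLpNorm_one_eq_lintegral_enorm]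
        exact enorm_integral_le_lintegral_enorm _
    _ ≤ eLpNorm f 2 ν * eLpNorm g 2 ν := eLpNorm_smul_le_mul_eLpNorm hg hf

theorem eLpNorm_two_le_of_integral_norm_sq_le {g : X → E} (hg : MemLp g 2 ν) {Q : ℝ} (hQ : 0 ≤ Q)
    (integral_le : ∫ x, ‖g x‖ ^ 2 ∂ν ≤ Q ^ 2) : eLpNorm g 2 ν ≤ ENNReal.ofReal Q := by
  rw [hg.eLpNorm_eq_integral_rpow_norm two_ne_zero ENNReal.ofNat_ne_top]
  refine ENNReal.ofReal_le_ofReal ?_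
  simp only [ENNReal.toReal_ofNat, Real.rpow_ofNat]
  rw [← one_div, ← Real.sqrt_eq_rpow]
  exact Real.sqrt_le_iff.2 ⟨hQ, integral_le⟩

end LpBounds

section GaussianMeasure

variable {V : Type*} [NormedAddCommGroup V]

theorem freqGauss_pos (N : ℝ) (η ξ : V) : 0 < freqGauss N η ξ := Real.exp_pos _

theorem freqGauss_le_one (N : ℝ) (η ξ : V) : freqGauss N η ξ ≤ 1 :=
  Real.exp_le_one_iff.2 (neg_nonpos.2 (by positivity))

theorem norm_ofReal_freqGauss_le_one (N : ℝ) (η ξ : V) : ‖(freqGauss N η ξ : ℂ)‖ ≤ 1 := by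
  rw [Complex.norm_real, Real.norm_of_nonneg (freqGauss_pos N η ξ).le]
  exact freqGauss_le_one N η ξ

@[fun_prop]
theorem continuous_freqGauss (N : ℝ) (η : V) : Continuous (freqGauss N η) := by
  unfold freqGauss; fun_prop

variable [InnerProductSpace ℝ V]

theorem norm_sq_sum_fourierChar {ι : Type*} (s : Finset ι) (η : ι → V) (x : V) :
    ((‖∑ μ ∈ s, (𝐞 (-⟪η μ, x⟫) : ℂ)‖ ^ 2 : ℝ) : ℂ) =
      ∑ μ ∈ s, ∑ μ' ∈ s, (𝐞 (-⟪η μ' - η μ, x⟫) : ℂ) := by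
  rw [Complex.ofReal_pow, ← Complex.mul_conj', map_sum, Finset.sum_mul_sum, Finset.sum_comm]
  refine Finset.sum_congr rfl fun μ _ => Finset.sum_congr rfl fun μ' _ => ?_
  rw [← Circle.coe_inv_eq_conj, ← AddChar.map_neg_eq_inv, ← Circle.coe_mul,
    ← AddChar.map_add_eq_mul, inner_sub_left, neg_sub, neg_neg, neg_add_eq_sub]

variable [FiniteDimensional ℝ V] [MeasurableSpace V] [BorelSpace V]

/-- The probability measure with density `gaussDensity N`; test functions are paired against it. -/
def gaussMeasure (N : ℝ) : Measure V :=
  volume.withDensity fun x => ENNReal.ofReal (gaussDensity N x)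

theorem isProbabilityMeasure_gaussMeasure {N : ℝ} (hN : 0 < N) :
    IsProbabilityMeasure (gaussMeasure N : Measure V) := by
  constructor
  rw [gaussMeasure, withDensity_apply _ MeasurableSet.univ, setLIntegral_univ,
    ← ofReal_integral_eq_lintegral_ofReal (integrable_gaussDensity hN)
      (.of_forall (gaussDensity_nonneg hN.le)), integral_gaussDensity hN, ENNReal.ofReal_one]

theorem gaussMeasure_le {N : ℝ} (hN : 0 ≤ N) :
    (gaussMeasure N : Measure V) ≤ ENNReal.ofReal (N ^ finrank ℝ V) • volume := by
  rw [gaussMeasure, ← withDensity_const]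
  exact withDensity_mono (.of_forall fun x => ENNReal.ofReal_le_ofReal (gaussDensity_le hN x))

theorem integral_gaussMeasure {N : ℝ} (hN : 0 ≤ N) (f : V → ℂ) :
    ∫ x, f x ∂gaussMeasure N = ∫ x, f x * (gaussDensity N x : ℂ) := by
  rw [gaussMeasure, integral_withDensity_eq_integral_toReal_smul (by fun_prop)
    (.of_forall fun x => ENNReal.ofReal_lt_top)]
  simp_rw [ENNReal.toReal_ofReal (gaussDensity_nonneg hN _), Complex.real_smul, mul_comm]

theorem integral_fourierInv_mul_fourierChar_gaussMeasure {N : ℝ} (hN : 0 < N) {F : V → ℂ}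
    (hF : Integrable F) (η : V) :
    ∫ x, 𝓕⁻ F x * (𝐞 (-⟪η, x⟫) : ℂ) ∂gaussMeasure N = ∫ ξ, F ξ * (freqGauss N η ξ : ℂ) := by
  simp_rw [integral_gaussMeasure hN.le, mul_assoc,
    ← fourierInv_fourierChar_mul_gaussDensity hN]
  exact integral_fourierInv_mul_eq hF (integrable_fourierChar_mul_gaussDensity hN η)

theorem integral_fourierInv_mul_sum_fourierChar_gaussMeasure {N : ℝ} (hN : 0 < N) {F : V → ℂ}
    (hF : Integrable F) {ι : Type*} (s : Finset ι) (η : ι → V) :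
    ∫ x, 𝓕⁻ F x * ∑ μ ∈ s, (𝐞 (-⟪η μ, x⟫) : ℂ) ∂gaussMeasure N =
      ∑ μ ∈ s, ∫ ξ, F ξ * (freqGauss N (η μ) ξ : ℂ) := by
  have := isProbabilityMeasure_gaussMeasure (V := V) hN
  have continuous_inv := continuous_fourierInv hF
  simp_rw [Finset.mul_sum]
  rw [integral_finsetSum]
  · exact Finset.sum_congr rfl fun μ _ =>
      integral_fourierInv_mul_fourierChar_gaussMeasure hN hF (η μ)
  · refine fun μ _ => .of_bound (Continuous.aestronglyMeasurable (by fun_prop)) (∫ ξ, ‖F ξ‖)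
      (.of_forall fun x => ?_)
    rw [norm_mul, Circle.norm_coe, mul_one]
    exact norm_fourierInv_le F x

theorem integral_norm_sq_sum_fourierChar_gaussMeasure {N : ℝ} (hN : 0 < N) {ι : Type*}
    (s : Finset ι) (η : ι → V) :
    ∫ x, ‖∑ μ ∈ s, (𝐞 (-⟪η μ, x⟫) : ℂ)‖ ^ 2 ∂gaussMeasure N =
      ∑ μ ∈ s, ∑ μ' ∈ s, freqGauss N (η μ) (η μ') := by
  have := isProbabilityMeasure_gaussMeasure (V := V) hN
  have integrable_char : ∀ v : V,
      Integrable (fun x : V => (𝐞 (-⟪v, x⟫) : ℂ)) (gaussMeasure N) := fun v =>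
    .of_bound (Continuous.aestronglyMeasurable (by fun_prop)) 1
      (.of_forall fun x => (Circle.norm_coe _).le)
  apply Complex.ofReal_injective
  rw [← integral_complex_ofReal]
  simp_rw [norm_sq_sum_fourierChar, Complex.ofReal_sum]
  rw [integral_finsetSum _ fun μ _ => integrable_finsetSum _ fun μ' _ => integrable_char _]
  refine Finset.sum_congr rfl fun μ _ => ?_
  rw [integral_finsetSum _ fun μ' _ => integrable_char _]
  refine Finset.sum_congr rfl fun μ' _ => ?_
  rw [integral_gaussMeasure hN.le, integral_fourierChar_mul_gaussDensity hN]

theorem norm_sum_integral_mul_freqGauss_le {p : ℝ≥0∞} (hp : 2 ≤ p) {N : ℝ} (hN : 0 < N)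
    {F : V → ℂ} (hF : Integrable F) {D : ℝ} (hD : 0 ≤ D)
    (eLpNorm_le : eLpNorm (𝓕⁻ F) p ≤ ENNReal.ofReal D) {ι : Type*} (s : Finset ι) (η : ι → V)
    {Q : ℝ} (hQ : 0 ≤ Q) (sum_le : ∑ μ ∈ s, ∑ μ' ∈ s, freqGauss N (η μ) (η μ') ≤ Q ^ 2) :
    ‖∑ μ ∈ s, ∫ ξ, F ξ * (freqGauss N (η μ) ξ : ℂ)‖ ≤
      (N ^ finrank ℝ V) ^ (1 / p).toReal * D * Q := by
  have := isProbabilityMeasure_gaussMeasure (V := V) hN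
  have measurable_inv : AEStronglyMeasurable (𝓕⁻ F) (gaussMeasure N) :=
    (continuous_fourierInv hF).aestronglyMeasurable
  have memLp_sum : MemLp (fun x : V => ∑ μ ∈ s, (𝐞 (-⟪η μ, x⟫) : ℂ)) 2 (gaussMeasure N) := by
    refine memLp_finsetSum s fun μ _ =>
      .of_bound (Continuous.aestronglyMeasurable (by fun_prop)) 1 (.of_forall fun x => ?_)
    exact (Circle.norm_coe _).le
  have sum_eLpNorm_le := eLpNorm_two_le_of_integral_norm_sq_le memLp_sum hQ
    ((integral_norm_sq_sum_fourierChar_gaussMeasure hN s η).trans_le sum_le)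
  rw [← ENNReal.ofReal_le_ofReal_iff (by positivity), ofReal_norm,
    ← integral_fourierInv_mul_sum_fourierChar_gaussMeasure hN hF]
  calc _ ≤ eLpNorm (𝓕⁻ F) 2 (gaussMeasure N) *
        eLpNorm (fun x : V => ∑ μ ∈ s, (𝐞 (-⟪η μ, x⟫) : ℂ)) 2 (gaussMeasure N) :=
        enorm_integral_mul_le_eLpNorm_two_mul_eLpNorm_two measurable_inv memLp_sum.1
    _ ≤ ENNReal.ofReal (N ^ finrank ℝ V) ^ (1 / p).toReal * ENNReal.ofReal D *
        ENNReal.ofReal Q := by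
        gcongr
        exact (eLpNorm_le_of_le_smul_measure (gaussMeasure_le hN.le) hp measurable_inv).trans
          (by gcongr)
    _ = _ := by
        rw [ENNReal.ofReal_rpow_of_pos (by positivity), ENNReal.ofReal_mul (by positivity),
          ENNReal.ofReal_mul (by positivity)]

end GaussianMeasure

section BesselWeight

variable {V : Type*} [NormedAddCommGroup V]

/-- The weight `⟨ξ⟩ ^ α = (1 + ‖ξ‖²) ^ (α / 2)` of the Bessel potential of order `α`. -/
def besselWeight (α : ℝ) (ξ : V) : ℝ :=
  (1 + ‖ξ‖ ^ 2) ^ (α / 2)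

theorem besselWeight_pos (α : ℝ) (ξ : V) : 0 < besselWeight α ξ := by
  unfold besselWeight; positivity

@[fun_prop]
theorem continuous_besselWeight (α : ℝ) : Continuous (besselWeight α : V → ℝ) :=
  Continuous.rpow_const (by fun_prop) fun ξ => .inl (by positivity)

theorem besselWeight_le_one_add_norm_pow {α : ℝ} {j : ℕ} (hα : 0 ≤ α) (hj : α ≤ j) (ξ : V) :
    besselWeight α ξ ≤ (1 + ‖ξ‖) ^ j :=
  calc (1 + ‖ξ‖ ^ 2) ^ (α / 2) ≤ ((1 + ‖ξ‖) ^ 2) ^ (α / 2) := by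
        gcongr
        nlinarith [norm_nonneg ξ]
    _ = (1 + ‖ξ‖) ^ α := by
        rw [← Real.rpow_natCast, ← Real.rpow_mul (by positivity), Nat.cast_ofNat,
          mul_div_cancel₀ _ two_ne_zero]
    _ ≤ (1 + ‖ξ‖) ^ (j : ℝ) := Real.rpow_le_rpow_of_exponent_le (by linarith [norm_nonneg ξ]) hj
    _ = (1 + ‖ξ‖) ^ j := Real.rpow_natCast _ _

variable [InnerProductSpace ℝ V] [FiniteDimensional ℝ V] [MeasurableSpace V] [BorelSpace V]

theorem integrable_besselWeight_mul_freqGauss {α : ℝ} (hα : 0 ≤ α) {N : ℝ} (hN : 0 < N) (η : V) :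
    Integrable fun ξ => besselWeight α ξ * freqGauss N η ξ := by
  obtain ⟨j, hj⟩ := exists_nat_ge α
  have dominating := (integrable_one_add_norm_pow_mul_exp_neg_mul_norm_sq
    (by positivity : 0 < π / N ^ 2) j η).const_mul ((1 + ‖η‖) ^ j)
  refine dominating.mono' (Continuous.aestronglyMeasurable (by fun_prop)) (.of_forall fun ξ => ?_)
  have one_add_norm_le : 1 + ‖ξ‖ ≤ (1 + ‖η‖) * (1 + ‖ξ - η‖) := by
    have triangle : ‖ξ‖ ≤ ‖η‖ + ‖ξ - η‖ := by simpa using norm_add_le η (ξ - η)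
    nlinarith [mul_nonneg (norm_nonneg η) (norm_nonneg (ξ - η))]
  rw [Real.norm_of_nonneg (mul_pos (besselWeight_pos α ξ) (freqGauss_pos N η ξ)).le, ← mul_assoc,
    ← mul_pow]
  refine mul_le_mul_of_nonneg_right ?_ (freqGauss_pos N η ξ).le
  exact (besselWeight_le_one_add_norm_pow hα hj ξ).trans (by gcongr)

end BesselWeight

section PacketForm

variable {V : Type*} [NormedAddCommGroup V] [InnerProductSpace ℝ V]

/-- The Fourier multiplier of the averaging operator `f ↦ ∫ f (· - γ s) χ s ds`. -/
def curveMultiplier (γ : ℝ → V) (χ : ℝ → ℝ) (ξ : V) : ℂ :=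
  ∫ s, (𝐞 (-⟪γ s, ξ⟫) : ℂ) * (χ s : ℂ)

/-- The Fourier transform of `(1 - Δ) ^ (α / 2)` applied to the average over `γ` of the wave packet
of frequency `ξ₀` centred at `-γ t`. -/
def packetSymbol (N α : ℝ) (γ : ℝ → V) (χ : ℝ → ℝ) (t : ℝ) (ξ₀ ξ : V) : ℂ :=
  (besselWeight α ξ : ℂ) * (curveMultiplier γ χ ξ * (𝐞 ⟪γ t, ξ⟫ * (freqGauss N ξ₀ ξ : ℂ)))

/-- The pairing of the function with Fourier transform `packetSymbol N α γ χ t ξ₀` with a modulated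
Gaussian of frequency `η` at the origin. -/
def packetForm [MeasurableSpace V] [BorelSpace V] [FiniteDimensional ℝ V] (N α : ℝ) (γ : ℝ → V)
    (χ : ℝ → ℝ) (t : ℝ) (ξ₀ η : V) : ℂ :=
  ∫ ξ, packetSymbol N α γ χ t ξ₀ ξ * (freqGauss N η ξ : ℂ)

theorem norm_curveMultiplier_le (γ : ℝ → V) (χ : ℝ → ℝ) (ξ : V) :
    ‖curveMultiplier γ χ ξ‖ ≤ ∫ s, |χ s| :=
  (norm_integral_le_integral_norm _).trans_eq <| by
    simp only [norm_mul, Circle.norm_coe, one_mul, Complex.norm_real, Real.norm_eq_abs]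

theorem norm_packetSymbol_le (N α : ℝ) (γ : ℝ → V) (χ : ℝ → ℝ) (t : ℝ) (ξ₀ ξ : V) :
    ‖packetSymbol N α γ χ t ξ₀ ξ‖ ≤ (∫ s, |χ s|) * (besselWeight α ξ * freqGauss N ξ₀ ξ) := by
  rw [packetSymbol, norm_mul, norm_mul, norm_mul, Circle.norm_coe, Complex.norm_real,
    Complex.norm_real, Real.norm_of_nonneg (besselWeight_pos α ξ).le,
    Real.norm_of_nonneg (freqGauss_pos N ξ₀ ξ).le, one_mul, mul_left_comm]
  exact mul_le_mul_of_nonneg_right (norm_curveMultiplier_le γ χ ξ)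
    (mul_pos (besselWeight_pos α ξ) (freqGauss_pos N ξ₀ ξ)).le

variable {γ : ℝ → V} {χ : ℝ → ℝ}

theorem continuous_curveMultiplier (hγ : Continuous γ) (hχ : Integrable χ) :
    Continuous (curveMultiplier γ χ) := by
  refine continuous_of_dominated (bound := fun s => ‖χ s‖) (fun ξ => ?_) (fun ξ => ?_) hχ.norm
    (.of_forall fun s => by fun_prop)
  · exact (Continuous.aestronglyMeasurable (by fun_prop)).mul hχ.ofReal.aestronglyMeasurable
  · exact .of_forall fun s => by
      rw [norm_mul, Circle.norm_coe, one_mul, Complex.norm_real]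

theorem continuous_packetSymbol (hγ : Continuous γ) (hχ : Integrable χ) (N α t : ℝ) (ξ₀ : V) :
    Continuous (packetSymbol N α γ χ t ξ₀) := by
  have := continuous_curveMultiplier hγ hχ
  unfold packetSymbol
  fun_prop

variable [FiniteDimensional ℝ V] [MeasurableSpace V] [BorelSpace V]

theorem integrable_packetSymbol (hγ : Continuous γ) (hχ : Integrable χ) {N : ℝ} (hN : 0 < N)
    {α : ℝ} (hα : 0 ≤ α) (t : ℝ) (ξ₀ : V) : Integrable (packetSymbol N α γ χ t ξ₀) :=
  ((integrable_besselWeight_mul_freqGauss hα hN ξ₀).const_mul (∫ s, |χ s|)).mono'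
    (continuous_packetSymbol hγ hχ N α t ξ₀).aestronglyMeasurable
    (.of_forall fun ξ => norm_packetSymbol_le N α γ χ t ξ₀ ξ)

theorem integrable_packetSymbol_mul_freqGauss (hγ : Continuous γ) (hχ : Integrable χ) {N : ℝ}
    (hN : 0 < N) {α : ℝ} (hα : 0 ≤ α) (t : ℝ) (ξ₀ η : V) :
    Integrable fun ξ => packetSymbol N α γ χ t ξ₀ ξ * (freqGauss N η ξ : ℂ) :=
  (integrable_packetSymbol hγ hχ hN hα t ξ₀).mul_bdd (c := 1)
    (Continuous.aestronglyMeasurable (by fun_prop))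
    (.of_forall (norm_ofReal_freqGauss_le_one N η))

theorem integral_sum_mul_packetSymbol_mul_freqGauss (hγ : Continuous γ) (hχ : Integrable χ) {N : ℝ}
    (hN : 0 < N) {α : ℝ} (hα : 0 ≤ α) {ι : Type*} (s : Finset ι) (c t : ι → ℝ) (ξ₀ : ι → V)
    (η : V) :
    ∫ ξ, (∑ ν ∈ s, (c ν : ℂ) * packetSymbol N α γ χ (t ν) (ξ₀ ν) ξ) * (freqGauss N η ξ : ℂ) =
      ∑ ν ∈ s, (c ν : ℂ) * packetForm N α γ χ (t ν) (ξ₀ ν) η := by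
  simp_rw [Finset.sum_mul, mul_assoc]
  rw [integral_finsetSum]
  · exact Finset.sum_congr rfl fun ν _ => integral_const_mul _ _
  · exact fun ν _ => (integrable_packetSymbol_mul_freqGauss hγ hχ hN hα _ _ η).const_mul _

end PacketForm

section WavePacketSum

variable {V : Type*} [NormedAddCommGroup V] [InnerProductSpace ℝ V] {ι : Type*} {N : ℝ}

theorem exists_schwartzMap_eq_sum_wavePacket (hN : 0 < N) (s : Finset ι) (c : ι → ℝ)
    (ξ y : ι → V) :
    ∃ f : 𝓢(V, ℂ), ∀ x, f x = ∑ ν ∈ s, (c ν : ℂ) * wavePacket N (ξ ν) (y ν) x := by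
  choose g hg using fun ν => exists_schwartzMap_eq_wavePacket hN (ξ ν) (y ν)
  exact ⟨∑ ν ∈ s, (c ν : ℂ) • g ν, fun x => by simp [hg]⟩

theorem norm_sum_wavePacket_le (hN : 0 ≤ N) (s : Finset ι) {c : ι → ℝ} {K : ℝ}
    (hc : ∀ ν ∈ s, |c ν| ≤ K) (ξ y : ι → V) (x : V) :
    ‖∑ ν ∈ s, (c ν : ℂ) * wavePacket N (ξ ν) (y ν) x‖ ≤
      K * ∑ ν ∈ s, gaussDensity N (x - y ν) := by
  rw [Finset.mul_sum]
  refine norm_sum_le_of_le s fun ν hν => ?_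
  rw [norm_mul, Complex.norm_real, norm_wavePacket hN]
  exact mul_le_mul_of_nonneg_right (hc ν hν) (gaussDensity_nonneg hN _)

variable [FiniteDimensional ℝ V] [MeasurableSpace V] [BorelSpace V]

theorem integral_norm_sum_wavePacket_le (hN : 0 < N) (s : Finset ι) {c : ι → ℝ} {K : ℝ}
    (hc : ∀ ν ∈ s, |c ν| ≤ K) (ξ y : ι → V) :
    ∫ x, ‖∑ ν ∈ s, (c ν : ℂ) * wavePacket N (ξ ν) (y ν) x‖ ≤ K * s.card := by
  have integrable_density : ∀ ν ∈ s, Integrable fun x : V => gaussDensity N (x - y ν) :=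
    fun ν _ => (integrable_gaussDensity hN).comp_sub_right _
  calc _ ≤ ∫ x, K * ∑ ν ∈ s, gaussDensity N (x - y ν) :=
        integral_mono_of_nonneg (.of_forall fun x => norm_nonneg _)
          ((integrable_finsetSum _ integrable_density).const_mul K)
          (.of_forall (norm_sum_wavePacket_le hN.le s hc ξ y))
    _ = K * s.card := by
        rw [integral_const_mul, integral_finsetSum _ integrable_density]
        simp_rw [integral_sub_right_eq_self (gaussDensity N), integral_gaussDensity hN]
        simp

theorem fourier_sum_wavePacket (hN : 0 < N) (s : Finset ι) (c : ι → ℝ) (ξ₀ y : ι → V) (ξ : V) :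
    𝓕 (fun x => ∑ ν ∈ s, (c ν : ℂ) * wavePacket N (ξ₀ ν) (y ν) x) ξ =
      ∑ ν ∈ s, (c ν : ℂ) * (𝐞 (-⟪y ν, ξ⟫) * (freqGauss N (ξ₀ ν) ξ : ℂ)) := by
  have integrable_packet : ∀ ν, Integrable (wavePacket N (ξ₀ ν) (y ν)) := fun ν => by
    obtain ⟨g, hg⟩ := exists_schwartzMap_eq_wavePacket hN (ξ₀ ν) (y ν)
    rw [← funext hg]
    exact g.integrable
  simp_rw [Real.fourier_eq, Finset.smul_sum]
  rw [integral_finsetSum _ fun ν _ => by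
    simpa using (Real.fourierIntegral_convergent_iff ξ).2 ((integrable_packet ν).const_mul _)]
  refine Finset.sum_congr rfl fun ν _ => ?_
  rw [← fourier_wavePacket hN, Real.fourier_eq, ← integral_const_mul]
  congr 1 with x
  simp only [Circle.smul_def, smul_eq_mul]
  ring

end WavePacketSum

section AveragingOperator

variable {n : ℕ} {γ : ℝ → Euc n} {χ : ℝ → ℝ}

theorem integrable_fourierChar_smul_translate (hγ : Continuous γ) (hχ : Integrable χ)
    {f : Euc n → ℂ} (hf_cont : Continuous f) (hf : Integrable f) (ξ : Euc n) :
    Integrable (fun q : Euc n × ℝ => 𝐞 (-⟪q.1, ξ⟫) • (f (q.1 - γ q.2) * (χ q.2 : ℂ)))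
      (volume.prod volume) := by
  have measurable_integrand : AEStronglyMeasurable
      (fun q : Euc n × ℝ => 𝐞 (-⟪q.1, ξ⟫) • (f (q.1 - γ q.2) * (χ q.2 : ℂ)))
      (volume.prod volume) := by
    simp_rw [Circle.smul_def, smul_eq_mul]
    exact (Continuous.aestronglyMeasurable (by fun_prop)).mul
      ((Continuous.aestronglyMeasurable (by fun_prop)).mul
        hχ.ofReal.aestronglyMeasurable.comp_snd)
  rw [integrable_prod_iff' measurable_integrand]
  constructor
  · refine .of_forall fun s => ?_
    simpa using (Real.fourierIntegral_convergent_iff ξ).2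
      ((hf.comp_sub_right (γ s)).mul_const (χ s : ℂ))
  · simp only [Circle.norm_smul, norm_mul, Complex.norm_real, integral_mul_const]
    simp_rw [integral_sub_right_eq_self fun x => ‖f x‖]
    exact hχ.norm.const_mul _

theorem fourier_avgOp (hγ : Continuous γ) (hχ : Integrable χ) {f : Euc n → ℂ}
    (hf_cont : Continuous f) (hf : Integrable f) (ξ : Euc n) :
    𝓕 (avgOp γ χ f) ξ = curveMultiplier γ χ ξ * 𝓕 f ξ := by
  have fourier_translate : ∀ s, ∫ x, 𝐞 (-⟪x, ξ⟫) • (f (x - γ s) * (χ s : ℂ)) =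
      (𝐞 (-⟪γ s, ξ⟫) : ℂ) * (χ s : ℂ) * 𝓕 f ξ := fun s => by
    rw [← integral_add_right_eq_self _ (γ s), Real.fourier_eq, ← integral_const_mul]
    congr 1 with x
    simp only [Circle.smul_def, smul_eq_mul, add_sub_cancel_right, inner_add_left, neg_add,
      AddChar.map_add_eq_mul, Circle.coe_mul]
    ring
  calc 𝓕 (avgOp γ χ f) ξ = ∫ x, ∫ s, 𝐞 (-⟪x, ξ⟫) • (f (x - γ s) * (χ s : ℂ)) := by
        simp_rw [Real.fourier_eq, avgOp, Circle.smul_def, integral_smul]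
    _ = ∫ s, ∫ x, 𝐞 (-⟪x, ξ⟫) • (f (x - γ s) * (χ s : ℂ)) :=
        integral_integral_swap (integrable_fourierChar_smul_translate hγ hχ hf_cont hf ξ)
    _ = curveMultiplier γ χ ξ * 𝓕 f ξ := by
        simp_rw [fourier_translate, integral_mul_const, curveMultiplier]

/-- The averaging operator along `γ` with density `χ` maps `L^p` to the Sobolev space `L^p_α` with
norm at most `C` (tested on Schwartz functions). -/
def AveragingBound (p : ℝ≥0∞) (α : ℝ) (γ : ℝ → Euc n) (χ : ℝ → ℝ) (C : ℝ) : Prop :=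
  ∀ f : 𝓢(Euc n, ℂ), sobolevNorm p α (avgOp γ χ ⇑f) ≤ ENNReal.ofReal C * eLpNorm (⇑f) p volume

variable {p : ℝ≥0∞} {α C N : ℝ} {ι κ : Type*}

theorem eLpNorm_fourierInv_sum_packetSymbol_le (hbound : AveragingBound p α γ χ C) (hp : 1 ≤ p)
    (hγ : Continuous γ) (hχ : Integrable χ) (hC : 0 ≤ C) (hN : 0 < N) (s : Finset ι)
    {c : ι → ℝ} {K : ℝ} (hK : 0 < K) (hc : ∀ ν ∈ s, |c ν| ≤ K) (t : ι → ℝ) (ξ₀ : ι → Euc n) {A : ℝ}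
    (hA : 0 < A) (overlap : ∀ x, ∑ ν ∈ s, gaussDensity N (x + γ (t ν)) ≤ A) :
    eLpNorm (𝓕⁻ fun ξ => ∑ ν ∈ s, (c ν : ℂ) * packetSymbol N α γ χ (t ν) (ξ₀ ν) ξ) p ≤
      ENNReal.ofReal (C * ((K * A) ^ (1 - (1 / p).toReal) * (K * s.card) ^ (1 / p).toReal)) := by
  obtain ⟨f, hf⟩ := exists_schwartzMap_eq_sum_wavePacket hN s c ξ₀ fun ν => -γ (t ν)
  have symbol_eq : (fun ξ => (((1 + ‖ξ‖ ^ 2) ^ (α / 2) : ℝ) : ℂ) * 𝓕 (avgOp γ χ ⇑f) ξ) =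
      fun ξ => ∑ ν ∈ s, (c ν : ℂ) * packetSymbol N α γ χ (t ν) (ξ₀ ν) ξ := by
    ext ξ
    rw [fourier_avgOp hγ hχ f.continuous f.integrable, funext hf, fourier_sum_wavePacket hN,
      Finset.mul_sum, Finset.mul_sum]
    refine Finset.sum_congr rfl fun ν _ => ?_
    rw [inner_neg_left, neg_neg, packetSymbol, besselWeight]
    ring
  have norm_le : ∀ x, ‖f x‖ ≤ K * A := fun x => by
    rw [hf]
    refine (norm_sum_wavePacket_le hN.le s hc ξ₀ _ x).trans ?_
    simpa only [sub_neg_eq_add] using mul_le_mul_of_nonneg_left (overlap x) hK.le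
  have integral_norm_le : ∫ x, ‖f x‖ ≤ K * s.card := by
    simp_rw [hf]
    exact integral_norm_sum_wavePacket_le hN s hc ξ₀ _
  calc _ = sobolevNorm p α (avgOp γ χ ⇑f) := by rw [sobolevNorm, symbol_eq]
    _ ≤ ENNReal.ofReal C * eLpNorm (⇑f) p volume := hbound f
    _ ≤ _ := by
        rw [ENNReal.ofReal_mul hC]
        gcongr
        exact eLpNorm_le_of_norm_le_of_integral_norm_le hp f.integrable (by positivity) norm_le
          integral_norm_le

theorem norm_sum_packetForm_le (hbound : AveragingBound p α γ χ C) (hp : 2 ≤ p)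
    (hα : 0 ≤ α) (hγ : Continuous γ) (hχ : Integrable χ) (hC : 0 ≤ C) (hN : 0 < N) (s : Finset ι)
    {c : ι → ℝ} {K : ℝ} (hK : 0 < K) (hc : ∀ ν ∈ s, |c ν| ≤ K) (t : ι → ℝ) (ξ₀ : ι → Euc n) {A : ℝ}
    (hA : 0 < A) (overlap : ∀ x, ∑ ν ∈ s, gaussDensity N (x + γ (t ν)) ≤ A)
    (r : Finset κ) (η : κ → Euc n) {Q : ℝ} (hQ : 0 ≤ Q)
    (almost_orthogonal : ∑ μ ∈ r, ∑ μ' ∈ r, freqGauss N (η μ) (η μ') ≤ Q ^ 2) :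
    ‖∑ μ ∈ r, ∑ ν ∈ s, (c ν : ℂ) * packetForm N α γ χ (t ν) (ξ₀ ν) (η μ)‖ ≤
      (N ^ n) ^ (1 / p).toReal *
        (C * ((K * A) ^ (1 - (1 / p).toReal) * (K * s.card) ^ (1 / p).toReal)) * Q := by
  have integrable_symbol :
      Integrable fun ξ => ∑ ν ∈ s, (c ν : ℂ) * packetSymbol N α γ χ (t ν) (ξ₀ ν) ξ :=
    integrable_finsetSum _ fun ν _ => (integrable_packetSymbol hγ hχ hN hα _ _).const_mul _
  have dual_bound := norm_sum_integral_mul_freqGauss_le hp hN integrable_symbol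
    (mul_nonneg hC (by positivity)) (eLpNorm_fourierInv_sum_packetSymbol_le hbound
      (one_le_two.trans hp) hγ hχ hC hN s hK hc t ξ₀ hA overlap) r η hQ almost_orthogonal
  simpa only [integral_sum_mul_packetSymbol_mul_freqGauss hγ hχ hN hα,
    finrank_euclideanSpace_fin] using dual_bound

end AveragingOperator

section SeparatedPoints

theorem summable_exp_neg_mul_int_sq {κ : ℝ} (hκ : 0 < κ) :
    Summable fun k : ℤ => Real.exp (-(κ * (k : ℝ) ^ 2)) := by
  have nat_summable : Summable fun k : ℕ => Real.exp (-(κ * (k : ℝ) ^ 2)) := by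
    have le_sq : ∀ k : ℕ, (k : ℝ) ≤ (k : ℝ) ^ 2 := fun k => by
      exact_mod_cast Nat.le_self_pow two_ne_zero k
    simpa only [neg_mul] using Real.summable_exp_nat_mul_of_ge (neg_lt_zero.2 hκ) le_sq
  exact .of_nat_of_neg (by simpa using nat_summable) (by simpa using nat_summable)

theorem exists_sum_exp_neg_mul_sub_sq_le {κ : ℝ} (hκ : 0 < κ) :
    ∃ C > 0, ∀ (s : Finset ℕ) (m : ℕ), ∑ ν ∈ s, Real.exp (-(κ * ((ν : ℝ) - m) ^ 2)) ≤ C := by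
  have summable := summable_exp_neg_mul_int_sq hκ
  refine ⟨∑' k : ℤ, Real.exp (-(κ * (k : ℝ) ^ 2)),
    summable.tsum_pos (fun k => (Real.exp_pos _).le) 0 (Real.exp_pos _), fun s m => ?_⟩
  have shift_injective : Set.InjOn (fun ν : ℕ => (ν : ℤ) - m) s := fun ν _ ν' _ h => by
    simpa using h
  have partial_sum_le := summable.sum_le_tsum (s.image fun ν : ℕ => (ν : ℤ) - m)
    fun k _ => (Real.exp_pos _).le
  rw [Finset.sum_image shift_injective] at partial_sum_le
  exact_mod_cast partial_sum_le

theorem exists_sum_exp_neg_mul_norm_sub_sq_le (E : Type*) [NormedAddCommGroup E] {κ δ : ℝ}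
    (hκ : 0 < κ) (hδ : 0 < δ) :
    ∃ C > 0, ∀ (s : Finset ℕ) (z : ℕ → E),
      (∀ ν ∈ s, ∀ μ ∈ s, δ * |(ν : ℝ) - μ| ≤ ‖z ν - z μ‖) →
        ∀ x, ∑ ν ∈ s, Real.exp (-(κ * ‖x - z ν‖ ^ 2)) ≤ C := by
  obtain ⟨C, hC, sum_le⟩ := exists_sum_exp_neg_mul_sub_sq_le (by positivity : 0 < κ * (δ / 2) ^ 2)
  refine ⟨C, hC, fun s z separated x => ?_⟩
  rcases s.eq_empty_or_nonempty with rfl | hs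
  · simpa using hC.le
  obtain ⟨m, hm, nearest⟩ := s.exists_min_image (fun ν => ‖x - z ν‖) hs
  refine (Finset.sum_le_sum fun ν hν => ?_).trans (sum_le s m)
  have linear : δ / 2 * |(ν : ℝ) - m| ≤ ‖x - z ν‖ := by
    have triangle : ‖z ν - z m‖ ≤ ‖x - z m‖ + ‖x - z ν‖ := by
      simpa using norm_sub_le (x - z m) (x - z ν)
    linarith [separated ν hν m hm, nearest ν hν]
  have quadratic := pow_le_pow_left₀ (by positivity) linear 2
  rw [mul_pow, sq_abs] at quadratic
  rw [Real.exp_le_exp, neg_le_neg_iff, mul_assoc]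
  gcongr

end SeparatedPoints

section LowerLipschitz

open Filter Topology

variable {E : Type*} [NormedAddCommGroup E] {γ : ℝ → E}

theorem exists_eventually_mul_abs_sub_le_of_ne {s t : ℝ} (hs : ContinuousAt γ s)
    (ht : ContinuousAt γ t) (hne : γ s ≠ γ t) :
    ∃ c > 0, ∀ᶠ q : ℝ × ℝ in 𝓝 (s, t), c * |q.1 - q.2| ≤ ‖γ q.1 - γ q.2‖ := by
  obtain ⟨c, hc, c_lt⟩ := exists_pos_mul_lt (norm_sub_pos_iff.2 hne) |s - t|
  have dist_tendsto : Tendsto (fun q : ℝ × ℝ => c * |q.1 - q.2|) (𝓝 (s, t)) (𝓝 (c * |s - t|)) :=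
    Continuous.tendsto' (by fun_prop) _ _ rfl
  have image_tendsto :
      Tendsto (fun q : ℝ × ℝ => ‖γ q.1 - γ q.2‖) (𝓝 (s, t)) (𝓝 ‖γ s - γ t‖) :=
    ((hs.tendsto.comp (continuous_fst.tendsto (s, t))).sub
      (ht.tendsto.comp (continuous_snd.tendsto (s, t)))).norm
  exact ⟨c, hc, (dist_tendsto.eventually_lt image_tendsto (by rwa [mul_comm])).mono
    fun _ h => h.le⟩

variable [NormedSpace ℝ E] {γ' : ℝ → E}

theorem eventually_half_norm_deriv_mul_abs_sub_le {s : ℝ} {v : E} (hγ : HasStrictDerivAt γ v s)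
    (hv : v ≠ 0) :
    ∀ᶠ q : ℝ × ℝ in 𝓝 (s, s), ‖v‖ / 2 * |q.1 - q.2| ≤ ‖γ q.1 - γ q.2‖ := by
  have half_pos : 0 < ‖v‖ / 2 := half_pos (norm_pos_iff.2 hv)
  filter_upwards [hγ.isLittleO.def half_pos] with q linear_approx
  have triangle := norm_sub_le (γ q.1 - γ q.2) (γ q.1 - γ q.2 - (q.1 - q.2) • v)
  rw [sub_sub_cancel, norm_smul, Real.norm_eq_abs] at triangle
  simp only [ContinuousLinearMap.toSpanSingleton_apply, Real.norm_eq_abs] at linear_approx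
  linarith

theorem exists_mul_abs_sub_le_norm_sub {S : Set ℝ} (hS : IsCompact S)
    (hγ : ∀ s ∈ S, HasStrictDerivAt γ (γ' s) s) (regular : ∀ s ∈ S, γ' s ≠ 0)
    (injective : InjOn γ S) :
    ∃ c > 0, ∀ s ∈ S, ∀ t ∈ S, c * |s - t| ≤ ‖γ s - γ t‖ := by
  suffices on_pairs : ∃ c > 0, ∀ q ∈ S ×ˢ S, c * |q.1 - q.2| ≤ ‖γ q.1 - γ q.2‖ by
    obtain ⟨c, hc, h⟩ := on_pairs
    exact ⟨c, hc, fun s hs t ht => h (s, t) ⟨hs, ht⟩⟩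
  refine (hS.prod hS).induction_on
    (p := fun U => ∃ c > 0, ∀ q ∈ U, c * |q.1 - q.2| ≤ ‖γ q.1 - γ q.2‖)
    ⟨1, one_pos, by simp⟩ ?_ ?_ ?_
  · rintro U W hUW ⟨c, hc, h⟩
    exact ⟨c, hc, fun q hq => h q (hUW hq)⟩
  · rintro U W ⟨c, hc, hU⟩ ⟨d, hd, hW⟩
    refine ⟨min c d, lt_min hc hd, ?_⟩
    rintro q (hq | hq)
    · exact (mul_le_mul_of_nonneg_right (min_le_left c d) (abs_nonneg _)).trans (hU q hq)
    · exact (mul_le_mul_of_nonneg_right (min_le_right c d) (abs_nonneg _)).trans (hW q hq)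
  · rintro ⟨s, t⟩ ⟨hs, ht⟩
    by_cases hst : s = t
    · obtain rfl : s = t := hst
      exact ⟨_, mem_nhdsWithin_of_mem_nhds
        (eventually_half_norm_deriv_mul_abs_sub_le (hγ s hs) (regular s hs)), ‖γ' s‖ / 2,
        half_pos (norm_pos_iff.2 (regular s hs)), fun q hq => hq⟩
    · obtain ⟨c, hc, h⟩ := exists_eventually_mul_abs_sub_le_of_ne
        (hγ s hs).hasDerivAt.continuousAt (hγ t ht).hasDerivAt.continuousAt
        (mt (injective hs ht) hst)
      exact ⟨_, mem_nhdsWithin_of_mem_nhds h, c, hc, fun q hq => hq⟩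

end LowerLipschitz

section Grid

/-- The `ν`-th point of the grid of spacing `d / N` that starts at `t₀`. -/
def gridPoint (t₀ d : ℝ) (N ν : ℕ) : ℝ :=
  t₀ + ν * (d / N)

theorem abs_gridPoint_sub_gridPoint {d : ℝ} (hd : 0 ≤ d) (t₀ : ℝ) (N ν μ : ℕ) :
    |gridPoint t₀ d N ν - gridPoint t₀ d N μ| = |(ν : ℝ) - μ| * (d / N) := by
  rw [gridPoint, gridPoint, add_sub_add_left_eq_sub, ← sub_mul, abs_mul,
    abs_of_nonneg (by positivity : 0 ≤ d / N)]

theorem exists_sum_gaussDensity_gridPoint_le {V : Type*} [NormedAddCommGroup V]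
    [InnerProductSpace ℝ V] {S : Set ℝ} {γ : ℝ → V} {c₁ : ℝ} (hc₁ : 0 < c₁)
    (lower_lipschitz : ∀ s ∈ S, ∀ t ∈ S, c₁ * |s - t| ≤ ‖γ s - γ t‖) {d : ℝ} (hd : 0 < d) :
    ∃ C > 0, ∀ N : ℕ, 0 < N → ∀ t₀, (∀ ν < N, gridPoint t₀ d N ν ∈ S) → ∀ x,
      ∑ ν ∈ Finset.range N, gaussDensity N (x + γ (gridPoint t₀ d N ν)) ≤
        C * (N : ℝ) ^ finrank ℝ V := by
  obtain ⟨C, hC, sum_le⟩ :=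
    exists_sum_exp_neg_mul_norm_sub_sq_le V Real.pi_pos (by positivity : 0 < c₁ * d)
  refine ⟨C, hC, fun N hN t₀ grid_mem x => ?_⟩
  have separated : ∀ ν ∈ Finset.range N, ∀ μ ∈ Finset.range N, c₁ * d * |(ν : ℝ) - μ| ≤
      ‖(-((N : ℝ) • γ (gridPoint t₀ d N ν))) - -((N : ℝ) • γ (gridPoint t₀ d N μ))‖ := by
    intro ν hν μ hμ
    have lower := lower_lipschitz _ (grid_mem ν (Finset.mem_range.1 hν)) _
      (grid_mem μ (Finset.mem_range.1 hμ))
    rw [abs_gridPoint_sub_gridPoint hd.le] at lower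
    rw [neg_sub_neg, norm_sub_rev, ← smul_sub, norm_smul, Real.norm_natCast]
    calc c₁ * d * |(ν : ℝ) - μ| = N * (c₁ * (|(ν : ℝ) - μ| * (d / N))) := by field_simp
      _ ≤ _ := by gcongr
  have rescaled := sum_le (Finset.range N) _ separated ((N : ℝ) • x)
  simp only [sub_neg_eq_add, ← smul_add, norm_smul, Real.norm_natCast, mul_pow,
    ← mul_assoc] at rescaled
  simp only [gaussDensity, ← Finset.mul_sum]
  rw [mul_comm C]
  gcongr

theorem exists_norm_sum_packetForm_gridPoint_le {n : ℕ} {p : ℝ≥0∞} (hp : 2 ≤ p) {α : ℝ}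
    (hα : 0 ≤ α) {γ : ℝ → Euc n} (hγ : Continuous γ) {χ : ℝ → ℝ} (hχ : Integrable χ)
    (bounded : ∃ C, AveragingBound p α γ χ C) {S : Set ℝ} {c₁ : ℝ} (hc₁ : 0 < c₁)
    (lower_lipschitz : ∀ s ∈ S, ∀ t ∈ S, c₁ * |s - t| ≤ ‖γ s - γ t‖) {d K : ℝ} (hd : 0 < d)
    (hK : 0 < K) :
    ∃ C > 0, ∀ N : ℕ, 0 < N → ∀ t₀, (∀ ν < N, gridPoint t₀ d N ν ∈ S) →
      ∀ c : ℕ → ℝ, (∀ ν, |c ν| ≤ K) → ∀ (ξ η : ℕ → Euc n) (r : Finset ℕ) (Q : ℝ), 0 ≤ Q →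
      ∑ μ ∈ r, ∑ μ' ∈ r, freqGauss N (η μ) (η μ') ≤ Q ^ 2 →
      ‖∑ μ ∈ r, ∑ ν ∈ Finset.range N,
        (c ν : ℂ) * packetForm N α γ χ (gridPoint t₀ d N ν) (ξ ν) (η μ)‖ ≤
        C * (N : ℝ) ^ ((n : ℝ) + (1 / p).toReal) * Q := by
  obtain ⟨C₀, hC₀⟩ := bounded
  have averaging : AveragingBound p α γ χ (max C₀ 1) := fun f =>
    (hC₀ f).trans (by gcongr; exact le_max_left _ _)
  obtain ⟨A, hA, overlap⟩ := exists_sum_gaussDensity_gridPoint_le hc₁ lower_lipschitz hd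
  rw [finrank_euclideanSpace_fin] at overlap
  set q := (1 / p).toReal
  refine ⟨max C₀ 1 * ((K * A) ^ (1 - q) * K ^ q), by positivity,
    fun N hN t₀ grid_mem c hc ξ η r Q hQ almost_orthogonal => ?_⟩
  have hN' : (0 : ℝ) < N := Nat.cast_pos.2 hN
  have pow_identity : ((N : ℝ) ^ n) ^ q * (((N : ℝ) ^ n) ^ (1 - q) * (N : ℝ) ^ q) =
      (N : ℝ) ^ ((n : ℝ) + q) := by
    rw [← mul_assoc, ← Real.rpow_add (by positivity), add_sub_cancel, Real.rpow_one,
      Real.rpow_add hN', Real.rpow_natCast]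
  refine (norm_sum_packetForm_le averaging hp hα hγ hχ (by positivity) hN' (Finset.range N) hK
    (fun ν _ => hc ν) _ ξ (by positivity) (overlap N hN t₀ grid_mem) r η hQ
    almost_orthogonal).trans_eq ?_
  rw [Finset.card_range, ← mul_assoc K A, Real.mul_rpow (by positivity) (by positivity),
    Real.mul_rpow hK.le hN'.le, ← pow_identity]
  ring

end Grid

section CurveEnergy

variable {V : Type*} [NormedAddCommGroup V]

@[simp]
theorem besselWeight_zero (ξ : V) : besselWeight 0 ξ = 1 := by
  simp [besselWeight]

theorem rpow_le_besselWeight {α : ℝ} (hα : 0 ≤ α) {r : ℝ} (hr : 0 ≤ r) {ξ : V} (hξ : r ≤ ‖ξ‖) :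
    r ^ α ≤ besselWeight α ξ :=
  calc r ^ α = (r ^ 2) ^ (α / 2) := by
        rw [← Real.rpow_natCast, ← Real.rpow_mul hr, Nat.cast_ofNat, mul_div_cancel₀ _ two_ne_zero]
    _ ≤ (1 + ‖ξ‖ ^ 2) ^ (α / 2) := by
        gcongr
        nlinarith

theorem freqGauss_sq (N : ℝ) (η ξ : V) :
    freqGauss N η ξ ^ 2 = Real.exp (-(2 * π / N ^ 2 * ‖ξ - η‖ ^ 2)) := by
  rw [freqGauss, ← Real.exp_nat_mul]
  congr 1
  push_cast
  ring

theorem one_le_exp_mul_freqGauss_zero_sq {r : ℝ} {ξ : V} (hξ : ‖ξ‖ < r) :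
    1 ≤ Real.exp (2 * π) * freqGauss r 0 ξ ^ 2 := by
  have hr : 0 < r := (norm_nonneg ξ).trans_lt hξ
  have exponent_le : 2 * π / r ^ 2 * ‖ξ‖ ^ 2 ≤ 2 * π := by
    rw [div_mul_eq_mul_div, div_le_iff₀ (by positivity)]
    gcongr
  rw [freqGauss_sq, sub_zero, ← Real.exp_add, Real.one_le_exp_iff]
  linarith

/-- The integral of `χ` along `γ` against the Gaussian of width `1 / N` centred at `γ t`. -/
def kernelMass (N : ℝ) (γ : ℝ → V) (χ : ℝ → ℝ) (t : ℝ) : ℝ :=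
  ∫ s, χ s * Real.exp (-(π * N ^ 2 / 2 * ‖γ s - γ t‖ ^ 2))

section KernelMass

variable {γ : ℝ → V} {χ : ℝ → ℝ}

theorem norm_mul_exp_neg_mul_norm_sub_sq_le (N : ℝ) (γ : ℝ → V) (χ : ℝ → ℝ) (s t : ℝ) :
    ‖χ s * Real.exp (-(π * N ^ 2 / 2 * ‖γ s - γ t‖ ^ 2))‖ ≤ ‖χ s‖ := by
  rw [norm_mul, Real.norm_of_nonneg (Real.exp_pos _).le]
  refine mul_le_of_le_one_right (norm_nonneg _) (Real.exp_le_one_iff.2 ?_)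
  rw [neg_nonpos]
  positivity

theorem integrable_kernelMass (hγ : Continuous γ) (hχ : Integrable χ) (N t : ℝ) :
    Integrable fun s => χ s * Real.exp (-(π * N ^ 2 / 2 * ‖γ s - γ t‖ ^ 2)) :=
  hχ.norm.mono' (hχ.aestronglyMeasurable.mul (Continuous.aestronglyMeasurable (by fun_prop)))
    (.of_forall fun s => norm_mul_exp_neg_mul_norm_sub_sq_le N γ χ s t)

theorem continuous_kernelMass (hγ : Continuous γ) (hχ : Integrable χ) (N : ℝ) :
    Continuous (kernelMass N γ χ) :=
  continuous_of_dominated (fun t => (integrable_kernelMass hγ hχ N t).aestronglyMeasurable)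
    (fun t => .of_forall fun s => norm_mul_exp_neg_mul_norm_sub_sq_le N γ χ s t) hχ.norm
    (.of_forall fun s => by fun_prop)

theorem integrable_mul_kernelMass (hγ : Continuous γ) (hχ : Integrable χ) (N : ℝ) :
    Integrable fun t => χ t * kernelMass N γ χ t :=
  hχ.mul_bdd (c := ∫ s, ‖χ s‖) (continuous_kernelMass hγ hχ N).aestronglyMeasurable
    (.of_forall fun t => norm_integral_le_of_norm_le hχ.norm
      (.of_forall fun s => norm_mul_exp_neg_mul_norm_sub_sq_le N γ χ s t))

theorem kernelMass_nonneg (hχ : ∀ s, 0 ≤ χ s) (N t : ℝ) : 0 ≤ kernelMass N γ χ t :=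
  integral_nonneg fun s => mul_nonneg (hχ s) (Real.exp_pos _).le

theorem kernelMass_le_div {S : Set ℝ} {c₁ K N t : ℝ} (hc₁ : 0 < c₁)
    (lower_lipschitz : ∀ s ∈ S, ∀ t ∈ S, c₁ * |s - t| ≤ ‖γ s - γ t‖) (nonneg : ∀ s, 0 ≤ χ s)
    (support_subset : χ.support ⊆ S) (hK : ∀ s, χ s ≤ K) (hN : 0 < N) (ht : t ∈ S) :
    kernelMass N γ χ t ≤ K * (√2 / c₁) / N := by
  have hK₀ : 0 ≤ K := (nonneg 0).trans (hK 0)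
  set b := π * N ^ 2 / 2 * c₁ ^ 2 with hb
  have b_pos : 0 < b := by positivity
  have pointwise : ∀ s, χ s * Real.exp (-(π * N ^ 2 / 2 * ‖γ s - γ t‖ ^ 2)) ≤
      K * Real.exp (-b * (s - t) ^ 2) := by
    intro s
    by_cases hs : χ s = 0
    · rw [hs, zero_mul]
      positivity
    have sq_le : c₁ ^ 2 * (s - t) ^ 2 ≤ ‖γ s - γ t‖ ^ 2 := by
      rw [← sq_abs (s - t), ← mul_pow]
      exact pow_le_pow_left₀ (by positivity) (lower_lipschitz s (support_subset hs) t ht) 2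
    refine mul_le_mul (hK s) (Real.exp_le_exp.2 ?_) (Real.exp_pos _).le hK₀
    rw [neg_mul, neg_le_neg_iff, hb, mul_assoc]
    gcongr
  calc kernelMass N γ χ t ≤ ∫ s : ℝ, K * Real.exp (-b * (s - t) ^ 2) :=
        integral_mono_of_nonneg (.of_forall fun s => mul_nonneg (nonneg s) (Real.exp_pos _).le)
          (((integrable_exp_neg_mul_sq b_pos).comp_sub_right t).const_mul K) (.of_forall pointwise)
    _ = K * √(2 / (c₁ * N) ^ 2) := by
        rw [integral_const_mul, integral_sub_right_eq_self (fun s : ℝ => Real.exp (-b * s ^ 2)),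
          integral_gaussian, hb]
        congr 2
        field_simp
    _ = K * (√2 / c₁) / N := by
        rw [Real.sqrt_div zero_le_two, Real.sqrt_sq (by positivity), ← div_div, mul_div_assoc]

theorem div_le_kernelMass (hγ : Continuous γ) (hχ : Integrable χ) (nonneg : ∀ s, 0 ≤ χ s)
    {δ κ L N t : ℝ} (hδ : 0 ≤ δ) (hN : 1 ≤ N) (hL : 0 ≤ L)
    (lower : ∀ s ∈ Icc t (t + δ), κ ≤ χ s)
    (lipschitz : ∀ s ∈ Icc t (t + δ), ‖γ s - γ t‖ ≤ L * |s - t|) :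
    δ * (κ * Real.exp (-(π / 2 * (L * δ) ^ 2))) / N ≤ kernelMass N γ χ t := by
  have hN₀ : 0 < N := by linarith
  have δ_div_le : δ / N ≤ δ := div_le_self hδ hN
  have integrable_integrand := integrable_kernelMass hγ hχ N t
  have pointwise : ∀ s ∈ Icc t (t + δ / N), κ * Real.exp (-(π / 2 * (L * δ) ^ 2)) ≤
      χ s * Real.exp (-(π * N ^ 2 / 2 * ‖γ s - γ t‖ ^ 2)) := by
    intro s hs
    have hs' : s ∈ Icc t (t + δ) := ⟨hs.1, hs.2.trans (by linarith)⟩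
    have scaled_le : N * ‖γ s - γ t‖ ≤ L * δ :=
      calc N * ‖γ s - γ t‖ ≤ N * (L * (δ / N)) := by
            gcongr
            refine (lipschitz s hs').trans (mul_le_mul_of_nonneg_left ?_ hL)
            rw [abs_of_nonneg (by linarith [hs.1])]
            linarith [hs.2]
        _ = L * δ := by field_simp
    have sq_le := pow_le_pow_left₀ (by positivity) scaled_le 2
    refine mul_le_mul (lower s hs') (Real.exp_le_exp.2 ?_) (Real.exp_pos _).le (nonneg s)
    nlinarith [Real.pi_pos]
  calc _ = ∫ _ in Icc t (t + δ / N), κ * Real.exp (-(π / 2 * (L * δ) ^ 2)) := by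
        rw [setIntegral_const, Real.volume_real_Icc_of_le (by linarith [div_nonneg hδ hN₀.le]),
          smul_eq_mul]
        ring
    _ ≤ ∫ s in Icc t (t + δ / N), χ s * Real.exp (-(π * N ^ 2 / 2 * ‖γ s - γ t‖ ^ 2)) :=
        setIntegral_mono_on continuous_const.integrableOn_Icc integrable_integrand.integrableOn
          measurableSet_Icc pointwise
    _ ≤ _ := setIntegral_le_integral integrable_integrand
        (.of_forall fun s => mul_nonneg (nonneg s) (Real.exp_pos _).le)

theorem exists_le_and_lipschitzOnWith_Icc (hγ : LocallyLipschitz γ)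
    (hχ : Continuous χ) (nonneg : ∀ s, 0 ≤ χ s) (ne_zero : χ ≠ 0) :
    ∃ s₀ δ κ : ℝ, ∃ L, 0 < δ ∧ 0 < κ ∧ (∀ s ∈ Icc s₀ (s₀ + 2 * δ), κ ≤ χ s) ∧
      LipschitzOnWith L γ (Icc s₀ (s₀ + 2 * δ)) := by
  obtain ⟨s₀, hs₀⟩ := Function.ne_iff.1 ne_zero
  have pos : 0 < χ s₀ := (nonneg s₀).lt_of_ne' hs₀
  obtain ⟨L, U, hU, lipschitz⟩ := hγ s₀
  obtain ⟨ε, hε, ball_subset⟩ := Metric.mem_nhds_iff.1 <|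
    Filter.inter_mem hU (hχ.continuousAt.eventually (lt_mem_nhds (half_lt_self pos)))
  have Icc_subset : Icc s₀ (s₀ + 2 * (ε / 4)) ⊆ Metric.ball s₀ ε := fun s hs => by
    rw [Metric.mem_ball, Real.dist_eq, abs_lt]
    constructor <;> linarith [hs.1, hs.2]
  exact ⟨s₀, ε / 4, χ s₀ / 2, L, by positivity, by positivity,
    fun s hs => (ball_subset (Icc_subset hs)).2.le,
    lipschitz.mono fun s hs => (ball_subset (Icc_subset hs)).1⟩

theorem exists_div_le_kernelMass (hγ : LocallyLipschitz γ) (hχ : Continuous χ)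
    (hχi : Integrable χ) (nonneg : ∀ s, 0 ≤ χ s) (ne_zero : χ ≠ 0) :
    ∃ s₀, ∃ δ > 0, ∃ κ > 0, ∃ c > 0, ∀ t ∈ Icc s₀ (s₀ + δ),
      κ ≤ χ t ∧ ∀ N ≥ 1, c / N ≤ kernelMass N γ χ t := by
  obtain ⟨s₀, δ, κ, L, hδ, hκ, lower, lipschitz⟩ :=
    exists_le_and_lipschitzOnWith_Icc hγ hχ nonneg ne_zero
  refine ⟨s₀, δ, hδ, κ, hκ, δ * (κ * Real.exp (-(π / 2 * (L * δ) ^ 2))), by positivity,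
    fun t ht => ⟨lower t ⟨ht.1, by linarith [ht.2]⟩, fun N hN => ?_⟩⟩
  have subset : Icc t (t + δ) ⊆ Icc s₀ (s₀ + 2 * δ) := Icc_subset_Icc ht.1 (by linarith [ht.2])
  exact div_le_kernelMass hγ.continuous hχi nonneg hδ.le hN L.2 (fun s hs => lower s (subset hs))
    fun s hs => lipschitz.norm_sub_le (subset hs) (subset (left_mem_Icc.2 (by linarith)))

end KernelMass

variable [InnerProductSpace ℝ V] [FiniteDimensional ℝ V] [MeasurableSpace V] [BorelSpace V]
  {γ : ℝ → V} {χ : ℝ → ℝ} {α N : ℝ}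

theorem packetForm_zero_self (hγ : Continuous γ) (hχ : Integrable χ) (hN : 0 < N) (t : ℝ)
    (ξ₀ : V) :
    packetForm N 0 γ χ t ξ₀ ξ₀ = ∫ s, (χ s : ℂ) * (𝐞 (-⟪γ s - γ t, ξ₀⟫) *
      (((N ^ 2 / 2) ^ ((finrank ℝ V : ℝ) / 2) *
        Real.exp (-(π * N ^ 2 / 2 * ‖γ s - γ t‖ ^ 2)) : ℝ) : ℂ)) := by
  have hb : 0 < 2 * π / N ^ 2 := by positivity
  have integrand_eq : ∀ ξ, packetSymbol N 0 γ χ t ξ₀ ξ * (freqGauss N ξ₀ ξ : ℂ) =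
      ∫ s, (χ s : ℂ) * (𝐞 (-⟪γ s - γ t, ξ⟫) *
        (Real.exp (-(2 * π / N ^ 2 * ‖ξ - ξ₀‖ ^ 2)) : ℝ)) := by
    intro ξ
    rw [packetSymbol, besselWeight_zero, Complex.ofReal_one, one_mul, curveMultiplier, mul_assoc,
      ← integral_mul_const]
    congr 1 with s
    rw [inner_sub_left, neg_sub, sub_eq_add_neg, AddChar.map_add_eq_mul, Circle.coe_mul,
      ← freqGauss_sq]
    push_cast
    ring
  simp_rw [packetForm, integrand_eq]
  rw [integral_integral_swap]
  · congr 1 with s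
    rw [integral_const_mul, integral_fourierChar_mul_exp_neg_mul_norm_sub_sq hb]
    congr 5 <;> field_simp
  · refine ((integrable_exp_neg_mul_norm_sub_sq hb ξ₀).mul_prod hχ.norm).mono'
      (hχ.ofReal.aestronglyMeasurable.comp_snd.mul
        (Continuous.aestronglyMeasurable (by fun_prop))) (.of_forall fun z => ?_)
    rw [Function.uncurry, norm_mul, norm_mul, Circle.norm_coe, Complex.norm_real,
      Complex.norm_real, Real.norm_of_nonneg (Real.exp_pos _).le, one_mul, mul_comm]

theorem continuous_packetForm (hγ : Continuous γ) (hχ : Integrable χ) (hN : 0 < N) (hα : 0 ≤ α)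
    (ξ₀ η : V) : Continuous fun t => packetForm N α γ χ t ξ₀ η := by
  refine continuous_of_dominated (bound := fun ξ =>
      (∫ s, |χ s|) * (besselWeight α ξ * freqGauss N ξ₀ ξ)) (fun t => ?_)
    (fun t => .of_forall fun ξ => ?_)
    ((integrable_besselWeight_mul_freqGauss hα hN ξ₀).const_mul _) (.of_forall fun ξ => ?_)
  · have := continuous_packetSymbol hγ hχ N α t ξ₀
    exact Continuous.aestronglyMeasurable (by fun_prop)
  · rw [norm_mul]
    exact (mul_le_of_le_one_right (norm_nonneg _) (norm_ofReal_freqGauss_le_one N η ξ)).trans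
      (norm_packetSymbol_le N α γ χ t ξ₀ ξ)
  · unfold packetSymbol
    fun_prop

/-- The energy `∫ ⟨ξ⟩ ^ α |m(ξ)|² dξ` of the multiplier `m` of the averaging operator over
frequencies `‖ξ‖ ≲ N`, with a Gaussian cutoff. -/
def curveEnergy (α N : ℝ) (γ : ℝ → V) (χ : ℝ → ℝ) : ℝ :=
  ∫ ξ, besselWeight α ξ * ‖curveMultiplier γ χ ξ‖ ^ 2 * freqGauss N 0 ξ ^ 2

theorem curveEnergy_nonneg : 0 ≤ curveEnergy α N γ χ :=
  integral_nonneg fun ξ => by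
    have := besselWeight_pos α ξ
    positivity

theorem integrable_curveEnergy (hγ : Continuous γ) (hχ : Integrable χ) (hN : 0 < N) (hα : 0 ≤ α) :
    Integrable fun ξ => besselWeight α ξ * ‖curveMultiplier γ χ ξ‖ ^ 2 * freqGauss N 0 ξ ^ 2 := by
  have := continuous_curveMultiplier hγ hχ
  refine ((integrable_besselWeight_mul_freqGauss hα hN 0).const_mul ((∫ s, |χ s|) ^ 2)).mono'
    (Continuous.aestronglyMeasurable (by fun_prop)) (.of_forall fun ξ => ?_)
  have weight_pos := besselWeight_pos α ξ
  have gauss_pos := freqGauss_pos N 0 ξ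
  rw [Real.norm_of_nonneg (by positivity)]
  calc besselWeight α ξ * ‖curveMultiplier γ χ ξ‖ ^ 2 * freqGauss N 0 ξ ^ 2
      ≤ besselWeight α ξ * (∫ s, |χ s|) ^ 2 * freqGauss N 0 ξ := by
        gcongr
        · exact norm_curveMultiplier_le γ χ ξ
        · exact pow_le_of_le_one gauss_pos.le (freqGauss_le_one N 0 ξ) two_ne_zero
    _ = _ := by ring

theorem ofReal_curveEnergy_eq_integral_packetForm (hγ : Continuous γ) (hχ : Integrable χ)
    (hN : 0 < N) (hα : 0 ≤ α) :
    (curveEnergy α N γ χ : ℂ) = ∫ t, (χ t : ℂ) * packetForm N α γ χ t 0 0 := by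
  have := continuous_curveMultiplier hγ hχ
  simp_rw [packetForm, ← integral_const_mul]
  rw [integral_integral_swap, curveEnergy, ← integral_complex_ofReal]
  · congr 1 with ξ
    have integrand_eq : ∀ t, (χ t : ℂ) * (packetSymbol N α γ χ t 0 ξ * (freqGauss N 0 ξ : ℂ)) =
        (starRingEnd ℂ) (𝐞 (-⟪γ t, ξ⟫) * (χ t : ℂ)) *
          ((besselWeight α ξ : ℂ) * curveMultiplier γ χ ξ * (freqGauss N 0 ξ : ℂ) ^ 2) := by
      intro t
      rw [map_mul, ← Circle.coe_inv_eq_conj, ← AddChar.map_neg_eq_inv, neg_neg,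
        Complex.conj_ofReal, packetSymbol]
      ring
    simp_rw [integrand_eq]
    rw [integral_mul_const, integral_conj, ← curveMultiplier]
    push_cast
    rw [← Complex.mul_conj']
    ring
  · refine (hχ.norm.mul_prod ((integrable_besselWeight_mul_freqGauss hα hN 0).const_mul
      (∫ s, |χ s|))).mono' (hχ.ofReal.aestronglyMeasurable.comp_fst.mul ?_)
      (.of_forall fun z => ?_)
    · unfold packetSymbol
      exact Continuous.aestronglyMeasurable (by fun_prop)
    · rw [Function.uncurry, norm_mul, norm_mul, Complex.norm_real]
      refine mul_le_mul_of_nonneg_left ?_ (norm_nonneg _)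
      exact (mul_le_of_le_one_right (norm_nonneg _) (norm_ofReal_freqGauss_le_one N 0 z.2)).trans
        (norm_packetSymbol_le N α γ χ z.1 0 z.2)

theorem sq_div_two_rpow_half (d : ℕ) (hN : 0 ≤ N) :
    (N ^ 2 / 2) ^ ((d : ℝ) / 2) = (1 / 2 : ℝ) ^ ((d : ℝ) / 2) * N ^ d := by
  rw [div_eq_mul_one_div, mul_comm, Real.mul_rpow (by norm_num) (by positivity),
    ← Real.rpow_natCast N 2, ← Real.rpow_mul hN, Nat.cast_ofNat, mul_div_cancel₀ _ two_ne_zero,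
    Real.rpow_natCast]

theorem curveEnergy_zero_eq (hγ : Continuous γ) (hχ : Integrable χ) (hN : 0 < N) :
    curveEnergy 0 N γ χ = (1 / 2 : ℝ) ^ ((finrank ℝ V : ℝ) / 2) * N ^ finrank ℝ V *
      ∫ t, χ t * kernelMass N γ χ t := by
  apply Complex.ofReal_injective
  rw [ofReal_curveEnergy_eq_integral_packetForm hγ hχ hN le_rfl, ← integral_const_mul,
    ← integral_complex_ofReal]
  congr 1 with t
  rw [packetForm_zero_self hγ hχ hN, mul_left_comm, kernelMass, Complex.ofReal_mul]
  congr 1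
  rw [← integral_const_mul, ← integral_complex_ofReal]
  congr 1 with s
  rw [inner_zero_right, neg_zero, AddChar.map_zero_eq_one, Circle.coe_one,
    sq_div_two_rpow_half _ hN.le]
  push_cast
  ring

theorem exists_curveEnergy_zero_le (hγ : Continuous γ) (hχ : Integrable χ)
    (nonneg : ∀ s, 0 ≤ χ s) {S : Set ℝ} (support_subset : χ.support ⊆ S) {c₁ K : ℝ} (hc₁ : 0 < c₁)
    (lower_lipschitz : ∀ s ∈ S, ∀ t ∈ S, c₁ * |s - t| ≤ ‖γ s - γ t‖) (hK : ∀ s, χ s ≤ K) :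
    ∃ C ≥ 0, ∀ N > 0, curveEnergy 0 N γ χ ≤ C * N ^ ((finrank ℝ V : ℝ) - 1) := by
  have hK₀ : 0 ≤ K := (nonneg 0).trans (hK 0)
  have integral_χ_nonneg : 0 ≤ ∫ s, χ s := integral_nonneg nonneg
  refine ⟨(1 / 2 : ℝ) ^ ((finrank ℝ V : ℝ) / 2) * ((∫ s, χ s) * (K * (√2 / c₁))), by positivity,
    fun N hN => ?_⟩
  have integral_le : ∫ t, χ t * kernelMass N γ χ t ≤ (∫ s, χ s) * (K * (√2 / c₁) / N) := by
    rw [← integral_mul_const]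
    refine integral_mono (integrable_mul_kernelMass hγ hχ N) (hχ.mul_const _) fun t => ?_
    by_cases ht : χ t = 0
    · simp [ht]
    · exact mul_le_mul_of_nonneg_left (kernelMass_le_div hc₁ lower_lipschitz nonneg support_subset
        hK hN (support_subset ht)) (nonneg t)
  rw [curveEnergy_zero_eq hγ hχ hN, Real.rpow_sub_one hN.ne', Real.rpow_natCast]
  calc _ ≤ (1 / 2 : ℝ) ^ ((finrank ℝ V : ℝ) / 2) * N ^ finrank ℝ V *
        ((∫ s, χ s) * (K * (√2 / c₁) / N)) := by gcongr
    _ = _ := by ring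

theorem exists_le_curveEnergy_zero (hγ : LocallyLipschitz γ) (hχ : Continuous χ)
    (hχi : Integrable χ) (nonneg : ∀ s, 0 ≤ χ s) (ne_zero : χ ≠ 0) :
    ∃ c > 0, ∀ N ≥ 1, c * N ^ ((finrank ℝ V : ℝ) - 1) ≤ curveEnergy 0 N γ χ := by
  obtain ⟨s₀, δ, hδ, κ, hκ, c, hc, lower⟩ := exists_div_le_kernelMass hγ hχ hχi nonneg ne_zero
  refine ⟨(1 / 2 : ℝ) ^ ((finrank ℝ V : ℝ) / 2) * (δ * (κ * c)), by positivity, fun N hN => ?_⟩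
  have hN₀ : 0 < N := by linarith
  have integrable := integrable_mul_kernelMass hγ.continuous hχi N
  have integral_ge : δ * (κ * (c / N)) ≤ ∫ t, χ t * kernelMass N γ χ t :=
    calc δ * (κ * (c / N)) = ∫ _ in Icc s₀ (s₀ + δ), κ * (c / N) := by
          rw [setIntegral_const, Real.volume_real_Icc_of_le (by linarith), smul_eq_mul,
            add_sub_cancel_left]
      _ ≤ ∫ t in Icc s₀ (s₀ + δ), χ t * kernelMass N γ χ t :=
          setIntegral_mono_on continuous_const.integrableOn_Icc integrable.integrableOn
            measurableSet_Icc fun t ht => mul_le_mul (lower t ht).1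
              ((lower t ht).2 N hN) (by positivity) (nonneg t)
      _ ≤ _ := setIntegral_le_integral integrable
          (.of_forall fun t => mul_nonneg (nonneg t) (kernelMass_nonneg nonneg N t))
  rw [curveEnergy_zero_eq hγ.continuous hχi hN₀, Real.rpow_sub_one hN₀.ne', Real.rpow_natCast]
  calc _ = (1 / 2 : ℝ) ^ ((finrank ℝ V : ℝ) / 2) * N ^ finrank ℝ V * (δ * (κ * (c / N))) := by ring
    _ ≤ _ := by gcongr

-- Frequencies `‖ξ‖ ≥ r` carry the weight `r ^ α`; those below `r` are removed by the subtraction.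
theorem rpow_mul_curveEnergy_zero_sub_le (hγ : Continuous γ) (hχ : Integrable χ) (hN : 0 < N)
    (hα : 0 ≤ α) {r : ℝ} (hr : 0 < r) :
    r ^ α * (curveEnergy 0 N γ χ - Real.exp (2 * π) * curveEnergy 0 r γ χ) ≤
      curveEnergy α N γ χ := by
  have integrable_N := integrable_curveEnergy hγ hχ hN le_rfl
  have integrable_r := (integrable_curveEnergy hγ hχ hr le_rfl).const_mul (Real.exp (2 * π))
  unfold curveEnergy
  rw [← integral_const_mul, ← integral_sub integrable_N integrable_r, ← integral_const_mul]
  refine integral_mono ((integrable_N.sub integrable_r).const_mul _)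
    (integrable_curveEnergy hγ hχ hN hα) fun ξ => ?_
  simp only [besselWeight_zero, one_mul]
  have weight_pos := besselWeight_pos α ξ
  set energy := ‖curveMultiplier γ χ ξ‖ ^ 2
  have energy_nonneg : 0 ≤ energy := by positivity
  rcases le_or_gt r ‖ξ‖ with high | low
  · calc r ^ α * (energy * freqGauss N 0 ξ ^ 2 -
          Real.exp (2 * π) * (energy * freqGauss r 0 ξ ^ 2))
        ≤ r ^ α * (energy * freqGauss N 0 ξ ^ 2) := by
          gcongr
          exact sub_le_self _ (by positivity)
      _ ≤ besselWeight α ξ * (energy * freqGauss N 0 ξ ^ 2) := by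
          gcongr
          exact rpow_le_besselWeight hα hr.le high
      _ = _ := by ring
  · have gauss_le_one : freqGauss N 0 ξ ^ 2 ≤ 1 :=
      pow_le_one₀ (freqGauss_pos N 0 ξ).le (freqGauss_le_one N 0 ξ)
    have difference_nonpos : energy * freqGauss N 0 ξ ^ 2 -
        Real.exp (2 * π) * (energy * freqGauss r 0 ξ ^ 2) ≤ 0 := by
      nlinarith [one_le_exp_mul_freqGauss_zero_sq low]
    exact (mul_nonpos_of_nonneg_of_nonpos (by positivity) difference_nonpos).trans (by positivity)

end CurveEnergy

section OneDivBound

theorem le_of_eventually_mul_rpow_le {x y c C : ℝ} (hc : 0 < c)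
    (h : ∀ᶠ N : ℕ in Filter.atTop, c * (N : ℝ) ^ x ≤ C * (N : ℝ) ^ y) : x ≤ y := by
  by_contra! hxy
  have ratio_tendsto : Filter.Tendsto (fun N : ℕ => (N : ℝ) ^ (x - y)) Filter.atTop Filter.atTop :=
    (tendsto_rpow_atTop (sub_pos.2 hxy)).comp tendsto_natCast_atTop_atTop
  obtain ⟨N, ratio_gt, hN, N_pos⟩ := ((ratio_tendsto.eventually_gt_atTop (C / c)).and
    (h.and (Filter.eventually_gt_atTop 0))).exists
  have N_pos' : (0 : ℝ) < N := Nat.cast_pos.2 N_pos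
  rw [Real.rpow_sub N_pos', div_lt_div_iff₀ hc (by positivity)] at ratio_gt
  linarith

theorem norm_intervalIntegral_le_of_norm_sum_gridPoint_le {E : Type*} [NormedAddCommGroup E]
    [NormedSpace ℝ E] {a d B : ℝ} (hd : 0 ≤ d) {N : ℕ} (hN : 0 < N) {g : ℝ → E}
    (hg : Continuous g)
    (h : ∀ τ ∈ Icc 0 (d / N), ‖∑ ν ∈ Finset.range N, g (gridPoint (a + τ) d N ν)‖ ≤ B) :
    ‖∫ t in a..a + d, g t‖ ≤ B * (d / N) := by
  have cell_integral : ∀ ν : ℕ, ∫ t in gridPoint a d N ν..gridPoint a d N (ν + 1), g t =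
      ∫ τ in (0 : ℝ)..d / N, g (gridPoint (a + τ) d N ν) := by
    intro ν
    have translate := intervalIntegral.integral_comp_add_right (a := 0) (b := d / N) g
      (gridPoint a d N ν)
    rw [zero_add, show d / N + gridPoint a d N ν = gridPoint a d N (ν + 1) by
      simp only [gridPoint]; push_cast; ring] at translate
    rw [← translate]
    refine intervalIntegral.integral_congr fun τ _ => congrArg g ?_
    simp only [gridPoint]
    ring
  have integral_eq : ∫ t in a..a + d, g t =
      ∫ τ in (0 : ℝ)..d / N, ∑ ν ∈ Finset.range N, g (gridPoint (a + τ) d N ν) := by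
    rw [intervalIntegral.integral_finsetSum fun ν _ =>
      Continuous.intervalIntegrable (by unfold gridPoint; fun_prop) _ _]
    simp_rw [← cell_integral]
    rw [intervalIntegral.sum_integral_adjacent_intervals fun ν _ => hg.intervalIntegrable _ _]
    congr 1
    · simp [gridPoint]
    · simp only [gridPoint]
      field_simp
  have cell_length_nonneg : 0 ≤ d / N := by positivity
  rw [integral_eq]
  convert intervalIntegral.norm_integral_le_of_norm_le_const (C := B) fun τ hτ => ?_ using 2
  · rw [sub_zero, abs_of_nonneg cell_length_nonneg]
  · rw [uIoc_of_le cell_length_nonneg] at hτ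
    exact h τ ⟨hτ.1.le, hτ.2⟩

theorem gridPoint_add_mem_Icc {a d τ : ℝ} (hd : 0 ≤ d) {N ν : ℕ} (hν : ν < N)
    (hτ : τ ∈ Icc 0 (d / N)) : gridPoint (a + τ) d N ν ∈ Icc a (a + d) := by
  have hN : (0 : ℝ) < N := Nat.cast_pos.2 (by omega)
  have cells_le : ((ν : ℝ) + 1) * (d / N) ≤ N * (d / N) := by
    gcongr
    exact_mod_cast hν
  rw [mul_div_cancel₀ _ hN.ne'] at cells_le
  have offset_nonneg : 0 ≤ (ν : ℝ) * (d / N) := by positivity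
  constructor <;> simp only [gridPoint] <;> linarith [hτ.1, hτ.2]

variable {n : ℕ} {p : ℝ≥0∞} {α a b c₁ : ℝ} {γ : ℝ → Euc n} {χ : ℝ → ℝ}

theorem exists_curveEnergy_le_of_averagingBound (hp : 2 ≤ p) (hα : 0 ≤ α) (hab : a < b)
    (hγ : Continuous γ) (hc₁ : 0 < c₁)
    (lower_lipschitz : ∀ s ∈ Icc a b, ∀ t ∈ Icc a b, c₁ * |s - t| ≤ ‖γ s - γ t‖)
    (hχ : Continuous χ) (support_subset : χ.support ⊆ Icc a b)
    (bounded : ∃ C, AveragingBound p α γ χ C) :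
    ∃ C, ∀ N : ℕ, 0 < N → curveEnergy α N γ χ ≤ C * (N : ℝ) ^ ((n : ℝ) - 1 + (1 / p).toReal) := by
  have compact_support : HasCompactSupport χ :=
    .of_support_subset_isCompact isCompact_Icc support_subset
  have hχi : Integrable χ := hχ.integrable_of_hasCompactSupport compact_support
  obtain ⟨K, hK⟩ := hχ.bounded_above_of_compact_support compact_support
  have hd : 0 < b - a := sub_pos.2 hab
  obtain ⟨C, -, sum_le⟩ := exists_norm_sum_packetForm_gridPoint_le hp hα hγ hχi bounded hc₁
    lower_lipschitz hd (by positivity : 0 < max K 1)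
  refine ⟨C * (b - a), fun N hN => ?_⟩
  have hN' : (0 : ℝ) < N := Nat.cast_pos.2 hN
  set g : ℝ → ℂ := fun t => (χ t : ℂ) * packetForm N α γ χ t 0 0
  have continuous_g : Continuous g :=
    (Complex.continuous_ofReal.comp hχ).mul (continuous_packetForm hγ hχi hN' hα 0 0)
  have energy_eq : curveEnergy α N γ χ = ‖∫ t in a..a + (b - a), g t‖ := by
    have support_g : g.support ⊆ Icc a b := fun t ht =>
      support_subset (by simpa using left_ne_zero_of_mul (Function.mem_support.1 ht))
    rw [add_sub_cancel, intervalIntegral.integral_of_le hab.le, ← integral_Icc_eq_integral_Ioc,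
      setIntegral_eq_integral_of_forall_compl_eq_zero fun t ht =>
        Function.notMem_support.1 (mt (@support_g t) ht),
      ← ofReal_curveEnergy_eq_integral_packetForm hγ hχi hN' hα, Complex.norm_real,
      Real.norm_of_nonneg curveEnergy_nonneg]
  have shifted_sum_le : ∀ τ ∈ Icc 0 ((b - a) / N),
      ‖∑ ν ∈ Finset.range N, g (gridPoint (a + τ) (b - a) N ν)‖ ≤
        C * (N : ℝ) ^ ((n : ℝ) + (1 / p).toReal) := by
    intro τ hτ
    have bound := sum_le N hN (a + τ)
      (fun ν hν => by simpa using gridPoint_add_mem_Icc (a := a) hd.le hν hτ)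
      (fun ν => χ (gridPoint (a + τ) (b - a) N ν)) (fun ν => (hK _).trans (le_max_left K 1))
      (fun _ => 0) (fun _ => 0) {0} 1 zero_le_one (by simp [freqGauss])
    simpa using bound
  rw [energy_eq]
  refine (norm_intervalIntegral_le_of_norm_sum_gridPoint_le hd.le hN continuous_g
    shifted_sum_le).trans_eq ?_
  rw [sub_add_eq_add_sub, Real.rpow_sub_one hN'.ne']
  ring

theorem exists_pos_forall_mul_rpow_le {A c x : ℝ} (hA : 0 ≤ A) (hc : 0 < c) (hx : 0 < x) :
    ∃ ε > 0, ∀ N ≥ 0, A * (ε * N) ^ x ≤ c * N ^ x := by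
  refine ⟨(c / (A + 1)) ^ x⁻¹, by positivity, fun N hN => ?_⟩
  rw [Real.mul_rpow (by positivity) hN, Real.rpow_inv_rpow (by positivity) hx.ne', ← mul_assoc]
  gcongr
  rw [mul_div_left_comm]
  exact mul_le_of_le_one_right hc.le (div_le_one_of_le₀ (by linarith) (by linarith))

theorem exists_rpow_le_curveEnergy (hn : 2 ≤ n) (hα : 0 ≤ α) (hγ : LocallyLipschitz γ)
    (hc₁ : 0 < c₁)
    (lower_lipschitz : ∀ s ∈ Icc a b, ∀ t ∈ Icc a b, c₁ * |s - t| ≤ ‖γ s - γ t‖)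
    (hχ : Continuous χ) (support_subset : χ.support ⊆ Icc a b) (nonneg : ∀ s, 0 ≤ χ s)
    (ne_zero : χ ≠ 0) :
    ∃ c > 0, ∀ N : ℝ, 1 ≤ N → c * N ^ ((n : ℝ) - 1 + α) ≤ curveEnergy α N γ χ := by
  have compact_support : HasCompactSupport χ :=
    .of_support_subset_isCompact isCompact_Icc support_subset
  have hχi : Integrable χ := hχ.integrable_of_hasCompactSupport compact_support
  obtain ⟨K, hK⟩ := hχ.bounded_above_of_compact_support compact_support
  obtain ⟨C, hC, energy_le⟩ := exists_curveEnergy_zero_le hγ.continuous hχi nonneg support_subset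
    hc₁ lower_lipschitz fun s => (le_abs_self _).trans (hK s)
  obtain ⟨c, hc, le_energy⟩ := exists_le_curveEnergy_zero hγ hχ hχi nonneg ne_zero
  simp only [finrank_euclideanSpace_fin] at energy_le le_energy
  set E := Real.exp (2 * π)
  have E_pos : 0 < E := Real.exp_pos _
  have exponent_pos : (0 : ℝ) < n - 1 := sub_pos.2 (by exact_mod_cast hn)
  obtain ⟨ε, hε, ε_small⟩ := exists_pos_forall_mul_rpow_le (mul_nonneg E_pos.le hC)
    (half_pos hc) exponent_pos
  refine ⟨ε ^ α * (c / 2), by positivity, fun N hN => ?_⟩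
  have hN₀ : 0 < N := by linarith
  have low_frequencies_le : E * curveEnergy 0 (ε * N) γ χ ≤ c / 2 * N ^ ((n : ℝ) - 1) :=
    calc E * curveEnergy 0 (ε * N) γ χ ≤ E * (C * (ε * N) ^ ((n : ℝ) - 1)) := by
          gcongr
          exact energy_le _ (by positivity)
      _ = E * C * (ε * N) ^ ((n : ℝ) - 1) := by ring
      _ ≤ c / 2 * N ^ ((n : ℝ) - 1) := ε_small N hN₀.le
  calc ε ^ α * (c / 2) * N ^ ((n : ℝ) - 1 + α)
      = (ε * N) ^ α * (c / 2 * N ^ ((n : ℝ) - 1)) := by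
        rw [Real.rpow_add hN₀, Real.mul_rpow hε.le hN₀.le]
        ring
    _ ≤ (ε * N) ^ α * (curveEnergy 0 N γ χ - E * curveEnergy 0 (ε * N) γ χ) := by
        gcongr
        linarith [le_energy N hN]
    _ ≤ _ := rpow_mul_curveEnergy_zero_sub_le hγ.continuous hχi hN₀ hα (by positivity)

theorem le_one_div_of_averagingBound (hn : 2 ≤ n) (hp : 2 ≤ p) (hα : 0 ≤ α) (hab : a < b)
    (hγ : LocallyLipschitz γ) (hc₁ : 0 < c₁)
    (lower_lipschitz : ∀ s ∈ Icc a b, ∀ t ∈ Icc a b, c₁ * |s - t| ≤ ‖γ s - γ t‖)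
    (hχ : Continuous χ) (support_subset : χ.support ⊆ Icc a b) (nonneg : ∀ s, 0 ≤ χ s)
    (ne_zero : χ ≠ 0) (bounded : ∃ C, AveragingBound p α γ χ C) : α ≤ (1 / p).toReal := by
  obtain ⟨c, hc, lower⟩ := exists_rpow_le_curveEnergy hn hα hγ hc₁ lower_lipschitz hχ
    support_subset nonneg ne_zero
  obtain ⟨C, upper⟩ := exists_curveEnergy_le_of_averagingBound hp hα hab hγ.continuous hc₁
    lower_lipschitz hχ support_subset bounded
  refine le_of_add_le_add_left (a := (n : ℝ) - 1) (le_of_eventually_mul_rpow_le (C := C) hc ?_)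
  filter_upwards [Filter.eventually_gt_atTop 0] with N hN
  exact (lower N (by exact_mod_cast hN)).trans (upper N hN)

end OneDivBound

section OsculatingConormal

variable {V : Type*} [NormedAddCommGroup V]

theorem exists_pos_norm_le_of_continuousOn {S : Set ℝ} (hS : IsCompact S) {f : ℝ → V}
    (hf : ContinuousOn f S) : ∃ C > 0, ∀ t ∈ S, ‖f t‖ ≤ C := by
  simpa using (hS.image_of_continuousOn hf).isBounded.exists_pos_norm_le

variable [InnerProductSpace ℝ V]

theorem hasDerivAt_inner_iteratedDeriv {γ : ℝ → V} {m : ℕ} (hγ : ContDiff ℝ (m + 1) γ) (v : V)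
    (u : ℝ) :
    HasDerivAt (fun u => ⟪iteratedDeriv m γ u, v⟫) ⟪iteratedDeriv (m + 1) γ u, v⟫ u := by
  have differentiable : Differentiable ℝ (iteratedDeriv m γ) :=
    hγ.differentiable_iteratedDeriv m (by exact_mod_cast Nat.lt_succ_self m)
  simpa [iteratedDeriv_succ] using (differentiable u).hasDerivAt.inner ℝ (hasDerivAt_const u v)

theorem abs_inner_le_mul_abs_sub_pow {v : V} {a b t C : ℝ} (ht : t ∈ Icc a b) {m : ℕ} {f : ℝ → V}
    (hf : ContDiff ℝ m f) (vanish : ∀ k < m, ⟪iteratedDeriv k f t, v⟫ = 0)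
    (bounded : ∀ u ∈ Icc a b, |⟪iteratedDeriv m f u, v⟫| ≤ C) {s : ℝ} (hs : s ∈ Icc a b) :
    |⟪f s, v⟫| ≤ C * |s - t| ^ m := by
  induction m generalizing f s with
  | zero => simpa using bounded s hs
  | succ m ih =>
    have hC : 0 ≤ C := (abs_nonneg _).trans (bounded t ht)
    have deriv_le : ∀ u ∈ uIcc t s, ‖⟪deriv f u, v⟫‖ ≤ C * |s - t| ^ m := fun u hu => calc
      |⟪deriv f u, v⟫| ≤ C * |u - t| ^ m := by
        refine ih (f := deriv f) hf.deriv' (fun k hk => ?_) (fun u hu => ?_)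
          (uIcc_subset_Icc ht hs hu)
        · simpa only [iteratedDeriv_succ'] using vanish (k + 1) (by lia)
        · simpa only [iteratedDeriv_succ'] using bounded u hu
      _ ≤ C * |s - t| ^ m := by
        gcongr C * ?_ ^ m
        exact abs_sub_left_of_mem_uIcc hu
    have hasDerivAt : ∀ u, HasDerivAt (fun u => ⟪f u, v⟫) ⟪deriv f u, v⟫ u := fun u => by
      simpa using hasDerivAt_inner_iteratedDeriv (m := 0) (hf.of_le (by simp)) v u
    have mean_value := (convex_uIcc t s).norm_image_sub_le_of_norm_hasDerivWithin_le
      (fun u _ => (hasDerivAt u).hasDerivWithinAt) deriv_le left_mem_uIcc right_mem_uIcc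
    have vanish_zero : ⟪f t, v⟫ = 0 := by simpa using vanish 0 m.succ_pos
    simpa [vanish_zero, pow_succ, mul_assoc] using mean_value

/-- A conormal field `e` along the curve `γ`: at each `t ∈ S` the vector `e t` annihilates
`γ'(t), …, γ⁽ⁿ⁻¹⁾(t)`, normalized by `⟪γ⁽ⁿ⁾(t), e t⟫ = 1`. These are the frequency directions in
which the multiplier of the averaging operator decays slowest, like `|ξ|^(-1/n)`. -/
structure IsOsculatingConormal (n : ℕ) (γ e : ℝ → V) (S : Set ℝ) : Prop where
  continuousOn : ContinuousOn e S
  inner_eq_zero : ∀ t ∈ S, ∀ k, 0 < k → k < n → ⟪iteratedDeriv k γ t, e t⟫ = 0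
  inner_eq_one : ∀ t ∈ S, ⟪iteratedDeriv n γ t, e t⟫ = 1

namespace IsOsculatingConormal

variable {n : ℕ} {γ e : ℝ → V} {S : Set ℝ} {a b : ℝ}

theorem exists_le_norm (h : IsOsculatingConormal n γ e S) (hγ : ContDiff ℝ n γ)
    (hS : IsCompact S) : ∃ c > 0, ∀ t ∈ S, c ≤ ‖e t‖ := by
  obtain ⟨C, hC, norm_le⟩ := exists_pos_norm_le_of_continuousOn hS
    (hγ.continuous_iteratedDeriv n le_rfl).continuousOn
  refine ⟨1 / C, by positivity, fun t ht => (div_le_iff₀' hC).2 ?_⟩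
  calc 1 = ⟪iteratedDeriv n γ t, e t⟫ := (h.inner_eq_one t ht).symm
    _ ≤ ‖iteratedDeriv n γ t‖ * ‖e t‖ := real_inner_le_norm _ _
    _ ≤ C * ‖e t‖ := by gcongr; exact norm_le t ht

theorem exists_abs_inner_sub_le (h : IsOsculatingConormal n γ e (Icc a b)) (hn : 0 < n)
    (hγ : ContDiff ℝ n γ) : ∃ C > 0, ∀ s ∈ Icc a b, ∀ t ∈ Icc a b,
      |⟪γ s - γ t, e t⟫| ≤ C * |s - t| ^ n := by
  obtain ⟨Cₑ, hCₑ, norm_e_le⟩ := exists_pos_norm_le_of_continuousOn isCompact_Icc h.continuousOn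
  obtain ⟨Cγ, hCγ, norm_deriv_le⟩ := exists_pos_norm_le_of_continuousOn
    (isCompact_Icc (a := a) (b := b))
    (hγ.continuous_iteratedDeriv n le_rfl).continuousOn
  refine ⟨Cγ * Cₑ, by positivity, fun s hs t ht => ?_⟩
  have iteratedDeriv_sub_const : ∀ k, 0 < k →
      iteratedDeriv k (fun u => γ u - γ t) = iteratedDeriv k γ := fun k hk => by
    obtain ⟨j, rfl⟩ := Nat.exists_eq_add_of_le' hk
    simp only [iteratedDeriv_succ', deriv_sub_const_fun]
  refine abs_inner_le_mul_abs_sub_pow (f := fun u => γ u - γ t) ht (hγ.sub contDiff_const)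
    (fun k hk => ?_) (fun u hu => ?_) hs
  · rcases k.eq_zero_or_pos with rfl | hk₀
    · simp
    · rw [iteratedDeriv_sub_const k hk₀, h.inner_eq_zero t ht k hk₀ hk]
  · rw [iteratedDeriv_sub_const n hn]
    exact (abs_real_inner_le_norm _ _).trans
      (mul_le_mul (norm_deriv_le u hu) (norm_e_le t ht) (norm_nonneg _) hCγ.le)

theorem exists_half_le_inner (h : IsOsculatingConormal n γ e S) (hγ : ContDiff ℝ n γ)
    (hS : IsCompact S) : ∃ δ > 0, ∀ t ∈ S, ∀ u ∈ S, |u - t| ≤ δ →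
      1 / 2 ≤ ⟪iteratedDeriv n γ u, e t⟫ := by
  obtain ⟨C, hC, norm_e_le⟩ := exists_pos_norm_le_of_continuousOn hS h.continuousOn
  have uniformContinuousOn := hS.uniformContinuousOn_of_continuous
    (hγ.continuous_iteratedDeriv n le_rfl).continuousOn
  obtain ⟨δ, hδ, close⟩ := Metric.uniformContinuousOn_iff_le.1 uniformContinuousOn
    (1 / (2 * C)) (by positivity)
  refine ⟨δ, hδ, fun t ht u hu hut => ?_⟩
  have inner_sub_le : |⟪iteratedDeriv n γ u - iteratedDeriv n γ t, e t⟫| ≤ 1 / 2 := calc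
    _ ≤ ‖iteratedDeriv n γ u - iteratedDeriv n γ t‖ * ‖e t‖ := abs_real_inner_le_norm _ _
    _ ≤ 1 / (2 * C) * C := by
      rw [← dist_eq_norm]
      gcongr
      · exact close u hu t ht hut
      · exact norm_e_le t ht
    _ = 1 / 2 := by field_simp
  rw [inner_sub_left, h.inner_eq_one t ht] at inner_sub_le
  linarith [(abs_le.1 inner_sub_le).1]

theorem half_mul_sub_le {s t : ℝ} (h : IsOsculatingConormal n γ e (Icc a b)) (hn : 2 ≤ n)
    (hγ : ContDiff ℝ n γ) (hs : s ∈ Icc a b) (ht : t ∈ Icc a b) (hts : t ≤ s)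
    (half_le : ∀ u ∈ Icc t s, 1 / 2 ≤ ⟪iteratedDeriv n γ u, e t⟫) :
    1 / 2 * (s - t) ≤ ‖iteratedDeriv (n - 1) γ s‖ * ‖e s - e t‖ := by
  have hasDerivAt : ∀ u, HasDerivAt (fun u => ⟪iteratedDeriv (n - 1) γ u, e t⟫)
      ⟪iteratedDeriv n γ u, e t⟫ u := by
    obtain ⟨m, rfl⟩ := Nat.exists_eq_add_of_le' (one_le_two.trans hn)
    exact hasDerivAt_inner_iteratedDeriv (by exact_mod_cast hγ) (e t)
  have mean_value := (convex_Icc t s).mul_sub_le_image_sub_of_le_deriv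
    (fun u _ => (hasDerivAt u).continuousAt.continuousWithinAt)
    (fun u _ => (hasDerivAt u).differentiableAt.differentiableWithinAt)
    (fun u hu => by rw [(hasDerivAt u).deriv]; exact half_le u (interior_subset hu))
    t (left_mem_Icc.2 hts) s (right_mem_Icc.2 hts) hts
  have vanish : ∀ u ∈ Icc a b, ⟪iteratedDeriv (n - 1) γ u, e u⟫ = 0 := fun u hu =>
    h.inner_eq_zero u hu (n - 1) (by lia) (by lia)
  calc 1 / 2 * (s - t) ≤ ⟪iteratedDeriv (n - 1) γ s, e t⟫ - ⟪iteratedDeriv (n - 1) γ t, e t⟫ :=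
        mean_value
    _ = ⟪iteratedDeriv (n - 1) γ s, e t - e s⟫ := by
      rw [vanish t ht, inner_sub_right, vanish s hs]
    _ ≤ ‖iteratedDeriv (n - 1) γ s‖ * ‖e t - e s‖ := real_inner_le_norm _ _
    _ = _ := by rw [norm_sub_rev]

theorem exists_mul_abs_sub_le_norm_sub (h : IsOsculatingConormal n γ e (Icc a b)) (hn : 2 ≤ n)
    (hγ : ContDiff ℝ n γ) : ∃ c > 0, ∃ δ > 0, ∀ s ∈ Icc a b, ∀ t ∈ Icc a b, |s - t| ≤ δ →
      c * |s - t| ≤ ‖e s - e t‖ := by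
  obtain ⟨δ, hδ, half_le⟩ := h.exists_half_le_inner hγ isCompact_Icc
  obtain ⟨C, hC, norm_le⟩ := exists_pos_norm_le_of_continuousOn (isCompact_Icc (a := a) (b := b))
    (hγ.continuous_iteratedDeriv (n - 1) (by exact_mod_cast n.sub_le 1)).continuousOn
  refine ⟨1 / (2 * C), by positivity, δ, hδ, fun s hs t ht hst => ?_⟩
  wlog hts : t ≤ s generalizing s t
  · simpa only [abs_sub_comm s t, norm_sub_rev (e s)] using
      this t ht s hs (by rwa [abs_sub_comm]) (le_of_not_ge hts)
  rw [abs_of_nonneg (sub_nonneg.2 hts)] at hst ⊢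
  have half_mul_le : 1 / 2 * (s - t) ≤ C * ‖e s - e t‖ :=
    (h.half_mul_sub_le hn hγ hs ht hts fun u hu => half_le t ht u
      (Icc_subset_Icc ht.1 hs.2 hu) (by rw [abs_of_nonneg] <;> linarith [hu.1, hu.2])).trans
      (by gcongr; exact norm_le s hs)
  calc 1 / (2 * C) * (s - t) = (1 / 2 * (s - t)) / C := by field_simp
    _ ≤ ‖e s - e t‖ := (div_le_iff₀' hC).2 half_mul_le

end IsOsculatingConormal

end OsculatingConormal

section NonDegenerate

variable {n : ℕ} {γ : ℝ → Euc n} {S : Set ℝ}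

theorem NonDeg.det_ne_zero (hnd : NonDeg γ S) {s : ℝ} (hs : s ∈ S) :
    (Matrix.of fun i j : Fin n => iteratedDeriv ((j : ℕ) + 1) γ s i).det ≠ 0 := by
  obtain ⟨c₀, hc₀, le_det⟩ := hnd
  exact abs_pos.1 (hc₀.trans_le (le_det s hs))

theorem NonDeg.deriv_ne_zero (hnd : NonDeg γ S) (hn : 0 < n) {s : ℝ} (hs : s ∈ S) :
    deriv γ s ≠ 0 := fun deriv_eq_zero =>
  hnd.det_ne_zero hs <| Matrix.det_eq_zero_of_column_eq_zero ⟨0, hn⟩ fun i => by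
    simp [deriv_eq_zero]

theorem NonDeg.exists_isOsculatingConormal (hnd : NonDeg γ S) (hn : 0 < n) (hγ : ContDiff ℝ n γ) :
    ∃ e, IsOsculatingConormal n γ e S := by
  set M : ℝ → Matrix (Fin n) (Fin n) ℝ := fun s =>
    Matrix.of fun i j : Fin n => iteratedDeriv ((j : ℕ) + 1) γ s i with hM
  have continuous_M : Continuous M := continuous_matrix fun i j => by
    have := hγ.continuous_iteratedDeriv (j + 1) (by exact_mod_cast j.is_lt)
    simp only [hM, Matrix.of_apply]
    fun_prop
  let last : Fin n := ⟨n - 1, by lia⟩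
  let e : ℝ → Euc n := fun t => WithLp.toLp 2 ((M t)⁻¹ last)
  have inner_e : ∀ t ∈ S, ∀ j : Fin n,
      ⟪iteratedDeriv ((j : ℕ) + 1) γ t, e t⟫ = if last = j then 1 else 0 := fun t ht j => by
    have inv_mul := congrFun₂
      (Matrix.nonsing_inv_mul (M t) (isUnit_iff_ne_zero.2 (hnd.det_ne_zero ht))) last j
    rw [Matrix.mul_apply, Matrix.one_apply] at inv_mul
    simpa [PiLp.inner_apply, e, hM] using inv_mul
  refine ⟨e, ?_, fun t ht k hk hkn => ?_, fun t ht => ?_⟩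
  · refine (PiLp.continuous_toLp 2 _).comp_continuousOn (continuousOn_pi.2 fun i => ?_)
    simp_rw [Matrix.inv_def, Matrix.smul_apply, Ring.inverse_eq_inv', smul_eq_mul]
    exact (continuous_M.matrix_det.continuousOn.inv₀ fun s hs => hnd.det_ne_zero hs).mul
      (continuous_M.matrix_adjugate.matrix_elem last i).continuousOn
  · have inner_eq := inner_e t ht ⟨k - 1, by lia⟩
    rwa [Fin.val_mk, Nat.sub_add_cancel hk, if_neg (by simp only [last, Fin.mk.injEq]; lia)]
      at inner_eq
  · have inner_eq := inner_e t ht last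
    rwa [if_pos rfl, Nat.sub_add_cancel hn] at inner_eq

end NonDegenerate

section PacketFormEstimates

theorem abs_rpow_sub_one_le {x α : ℝ} (hx : 0 ≤ x) (hα : 0 ≤ α) (hα₁ : α ≤ 1) :
    |x ^ α - 1| ≤ |x - 1| := by
  rcases le_total 1 x with one_le | le_one
  · have one_le_rpow := Real.one_le_rpow one_le hα
    have rpow_le := Real.rpow_le_rpow_of_exponent_le one_le hα₁
    rw [Real.rpow_one] at rpow_le
    rw [abs_of_nonneg (by linarith), abs_of_nonneg (by linarith)]
    linarith
  · have rpow_le_one := Real.rpow_le_one hx le_one hα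
    have le_rpow := Real.self_le_rpow_of_le_one hx le_one hα₁
    rw [abs_of_nonpos (by linarith), abs_of_nonpos (by linarith)]
    linarith

theorem abs_sqrt_one_add_sq_sub_le {x y : ℝ} (hx : 0 ≤ x) (hy : 0 ≤ y) :
    |√(1 + x ^ 2) - √(1 + y ^ 2)| ≤ |x - y| := by
  have le_sqrt : ∀ z : ℝ, z ≤ √(1 + z ^ 2) := fun z => Real.le_sqrt_of_sq_le (by linarith)
  refine le_of_mul_le_mul_right ?_ (by positivity : 0 < √(1 + x ^ 2) + √(1 + y ^ 2))
  calc |√(1 + x ^ 2) - √(1 + y ^ 2)| * (√(1 + x ^ 2) + √(1 + y ^ 2))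
      = |√(1 + x ^ 2) ^ 2 - √(1 + y ^ 2) ^ 2| := by
        rw [sq_sub_sq, abs_mul, abs_of_nonneg (by positivity : 0 ≤ √(1 + x ^ 2) + √(1 + y ^ 2)),
          mul_comm]
    _ = |x - y| * (x + y) := by
        rw [Real.sq_sqrt (by positivity), Real.sq_sqrt (by positivity), add_sub_add_left_eq_sub,
          sq_sub_sq, abs_mul, abs_of_nonneg (add_nonneg hx hy), mul_comm]
    _ ≤ |x - y| * (√(1 + x ^ 2) + √(1 + y ^ 2)) := by
        gcongr
        exacts [le_sqrt x, le_sqrt y]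

variable {V : Type*} [NormedAddCommGroup V]

theorem besselWeight_eq_sqrt_rpow (α : ℝ) (ξ : V) : besselWeight α ξ = √(1 + ‖ξ‖ ^ 2) ^ α := by
  rw [besselWeight, Real.sqrt_eq_rpow, ← Real.rpow_mul (by positivity), one_div_mul_eq_div]

theorem abs_besselWeight_sub_le {α : ℝ} (hα : 0 ≤ α) (hα₁ : α ≤ 1) (ξ : V) {ξ₀ : V}
    (hξ₀ : ξ₀ ≠ 0) :
    |besselWeight α ξ - besselWeight α ξ₀| ≤ besselWeight α ξ₀ * (‖ξ - ξ₀‖ / ‖ξ₀‖) := by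
  have norm_pos : 0 < ‖ξ₀‖ := norm_pos_iff.2 hξ₀
  simp only [besselWeight_eq_sqrt_rpow]
  set u := √(1 + ‖ξ‖ ^ 2)
  set v := √(1 + ‖ξ₀‖ ^ 2)
  have u_nonneg : 0 ≤ u := Real.sqrt_nonneg _
  have norm_le : ‖ξ₀‖ ≤ v := Real.le_sqrt_of_sq_le (by linarith)
  have v_pos : 0 < v := norm_pos.trans_le norm_le
  have sub_le : |u - v| ≤ ‖ξ - ξ₀‖ :=
    (abs_sqrt_one_add_sq_sub_le (norm_nonneg _) (norm_nonneg _)).trans (abs_norm_sub_norm_le _ _)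
  have factor : u ^ α - v ^ α = v ^ α * ((u / v) ^ α - 1) := by
    rw [Real.div_rpow u_nonneg v_pos.le, mul_sub, mul_one, mul_div_cancel₀ _ (by positivity)]
  calc |u ^ α - v ^ α| = v ^ α * |(u / v) ^ α - 1| := by
        rw [factor, abs_mul, abs_of_pos (by positivity)]
    _ ≤ v ^ α * |u / v - 1| :=
        mul_le_mul_of_nonneg_left (abs_rpow_sub_one_le (by positivity) hα hα₁) (by positivity)
    _ = v ^ α * (|u - v| / v) := by
        rw [div_sub_one v_pos.ne', abs_div, abs_of_pos v_pos]
    _ ≤ v ^ α * (‖ξ - ξ₀‖ / ‖ξ₀‖) := by gcongr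

theorem norm_sub_mul_freqGauss_le {N : ℝ} (hN : 0 < N) (η ξ : V) :
    ‖ξ - η‖ * freqGauss N η ξ ≤ N := by
  rw [freqGauss, Real.exp_neg, ← div_eq_mul_inv, div_le_iff₀ (Real.exp_pos _)]
  set r := ‖ξ - η‖
  calc r ≤ N * (π / N ^ 2 * r ^ 2 + 1) := by
        rw [show N * (π / N ^ 2 * r ^ 2 + 1) = (π * r ^ 2 + N ^ 2) / N by field_simp,
          le_div_iff₀ hN]
        nlinarith [sq_nonneg (r - N), Real.pi_gt_three, sq_nonneg r]
    _ ≤ N * Real.exp (π / N ^ 2 * r ^ 2) := by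
        gcongr
        exact Real.add_one_le_exp _

theorem freqGauss_mul_freqGauss_le (N : ℝ) (ξ₀ η ξ : V) :
    freqGauss N ξ₀ ξ * freqGauss N η ξ ≤ freqGauss (2 * N) η ξ₀ * freqGauss (2 * N) ξ₀ ξ ^ 2 := by
  rw [freqGauss_sq]
  simp only [freqGauss, ← Real.exp_add]
  refine Real.exp_le_exp.2 ?_
  set r := ‖ξ - ξ₀‖
  set r' := ‖ξ - η‖
  have triangle : ‖ξ₀ - η‖ ≤ r + r' := by
    simpa [r, norm_sub_rev ξ ξ₀] using norm_add_le (ξ₀ - ξ) (ξ - η)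
  have sq_le : ‖ξ₀ - η‖ ^ 2 + 2 * r ^ 2 ≤ 4 * (r ^ 2 + r' ^ 2) := by
    nlinarith [pow_le_pow_left₀ (norm_nonneg _) triangle 2, sq_nonneg (r - r'), sq_nonneg r']
  calc -(π / N ^ 2 * r ^ 2) + -(π / N ^ 2 * r' ^ 2)
      = -(π / (2 * N) ^ 2 * (4 * (r ^ 2 + r' ^ 2))) := by ring
    _ ≤ -(π / (2 * N) ^ 2 * (‖ξ₀ - η‖ ^ 2 + 2 * r ^ 2)) := by gcongr
    _ = _ := by ring

variable [InnerProductSpace ℝ V] [FiniteDimensional ℝ V] [MeasurableSpace V] [BorelSpace V]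

theorem integrable_freqGauss {N : ℝ} (hN : 0 < N) (η : V) : Integrable (freqGauss N η) :=
  integrable_exp_neg_mul_norm_sub_sq (by positivity) η

theorem integral_freqGauss {N : ℝ} (hN : 0 < N) (η : V) :
    ∫ ξ, freqGauss N η ξ = N ^ finrank ℝ V := by
  calc ∫ ξ, freqGauss N η ξ = ∫ ξ : V, Real.exp (-(π / N ^ 2) * ‖ξ‖ ^ 2) := by
        rw [← integral_sub_right_eq_self (fun ξ : V => Real.exp (-(π / N ^ 2) * ‖ξ‖ ^ 2)) η]
        simp only [freqGauss, neg_mul]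
    _ = (N ^ (2 : ℝ)) ^ ((finrank ℝ V : ℝ) / 2) := by
        rw [GaussianFourier.integral_rexp_neg_mul_sq_norm (by positivity),
          div_div_cancel₀ Real.pi_ne_zero, Real.rpow_two]
    _ = N ^ finrank ℝ V := by
        rw [← Real.rpow_mul hN.le, mul_div_cancel₀ _ two_ne_zero, Real.rpow_natCast]

variable {γ : ℝ → V} {χ : ℝ → ℝ} {α N : ℝ}

theorem norm_packetForm_sub_le (hγ : Continuous γ) (hχ : Integrable χ) (hα : 0 ≤ α) (hα₁ : α ≤ 1)
    (hN : 0 < N) (t : ℝ) {ξ₀ : V} (hξ₀ : ξ₀ ≠ 0) :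
    ‖packetForm N α γ χ t ξ₀ ξ₀ - besselWeight α ξ₀ * packetForm N 0 γ χ t ξ₀ ξ₀‖ ≤
      besselWeight α ξ₀ * ((∫ s, |χ s|) * (N ^ (finrank ℝ V + 1) / ‖ξ₀‖)) := by
  set X := ∫ s, |χ s|
  have : 0 ≤ X := integral_nonneg fun s => abs_nonneg _
  have weight_pos := besselWeight_pos α ξ₀
  have pointwise : ∀ ξ, ‖packetSymbol N α γ χ t ξ₀ ξ * (freqGauss N ξ₀ ξ : ℂ) -
      besselWeight α ξ₀ * (packetSymbol N 0 γ χ t ξ₀ ξ * (freqGauss N ξ₀ ξ : ℂ))‖ ≤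
      besselWeight α ξ₀ * (X * (N / ‖ξ₀‖)) * freqGauss N ξ₀ ξ := fun ξ => by
    have G_pos := freqGauss_pos N ξ₀ ξ
    set G := freqGauss N ξ₀ ξ
    calc _ = ‖((besselWeight α ξ - besselWeight α ξ₀ : ℝ) : ℂ) *
            (packetSymbol N 0 γ χ t ξ₀ ξ * (G : ℂ))‖ := by
          simp only [packetSymbol, besselWeight_zero]
          push_cast
          ring_nf
      _ = |besselWeight α ξ - besselWeight α ξ₀| * (‖packetSymbol N 0 γ χ t ξ₀ ξ‖ * G) := by
          rw [norm_mul, norm_mul, Complex.norm_real, Complex.norm_real, Real.norm_eq_abs,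
            Real.norm_of_nonneg G_pos.le]
      _ ≤ besselWeight α ξ₀ * (‖ξ - ξ₀‖ / ‖ξ₀‖) * (X * G * G) := by
          gcongr
          · exact abs_besselWeight_sub_le hα hα₁ ξ hξ₀
          · simpa using norm_packetSymbol_le N 0 γ χ t ξ₀ ξ
      _ = besselWeight α ξ₀ * (X * (‖ξ - ξ₀‖ * G / ‖ξ₀‖)) * G := by ring
      _ ≤ _ := by
          gcongr
          exact norm_sub_mul_freqGauss_le hN ξ₀ ξ
  simp only [packetForm]
  rw [← integral_const_mul, ← integral_sub (integrable_packetSymbol_mul_freqGauss hγ hχ hN hα ..)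
    ((integrable_packetSymbol_mul_freqGauss hγ hχ hN le_rfl ..).const_mul _)]
  refine (norm_integral_le_of_norm_le ((integrable_freqGauss hN ξ₀).const_mul _)
    (.of_forall pointwise)).trans_eq ?_
  rw [integral_const_mul, integral_freqGauss hN]
  ring

theorem norm_packetForm_le (hα : 0 ≤ α) (hα₁ : α ≤ 1) (hN : 0 < N) (t : ℝ) (ξ₀ η : V) :
    ‖packetForm N α γ χ t ξ₀ η‖ ≤
      (∫ s, |χ s|) * (1 + ‖ξ₀‖) * (1 + 2 * N) * (2 * N) ^ finrank ℝ V *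
        freqGauss (2 * N) η ξ₀ := by
  set X := ∫ s, |χ s|
  have : 0 ≤ X := integral_nonneg fun s => abs_nonneg _
  set D := freqGauss (2 * N) η ξ₀
  have D_pos : 0 < D := freqGauss_pos _ _ _
  have pointwise : ∀ ξ, ‖packetSymbol N α γ χ t ξ₀ ξ * (freqGauss N η ξ : ℂ)‖ ≤
      X * (1 + ‖ξ₀‖) * (1 + 2 * N) * D * freqGauss (2 * N) ξ₀ ξ := fun ξ => by
    have η_pos := freqGauss_pos N η ξ
    have g_pos := freqGauss_pos (2 * N) ξ₀ ξ
    set r := ‖ξ - ξ₀‖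
    have hr₀ : 0 ≤ r := norm_nonneg _
    set g := freqGauss (2 * N) ξ₀ ξ
    have weight_le : besselWeight α ξ ≤ (1 + ‖ξ₀‖) * (1 + r) := by
      have le_one_add := besselWeight_le_one_add_norm_pow (j := 1) hα (by simpa using hα₁) ξ
      have triangle : ‖ξ‖ ≤ ‖ξ₀‖ + r := by simpa using norm_add_le ξ₀ (ξ - ξ₀)
      nlinarith [mul_nonneg (norm_nonneg ξ₀) hr₀]
    have absorb : (1 + r) * g ≤ 1 + 2 * N := by
      linarith [norm_sub_mul_freqGauss_le (by positivity : 0 < 2 * N) ξ₀ ξ,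
        freqGauss_le_one (2 * N) ξ₀ ξ]
    calc _ = ‖packetSymbol N α γ χ t ξ₀ ξ‖ * freqGauss N η ξ := by
          rw [norm_mul, Complex.norm_real, Real.norm_of_nonneg η_pos.le]
      _ ≤ X * (besselWeight α ξ * freqGauss N ξ₀ ξ) * freqGauss N η ξ := by
          gcongr
          exact norm_packetSymbol_le N α γ χ t ξ₀ ξ
      _ = X * besselWeight α ξ * (freqGauss N ξ₀ ξ * freqGauss N η ξ) := by ring
      _ ≤ X * ((1 + ‖ξ₀‖) * (1 + r)) * (D * g ^ 2) := by
          have := (besselWeight_pos α ξ).le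
          have product_pos := mul_pos (freqGauss_pos N ξ₀ ξ) η_pos
          have product_le := freqGauss_mul_freqGauss_le N ξ₀ η ξ
          exact mul_le_mul (by gcongr) product_le product_pos.le (by positivity)
      _ = X * (1 + ‖ξ₀‖) * ((1 + r) * g) * D * g := by ring
      _ ≤ _ := by gcongr
  refine (norm_integral_le_of_norm_le ((integrable_freqGauss (by positivity) ξ₀).const_mul _)
    (.of_forall pointwise)).trans_eq ?_
  rw [integral_const_mul, integral_freqGauss (by positivity)]
  ring

end PacketFormEstimates

section DiagonalTerm

theorem one_sub_abs_le_cos (x : ℝ) : 1 - |x| ≤ Real.cos x := by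
  rcases le_total |x| 2 with abs_le | le_abs
  · nlinarith [Real.one_sub_sq_div_two_le_cos (x := x), sq_abs x, abs_nonneg x]
  · linarith [Real.neg_one_le_cos x]

theorem sub_two_pi_mul_le_cos_mul {θ E F : ℝ} (hE : 0 ≤ E) (h : |θ| * E ≤ F) :
    E - 2 * π * F ≤ Real.cos (2 * π * θ) * E :=
  calc E - 2 * π * F ≤ E - 2 * π * (|θ| * E) := by gcongr
    _ = (1 - |2 * π * θ|) * E := by rw [abs_mul, abs_of_pos Real.two_pi_pos]; ring
    _ ≤ Real.cos (2 * π * θ) * E := by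
        gcongr
        exact one_sub_abs_le_cos _

variable {V : Type*} [NormedAddCommGroup V] [InnerProductSpace ℝ V]
variable {γ e : ℝ → V} {χ : ℝ → ℝ} {S : Set ℝ} {c₁ B : ℝ} {m : ℕ}

-- Half of the Gaussian decay absorbs the polynomial growth `(N|s - t|) ^ m` of the phase.
theorem exists_abs_inner_mul_exp_le (hc₁ : 0 < c₁)
    (lower_lipschitz : ∀ s ∈ S, ∀ t ∈ S, c₁ * |s - t| ≤ ‖γ s - γ t‖) (hB : 0 < B)
    (flat : ∀ s ∈ S, ∀ t ∈ S, |⟪γ s - γ t, e t⟫| ≤ B * |s - t| ^ m) :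
    ∃ C > 0, ∀ N > 0, ∀ ε ≥ 0, ∀ s ∈ S, ∀ t ∈ S,
      |⟪γ s - γ t, (ε * N ^ m) • e t⟫| * Real.exp (-(π * N ^ 2 / 2 * ‖γ s - γ t‖ ^ 2)) ≤
        ε * C * Real.exp (-(π * (N / √2) ^ 2 / 2 * ‖γ s - γ t‖ ^ 2)) := by
  obtain ⟨C, hC⟩ := exists_one_add_pow_mul_exp_neg_mul_sq_le
    (by positivity : 0 < π * c₁ ^ 2 / 4) m
  have C_pos : 0 < C := by simpa using (by positivity : (0 : ℝ) < _).trans_le (hC 0 le_rfl)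
  refine ⟨B * C, by positivity, fun N hN ε hε s hs t ht => ?_⟩
  set E := Real.exp (-(π * (N / √2) ^ 2 / 2 * ‖γ s - γ t‖ ^ 2)) with hE
  have exp_eq_mul_self : Real.exp (-(π * N ^ 2 / 2 * ‖γ s - γ t‖ ^ 2)) = E * E := by
    rw [hE, ← Real.exp_add, div_pow, Real.sq_sqrt zero_le_two]
    ring_nf
  have E_le : E ≤ Real.exp (-(π * c₁ ^ 2 / 4 * (N * |s - t|) ^ 2)) := by
    have sq_le := pow_le_pow_left₀ (by positivity) (lower_lipschitz s hs t ht) 2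
    rw [hE, Real.exp_le_exp, neg_le_neg_iff, div_pow, Real.sq_sqrt zero_le_two]
    calc π * c₁ ^ 2 / 4 * (N * |s - t|) ^ 2 = π * (N ^ 2 / 2) / 2 * (c₁ * |s - t|) ^ 2 := by ring
      _ ≤ _ := by gcongr
  have growth_mul_E_le : (N * |s - t|) ^ m * E ≤ C :=
    calc (N * |s - t|) ^ m * E
        ≤ (1 + N * |s - t|) ^ m * Real.exp (-(π * c₁ ^ 2 / 4 * (N * |s - t|) ^ 2)) := by
          gcongr
          linarith
      _ ≤ C := hC _ (by positivity)
  rw [inner_smul_right, abs_mul, abs_of_nonneg (by positivity : 0 ≤ ε * N ^ m), exp_eq_mul_self]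
  calc ε * N ^ m * |⟪γ s - γ t, e t⟫| * (E * E) ≤ ε * N ^ m * (B * |s - t| ^ m) * (E * E) := by
        gcongr
        exact flat s hs t ht
    _ = ε * B * ((N * |s - t|) ^ m * E) * E := by ring
    _ ≤ ε * B * C * E := by gcongr
    _ = ε * (B * C) * E := by ring

theorem integrable_mul_cos_mul_exp (hγ : Continuous γ) (hχ : Integrable χ) (N t : ℝ) (ξ₀ : V) :
    Integrable fun s => χ s * (Real.cos (2 * π * ⟪γ s - γ t, ξ₀⟫) *
      Real.exp (-(π * N ^ 2 / 2 * ‖γ s - γ t‖ ^ 2))) := by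
  have rearrange : ∀ s, χ s * (Real.cos (2 * π * ⟪γ s - γ t, ξ₀⟫) *
      Real.exp (-(π * N ^ 2 / 2 * ‖γ s - γ t‖ ^ 2))) =
      χ s * Real.exp (-(π * N ^ 2 / 2 * ‖γ s - γ t‖ ^ 2)) *
        Real.cos (2 * π * ⟪γ s - γ t, ξ₀⟫) := fun s => by ring
  simp only [rearrange]
  exact (integrable_kernelMass hγ hχ N t).mul_bdd (c := 1)
    (Continuous.aestronglyMeasurable (by fun_prop)) (.of_forall fun s => Real.abs_cos_le_one _)

variable [FiniteDimensional ℝ V] [MeasurableSpace V] [BorelSpace V]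

theorem re_packetForm_zero_self (hγ : Continuous γ) (hχ : Integrable χ) {N : ℝ} (hN : 0 < N)
    (t : ℝ) (ξ₀ : V) :
    (packetForm N 0 γ χ t ξ₀ ξ₀).re = (1 / 2 : ℝ) ^ ((finrank ℝ V : ℝ) / 2) * N ^ finrank ℝ V *
      ∫ s, χ s * (Real.cos (2 * π * ⟪γ s - γ t, ξ₀⟫) *
        Real.exp (-(π * N ^ 2 / 2 * ‖γ s - γ t‖ ^ 2))) := by
  set scale := (N ^ 2 / 2) ^ ((finrank ℝ V : ℝ) / 2)
  have integrable : Integrable fun s => (χ s : ℂ) * (𝐞 (-⟪γ s - γ t, ξ₀⟫) *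
      ((scale * Real.exp (-(π * N ^ 2 / 2 * ‖γ s - γ t‖ ^ 2)) : ℝ) : ℂ)) := by
    have modulated : Integrable fun s =>
        (𝐞 (-⟪γ s - γ t, ξ₀⟫) : ℂ) * (scale *
          ((χ s * Real.exp (-(π * N ^ 2 / 2 * ‖γ s - γ t‖ ^ 2)) : ℝ) : ℂ)) :=
      ((integrable_kernelMass hγ hχ N t).ofReal.const_mul _).bdd_mul (c := 1)
        (Continuous.aestronglyMeasurable (by fun_prop)) (.of_forall fun s => (Circle.norm_coe _).le)
    refine modulated.congr (.of_forall fun s => ?_)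
    push_cast
    ring
  rw [packetForm_zero_self hγ hχ hN, ← RCLike.re_eq_complex_re, ← integral_re integrable,
    ← sq_div_two_rpow_half _ hN.le, ← integral_const_mul]
  congr 1 with s
  rw [RCLike.re_eq_complex_re, Complex.re_ofReal_mul, Complex.re_mul_ofReal,
    Real.fourierChar_apply, Complex.exp_ofReal_mul_I_re, mul_neg, Real.cos_neg]
  ring

theorem exists_le_re_packetForm_zero (hγ : Continuous γ) (hχ : Integrable χ)
    (nonneg : ∀ s, 0 ≤ χ s) (support_subset : χ.support ⊆ S) {K : ℝ} (hK : ∀ s, χ s ≤ K)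
    (hc₁ : 0 < c₁) (lower_lipschitz : ∀ s ∈ S, ∀ t ∈ S, c₁ * |s - t| ≤ ‖γ s - γ t‖) (hB : 0 < B)
    (flat : ∀ s ∈ S, ∀ t ∈ S, |⟪γ s - γ t, e t⟫| ≤ B * |s - t| ^ m) :
    ∃ C ≥ 0, ∀ N > 0, ∀ ε ≥ 0, ∀ t ∈ S,
      (1 / 2 : ℝ) ^ ((finrank ℝ V : ℝ) / 2) * N ^ finrank ℝ V *
          (kernelMass N γ χ t - ε * (C / N)) ≤
        (packetForm N 0 γ χ t ((ε * N ^ m) • e t) ((ε * N ^ m) • e t)).re := by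
  have hK₀ : 0 ≤ K := (nonneg 0).trans (hK 0)
  obtain ⟨C, C_pos, phase_le⟩ := exists_abs_inner_mul_exp_le hc₁ lower_lipschitz hB flat
  refine ⟨2 * π * C * (K * (√2 / c₁) * √2), by positivity, fun N hN ε hε t ht => ?_⟩
  rw [re_packetForm_zero_self hγ hχ hN]
  refine mul_le_mul_of_nonneg_left ?_ (by positivity)
  set kernel : ℝ → ℝ → ℝ := fun M s => χ s * Real.exp (-(π * M ^ 2 / 2 * ‖γ s - γ t‖ ^ 2))
  have pointwise : ∀ s, kernel N s - 2 * π * (ε * C) * kernel (N / √2) s ≤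
      χ s * (Real.cos (2 * π * ⟪γ s - γ t, (ε * N ^ m) • e t⟫) *
        Real.exp (-(π * N ^ 2 / 2 * ‖γ s - γ t‖ ^ 2))) := fun s => by
    by_cases hs : χ s = 0
    · simp [kernel, hs]
    calc kernel N s - 2 * π * (ε * C) * kernel (N / √2) s
        = χ s * (Real.exp (-(π * N ^ 2 / 2 * ‖γ s - γ t‖ ^ 2)) -
            2 * π * (ε * C * Real.exp (-(π * (N / √2) ^ 2 / 2 * ‖γ s - γ t‖ ^ 2)))) := by
          simp only [kernel]
          ring
      _ ≤ _ := mul_le_mul_of_nonneg_left (sub_two_pi_mul_le_cos_mul (Real.exp_pos _).le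
          (phase_le N hN ε hε s (support_subset hs) t ht)) (nonneg s)
  calc kernelMass N γ χ t - ε * (2 * π * C * (K * (√2 / c₁) * √2) / N)
      = kernelMass N γ χ t - 2 * π * (ε * C) * (K * (√2 / c₁) / (N / √2)) := by
        field_simp
    _ ≤ kernelMass N γ χ t - 2 * π * (ε * C) * kernelMass (N / √2) γ χ t := by
        gcongr
        exact kernelMass_le_div hc₁ lower_lipschitz nonneg support_subset hK (by positivity) ht
    _ = ∫ s, (kernel N s - 2 * π * (ε * C) * kernel (N / √2) s) := by
        rw [integral_sub (integrable_kernelMass hγ hχ N t)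
          ((integrable_kernelMass hγ hχ (N / √2) t).const_mul _), integral_const_mul]
        rfl
    _ ≤ _ := integral_mono ((integrable_kernelMass hγ hχ N t).sub
          ((integrable_kernelMass hγ hχ (N / √2) t).const_mul _))
          (integrable_mul_cos_mul_exp hγ hχ N t _) pointwise

end DiagonalTerm

section SeparatedFrequencies

theorem card_mul_sub_le_norm_sum_sum {ι : Type*} (s : Finset ι) (A : ι → ι → ℂ) {D O : ℝ}
    (hO : 0 ≤ O) (diagonal : ∀ ν ∈ s, D ≤ (A ν ν).re)
    (off_diagonal : ∀ μ ∈ s, ∀ ν ∈ s, μ ≠ ν → ‖A μ ν‖ ≤ O) :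
    s.card * D - (s.card : ℝ) ^ 2 * O ≤ ‖∑ μ ∈ s, ∑ ν ∈ s, A μ ν‖ := by
  classical
  have row_ge : ∀ μ ∈ s, D - s.card * O ≤ ∑ ν ∈ s, (A μ ν).re := fun μ hμ =>
    calc D - s.card * O = ∑ ν ∈ s, ((if μ = ν then D else 0) - O) := by
          rw [Finset.sum_sub_distrib, Finset.sum_ite_eq, if_pos hμ, Finset.sum_const,
            nsmul_eq_mul]
      _ ≤ ∑ ν ∈ s, (A μ ν).re := Finset.sum_le_sum fun ν hν => by
          split_ifs with h
          · subst h
            linarith [diagonal μ hμ]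
          · linarith [neg_le_of_abs_le
              ((Complex.abs_re_le_norm _).trans (off_diagonal μ hμ ν hν h))]
  calc s.card * D - (s.card : ℝ) ^ 2 * O = ∑ _μ ∈ s, (D - s.card * O) := by
        rw [Finset.sum_const, nsmul_eq_mul]
        ring
    _ ≤ ∑ μ ∈ s, ∑ ν ∈ s, (A μ ν).re := Finset.sum_le_sum row_ge
    _ = (∑ μ ∈ s, ∑ ν ∈ s, A μ ν).re := by simp only [Complex.re_sum]
    _ ≤ _ := Complex.re_le_norm _

variable {V : Type*} [NormedAddCommGroup V]

theorem sum_sum_freqGauss_le {ι : Type*} (s : Finset ι) (N : ℝ) (η : ι → V) {G : ℝ} (hG : 0 ≤ G)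
    (off_diagonal : ∀ μ ∈ s, ∀ ν ∈ s, μ ≠ ν → freqGauss N (η μ) (η ν) ≤ G) :
    ∑ μ ∈ s, ∑ ν ∈ s, freqGauss N (η μ) (η ν) ≤ s.card * (1 + s.card * G) := by
  classical
  calc ∑ μ ∈ s, ∑ ν ∈ s, freqGauss N (η μ) (η ν)
      ≤ ∑ μ ∈ s, ∑ ν ∈ s, ((if μ = ν then 1 else 0) + G) := by
        refine Finset.sum_le_sum fun μ hμ => Finset.sum_le_sum fun ν hν => ?_
        split_ifs with h
        · linarith [freqGauss_le_one N (η μ) (η ν)]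
        · linarith [off_diagonal μ hμ ν hν h]
    _ = ∑ _μ ∈ s, (1 + s.card * G) := Finset.sum_congr rfl fun μ hμ => by
        rw [Finset.sum_add_distrib, Finset.sum_ite_eq, if_pos hμ, Finset.sum_const, nsmul_eq_mul]
    _ = s.card * (1 + s.card * G) := by rw [Finset.sum_const, nsmul_eq_mul]

theorem freqGauss_mul_le_exp {k κ N : ℝ} (hκ : 0 ≤ κ) (hN : 0 < N) {η ξ : V}
    (separated : κ * N ^ 2 ≤ ‖ξ - η‖) :
    freqGauss (k * N) η ξ ≤ Real.exp (-(π * κ ^ 2 / k ^ 2 * N ^ 2)) := by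
  rw [freqGauss, Real.exp_le_exp, neg_le_neg_iff]
  calc π * κ ^ 2 / k ^ 2 * N ^ 2 = π / (k * N) ^ 2 * (κ * N ^ 2) ^ 2 := by field_simp
    _ ≤ _ := by gcongr

theorem exists_sum_sum_freqGauss_le_of_separated {κ : ℝ} (hκ : 0 < κ) :
    ∃ C > 0, ∀ N : ℕ, 0 < N → ∀ η : ℕ → V,
      (∀ μ < N, ∀ ν < N, μ ≠ ν → κ * (N : ℝ) ^ 2 ≤ ‖η μ - η ν‖) →
      ∑ μ ∈ Finset.range N, ∑ ν ∈ Finset.range N, freqGauss N (η μ) (η ν) ≤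
        (C * (N : ℝ) ^ (1 / 2 : ℝ)) ^ 2 := by
  obtain ⟨C, hC⟩ := exists_one_add_pow_mul_exp_neg_mul_sq_le
    (by positivity : 0 < π * κ ^ 2 / 1 ^ 2) 1
  have C_pos : 0 < C := by simpa using (by positivity : (0 : ℝ) < _).trans_le (hC 0 le_rfl)
  refine ⟨√(1 + C), by positivity, fun N hN η separated => ?_⟩
  have hN' : (0 : ℝ) < N := Nat.cast_pos.2 hN
  set G := Real.exp (-(π * κ ^ 2 / 1 ^ 2 * (N : ℝ) ^ 2))
  have G_pos : 0 < G := Real.exp_pos _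
  have off_diagonal : ∀ μ ∈ Finset.range N, ∀ ν ∈ Finset.range N, μ ≠ ν →
      freqGauss N (η μ) (η ν) ≤ G := fun μ hμ ν hν h => by
    simpa only [one_mul] using freqGauss_mul_le_exp (k := 1) hκ.le hN'
      (separated ν (Finset.mem_range.1 hν) μ (Finset.mem_range.1 hμ) h.symm)
  calc ∑ μ ∈ Finset.range N, ∑ ν ∈ Finset.range N, freqGauss N (η μ) (η ν)
      ≤ N * (1 + N * G) := by
        simpa only [Finset.card_range] using sum_sum_freqGauss_le _ N η G_pos.le off_diagonal
    _ ≤ N * (1 + C) := by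
        gcongr
        calc N * G ≤ (1 + (N : ℝ)) ^ 1 * G := by
              gcongr
              linarith
          _ ≤ C := hC N hN'.le
    _ = (√(1 + C) * (N : ℝ) ^ (1 / 2 : ℝ)) ^ 2 := by
        rw [mul_pow, Real.sq_sqrt (by positivity), ← Real.sqrt_eq_rpow, Real.sq_sqrt hN'.le,
          mul_comm]

theorem mul_sq_le_norm_smul_gridPoint_sub [NormedSpace ℝ V] {S : Set ℝ} {e : ℝ → V}
    {c d ε : ℝ} (hc : 0 ≤ c) (hd : 0 ≤ d) (hε : 0 ≤ ε)
    (separated : ∀ s ∈ S, ∀ t ∈ S, |s - t| ≤ d → c * |s - t| ≤ ‖e s - e t‖) {m : ℕ} (hm : 3 ≤ m)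
    {N : ℕ} {t₀ : ℝ} (grid_mem : ∀ ν < N, gridPoint t₀ d N ν ∈ S) {μ ν : ℕ} (hμ : μ < N)
    (hν : ν < N) (hμν : μ ≠ ν) :
    ε * c * d * (N : ℝ) ^ 2 ≤ ‖(ε * (N : ℝ) ^ m) • e (gridPoint t₀ d N μ) -
      (ε * (N : ℝ) ^ m) • e (gridPoint t₀ d N ν)‖ := by
  have hN : (1 : ℝ) ≤ N := by exact_mod_cast Nat.one_le_of_lt hμ
  have one_le_abs : (1 : ℝ) ≤ |(μ : ℝ) - ν| := by
    exact_mod_cast Int.one_le_abs (sub_ne_zero.2 (Nat.cast_injective.ne hμν) : (μ : ℤ) - ν ≠ 0)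
  have abs_le : |(μ : ℝ) - ν| ≤ N := by
    have hμ' : (μ : ℝ) ≤ N := by exact_mod_cast hμ.le
    have hν' : (ν : ℝ) ≤ N := by exact_mod_cast hν.le
    rw [_root_.abs_le]
    constructor <;> linarith [Nat.cast_nonneg (α := ℝ) μ, Nat.cast_nonneg (α := ℝ) ν]
  have spacing := abs_gridPoint_sub_gridPoint hd t₀ N μ ν
  have close : |gridPoint t₀ d N μ - gridPoint t₀ d N ν| ≤ d := by
    rw [spacing]
    calc |(μ : ℝ) - ν| * (d / N) ≤ N * (d / N) := by gcongr
      _ = d := mul_div_cancel₀ _ (by positivity)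
  rw [← smul_sub, norm_smul, Real.norm_of_nonneg (by positivity)]
  calc ε * c * d * (N : ℝ) ^ 2 = ε * (N : ℝ) ^ 3 * (c * (1 * (d / N))) := by field_simp
    _ ≤ ε * (N : ℝ) ^ m * (c * (|(μ : ℝ) - ν| * (d / N))) := by gcongr
    _ ≤ _ := by
        rw [← spacing]
        gcongr
        exact separated _ (grid_mem μ hμ) _ (grid_mem ν hν) close

variable [InnerProductSpace ℝ V] [FiniteDimensional ℝ V] [MeasurableSpace V] [BorelSpace V]
variable {γ e : ℝ → V} {χ : ℝ → ℝ} {α : ℝ}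

theorem exists_sq_mul_norm_packetForm_le_of_separated (hα : 0 ≤ α) (hα₁ : α ≤ 1) {κ R : ℝ}
    (hκ : 0 < κ) (hR : 0 ≤ R) (m : ℕ) :
    ∃ C, ∀ N > 0, ∀ (t : ℝ) (ξ₀ η : V), ‖ξ₀‖ ≤ R * N ^ m → κ * N ^ 2 ≤ ‖ξ₀ - η‖ →
      N ^ 2 * ‖packetForm N α γ χ t ξ₀ η‖ ≤ C := by
  set d := finrank ℝ V
  obtain ⟨C, hC⟩ := exists_one_add_pow_mul_exp_neg_mul_sq_le
    (by positivity : 0 < π * κ ^ 2 / 2 ^ 2) (2 + m + 1 + d)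
  set X := ∫ s, |χ s|
  have : 0 ≤ X := integral_nonneg fun s => abs_nonneg _
  refine ⟨X * (1 + R) * 2 * 2 ^ d * C, fun N hN t ξ₀ η norm_le separated => ?_⟩
  set G := Real.exp (-(π * κ ^ 2 / 2 ^ 2 * N ^ 2))
  have weight_le : 1 + R * N ^ m ≤ (1 + R) * (1 + N) ^ m := by
    have one_le : 1 ≤ (1 + N) ^ m := one_le_pow₀ (by linarith)
    have pow_le : R * N ^ m ≤ R * (1 + N) ^ m := by
      gcongr
      linarith
    linarith
  calc N ^ 2 * ‖packetForm N α γ χ t ξ₀ η‖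
      ≤ N ^ 2 * (X * (1 + ‖ξ₀‖) * (1 + 2 * N) * (2 * N) ^ d * freqGauss (2 * N) η ξ₀) := by
        gcongr
        exact norm_packetForm_le hα hα₁ hN t ξ₀ η
    _ ≤ (1 + N) ^ 2 * (X * ((1 + R) * (1 + N) ^ m) * (2 * (1 + N)) * (2 * (1 + N)) ^ d * G) := by
        have gauss_pos := freqGauss_pos (2 * N) η ξ₀
        gcongr
        · linarith
        · linarith
        · linarith
        · linarith
        · exact freqGauss_mul_le_exp hκ.le hN separated
    _ = X * (1 + R) * 2 * 2 ^ d * ((1 + N) ^ (2 + m + 1 + d) * G) := by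
        rw [mul_pow]
        ring
    _ ≤ _ := by
        gcongr
        exact hC N hN.le

theorem besselWeight_mul_le_re_packetForm (hγ : Continuous γ) (hχ : Integrable χ) (hα : 0 ≤ α)
    (hα₁ : α ≤ 1) {N : ℝ} (hN : 0 < N) (t : ℝ) {ξ₀ : V} (hξ₀ : ξ₀ ≠ 0) :
    besselWeight α ξ₀ * ((packetForm N 0 γ χ t ξ₀ ξ₀).re -
      (∫ s, |χ s|) * (N ^ (finrank ℝ V + 1) / ‖ξ₀‖)) ≤ (packetForm N α γ χ t ξ₀ ξ₀).re := by
  have error_ge := neg_le_of_abs_le ((Complex.abs_re_le_norm _).trans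
    (norm_packetForm_sub_le hγ hχ hα hα₁ hN t hξ₀))
  rw [Complex.sub_re, Complex.re_ofReal_mul] at error_ge
  linarith

theorem eventually_mul_pow_succ_div_le (X : ℝ) {ρ c : ℝ} (hρ : 0 < ρ) (hc : 0 < c) (d : ℕ) {m : ℕ}
    (hm : 3 ≤ m) :
    ∀ᶠ N : ℝ in Filter.atTop, ∀ x, ρ * N ^ m ≤ x → X * (N ^ (d + 1) / x) ≤ c * (N ^ d / N) := by
  filter_upwards [Filter.eventually_ge_atTop 1, Filter.eventually_ge_atTop (X / (c * ρ))]
    with N hN₁ hN₂ x hx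
  have hN : 0 < N := by linarith
  have le_x : ρ * N ^ 3 ≤ x := (by gcongr : ρ * N ^ 3 ≤ ρ * N ^ m).trans hx
  have x_pos : 0 < x := lt_of_lt_of_le (by positivity) le_x
  rw [div_le_iff₀ (by positivity)] at hN₂
  calc X * (N ^ (d + 1) / x) ≤ N * (c * ρ) * (N ^ (d + 1) / (ρ * N ^ 3)) := by gcongr
    _ = c * (N ^ d / N) := by
        rw [pow_succ]
        field_simp

variable {S : Set ℝ} {K c₁ B c : ℝ} {m : ℕ}

theorem exists_mul_le_re_packetForm_zero (hγ : Continuous γ) (hχ : Integrable χ)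
    (nonneg : ∀ s, 0 ≤ χ s) (support_subset : χ.support ⊆ S) (hK : ∀ s, χ s ≤ K) (hc₁ : 0 < c₁)
    (lower_lipschitz : ∀ s ∈ S, ∀ t ∈ S, c₁ * |s - t| ≤ ‖γ s - γ t‖) (hB : 0 < B)
    (flat : ∀ s ∈ S, ∀ t ∈ S, |⟪γ s - γ t, e t⟫| ≤ B * |s - t| ^ m) (hc : 0 < c) :
    ∃ ε > 0, ∃ c' > 0, ∀ N > 0, ∀ t ∈ S, c / N ≤ kernelMass N γ χ t →
      c' * (N ^ finrank ℝ V / N) ≤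
        (packetForm N 0 γ χ t ((ε * N ^ m) • e t) ((ε * N ^ m) • e t)).re := by
  obtain ⟨C, hC, re_ge⟩ := exists_le_re_packetForm_zero hγ hχ nonneg support_subset hK hc₁
    lower_lipschitz hB flat
  set d := finrank ℝ V
  set g : ℝ := (1 / 2) ^ ((d : ℝ) / 2)
  set ε := c / (2 * (C + 1))
  have ε_mul_le : ε * C ≤ c / 2 := by
    rw [div_mul_eq_mul_div, div_le_iff₀ (by positivity)]
    nlinarith
  refine ⟨ε, by positivity, g * (c / 2), by positivity, fun N hN t ht mass_ge => ?_⟩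
  calc g * (c / 2) * (N ^ d / N) = g * N ^ d * (c / N - c / 2 / N) := by ring
    _ ≤ g * N ^ d * (kernelMass N γ χ t - ε * C / N) := by gcongr
    _ ≤ _ := by
        rw [mul_div_assoc]
        exact re_ge N hN ε (by positivity) t ht

theorem exists_mul_rpow_le_re_packetForm (hγ : Continuous γ) (hχ : Integrable χ)
    (nonneg : ∀ s, 0 ≤ χ s) (support_subset : χ.support ⊆ S) (hK : ∀ s, χ s ≤ K) (hc₁ : 0 < c₁)
    (lower_lipschitz : ∀ s ∈ S, ∀ t ∈ S, c₁ * |s - t| ≤ ‖γ s - γ t‖) (hB : 0 < B)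
    (flat : ∀ s ∈ S, ∀ t ∈ S, |⟪γ s - γ t, e t⟫| ≤ B * |s - t| ^ m) (hm : 3 ≤ m) {r : ℝ}
    (hr : 0 < r) (le_norm : ∀ t ∈ S, r ≤ ‖e t‖) (hα : 0 ≤ α) (hα₁ : α ≤ 1) (hc : 0 < c) :
    ∃ ε > 0, ∃ c' > 0, ∀ᶠ N : ℝ in Filter.atTop, ∀ t ∈ S, c / N ≤ kernelMass N γ χ t →
      c' * N ^ ((finrank ℝ V : ℝ) - 1 + m * α) ≤
        (packetForm N α γ χ t ((ε * N ^ m) • e t) ((ε * N ^ m) • e t)).re := by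
  obtain ⟨ε, hε, c', hc', main_ge⟩ := exists_mul_le_re_packetForm_zero hγ hχ nonneg support_subset
    hK hc₁ lower_lipschitz hB flat hc
  set d := finrank ℝ V
  set X := ∫ s, |χ s|
  refine ⟨ε, hε, (ε * r) ^ α * (c' / 2), by positivity, ?_⟩
  filter_upwards [Filter.eventually_gt_atTop 0, eventually_mul_pow_succ_div_le X
    (by positivity : 0 < ε * r) (half_pos hc') d hm] with N hN error_le t ht mass_ge
  set ξ₀ := (ε * N ^ m) • e t with hξ₀
  have norm_ge : ε * r * N ^ m ≤ ‖ξ₀‖ := by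
    rw [hξ₀, norm_smul, Real.norm_of_nonneg (by positivity), mul_right_comm]
    gcongr
    exact le_norm t ht
  have ξ₀_ne : ξ₀ ≠ 0 := norm_pos_iff.1 (lt_of_lt_of_le (by positivity) norm_ge)
  calc (ε * r) ^ α * (c' / 2) * N ^ ((d : ℝ) - 1 + m * α)
      = (ε * r * N ^ m) ^ α * (c' / 2 * (N ^ d / N)) := by
        rw [Real.mul_rpow (by positivity : 0 ≤ ε * r) (by positivity), Real.rpow_add hN,
          Real.rpow_mul hN.le, Real.rpow_natCast, Real.rpow_sub_one hN.ne', Real.rpow_natCast]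
        ring
    _ ≤ besselWeight α ξ₀ * ((packetForm N 0 γ χ t ξ₀ ξ₀).re - X * (N ^ (d + 1) / ‖ξ₀‖)) := by
        have weight_nonneg := (besselWeight_pos α ξ₀).le
        gcongr
        · exact rpow_le_besselWeight hα (by positivity) norm_ge
        · linarith [main_ge N hN t ht mass_ge, error_le ‖ξ₀‖ norm_ge]
    _ ≤ _ := besselWeight_mul_le_re_packetForm hγ hχ hα hα₁ hN t ξ₀_ne

end SeparatedFrequencies

section FlatConormal

theorem eventually_half_mul_rpow_le_norm_sum_sum {A : ℕ → ℕ → ℕ → ℂ} {x c B : ℝ} (hx : 0 < x)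
    (hc : 0 < c)
    (diagonal : ∀ᶠ N : ℕ in Filter.atTop, ∀ ν < N, c * (N : ℝ) ^ (x - 1) ≤ (A N ν ν).re)
    (off_diagonal : ∀ᶠ N : ℕ in Filter.atTop, ∀ μ < N, ∀ ν < N, μ ≠ ν →
      (N : ℝ) ^ 2 * ‖A N μ ν‖ ≤ B) :
    ∀ᶠ N : ℕ in Filter.atTop, c / 2 * (N : ℝ) ^ x ≤
      ‖∑ μ ∈ Finset.range N, ∑ ν ∈ Finset.range N, A N μ ν‖ := by
  have large : ∀ᶠ N : ℕ in Filter.atTop, |B| ≤ c / 2 * (N : ℝ) ^ x :=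
    (((tendsto_rpow_atTop hx).comp tendsto_natCast_atTop_atTop).const_mul_atTop
      (half_pos hc)).eventually_ge_atTop _
  filter_upwards [diagonal, off_diagonal, large, Filter.eventually_gt_atTop 0]
    with N diagonal off_diagonal large hN
  have hN' : (0 : ℝ) < N := Nat.cast_pos.2 hN
  calc c / 2 * (N : ℝ) ^ x ≤ N * (c * (N : ℝ) ^ (x - 1)) - (N : ℝ) ^ 2 * (|B| / (N : ℝ) ^ 2) := by
        rw [Real.rpow_sub_one hN'.ne', mul_div_cancel₀ _ (by positivity), mul_left_comm,
          mul_div_cancel₀ _ hN'.ne']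
        linarith
    _ ≤ _ := by
        have sum_ge := card_mul_sub_le_norm_sum_sum (Finset.range N) (A N)
          (by positivity : 0 ≤ |B| / (N : ℝ) ^ 2)
          (fun ν hν => diagonal ν (Finset.mem_range.1 hν)) fun μ hμ ν hν h => by
            rw [le_div_iff₀' (by positivity)]
            exact (off_diagonal μ (Finset.mem_range.1 hμ) ν (Finset.mem_range.1 hν) h).trans
              (le_abs_self B)
        rwa [Finset.card_range] at sum_ge

/-- A field `e` of conormals along the curve `γ`, bounded above and away from zero, with contact of
order `m` and with values separated in proportion to the distance of the parameters, up to distance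
`d`. These are the properties that make `e` a direction field of bad frequencies for averages over
`γ`. -/
structure IsFlatConormal {V : Type*} [NormedAddCommGroup V] [InnerProductSpace ℝ V] (m : ℕ) (d : ℝ)
    (γ e : ℝ → V) (S : Set ℝ) : Prop where
  exists_abs_inner_sub_le : ∃ B > 0, ∀ s ∈ S, ∀ t ∈ S, |⟪γ s - γ t, e t⟫| ≤ B * |s - t| ^ m
  exists_le_norm : ∃ r > 0, ∀ t ∈ S, r ≤ ‖e t‖
  exists_norm_le : ∃ R > 0, ∀ t ∈ S, ‖e t‖ ≤ R
  exists_mul_abs_sub_le_norm_sub : ∃ c > 0, ∀ s ∈ S, ∀ t ∈ S, |s - t| ≤ d →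
    c * |s - t| ≤ ‖e s - e t‖

theorem IsOsculatingConormal.exists_isFlatConormal {V : Type*} [NormedAddCommGroup V]
    [InnerProductSpace ℝ V] {n : ℕ} {γ e : ℝ → V} {a b : ℝ}
    (h : IsOsculatingConormal n γ e (Icc a b)) (hn : 2 ≤ n) (hγ : ContDiff ℝ n γ) :
    ∃ δ > 0, ∀ d ≤ δ, IsFlatConormal n d γ e (Icc a b) := by
  obtain ⟨c, hc, δ, hδ, separated⟩ := h.exists_mul_abs_sub_le_norm_sub hn hγ
  exact ⟨δ, hδ, fun d hd =>
    { exists_abs_inner_sub_le := h.exists_abs_inner_sub_le (by lia) hγ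
      exists_le_norm := h.exists_le_norm hγ isCompact_Icc
      exists_norm_le := exists_pos_norm_le_of_continuousOn isCompact_Icc h.continuousOn
      exists_mul_abs_sub_le_norm_sub :=
        ⟨c, hc, fun s hs t ht hst => separated s hs t ht (hst.trans hd)⟩ }⟩

variable {n m : ℕ} {p : ℝ≥0∞} {α c₁ K d s₀ c : ℝ} {S : Set ℝ} {γ e : ℝ → Euc n} {χ : ℝ → ℝ}

theorem exists_eventually_mul_rpow_le_norm_sum_packetForm (hn : 0 < n) (hm : 3 ≤ m) (hα : 0 ≤ α)
    (hα₁ : α ≤ 1) (hγ : Continuous γ) (hχ : Integrable χ) (nonneg : ∀ s, 0 ≤ χ s)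
    (support_subset : χ.support ⊆ S) (hK : ∀ s, χ s ≤ K) (hc₁ : 0 < c₁)
    (lower_lipschitz : ∀ s ∈ S, ∀ t ∈ S, c₁ * |s - t| ≤ ‖γ s - γ t‖) (hd : 0 < d)
    (conormal : IsFlatConormal m d γ e S)
    (Icc_subset : Icc s₀ (s₀ + d) ⊆ S) (hc : 0 < c)
    (mass_ge : ∀ t ∈ Icc s₀ (s₀ + d), ∀ N ≥ 1, c / N ≤ kernelMass N γ χ t) :
    ∃ ε > 0, ∃ c' > 0, ∀ᶠ N : ℕ in Filter.atTop, c' * (N : ℝ) ^ ((n : ℝ) + m * α) ≤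
      ‖∑ μ ∈ Finset.range N, ∑ ν ∈ Finset.range N, packetForm N α γ χ (gridPoint s₀ d N ν)
        ((ε * (N : ℝ) ^ m) • e (gridPoint s₀ d N ν))
        ((ε * (N : ℝ) ^ m) • e (gridPoint s₀ d N μ))‖ := by
  obtain ⟨B, hB, flat⟩ := conormal.exists_abs_inner_sub_le
  obtain ⟨r, hr, le_norm⟩ := conormal.exists_le_norm
  obtain ⟨R, hR, norm_le⟩ := conormal.exists_norm_le
  obtain ⟨cₛ, hcₛ, separated⟩ := conormal.exists_mul_abs_sub_le_norm_sub
  obtain ⟨ε, hε, c', hc', diagonal⟩ := exists_mul_rpow_le_re_packetForm hγ hχ nonneg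
    support_subset hK hc₁ lower_lipschitz hB flat hm hr le_norm hα hα₁ hc
  obtain ⟨C, off_diagonal⟩ := exists_sq_mul_norm_packetForm_le_of_separated (γ := γ) (χ := χ) hα hα₁
    (by positivity : 0 < ε * cₛ * d) (by positivity : 0 ≤ ε * R) m
  have grid_mem (N ν : ℕ) (hν : ν < N) : gridPoint s₀ d N ν ∈ Icc s₀ (s₀ + d) := by
    simpa only [add_zero] using
      gridPoint_add_mem_Icc (a := s₀) hd.le hν (left_mem_Icc.2 (by positivity : 0 ≤ d / N))
  refine ⟨ε, hε, c' / 2, half_pos hc', eventually_half_mul_rpow_le_norm_sum_sum (B := C)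
    (by positivity) hc' ?_ ?_⟩
  · filter_upwards [tendsto_natCast_atTop_atTop.eventually diagonal,
      Filter.eventually_ge_atTop 1] with N diagonal hN ν hν
    have re_ge := diagonal _ (Icc_subset (grid_mem N ν hν))
      (mass_ge _ (grid_mem N ν hν) N (by exact_mod_cast hN))
    rwa [finrank_euclideanSpace_fin, sub_add_eq_add_sub] at re_ge
  · filter_upwards [Filter.eventually_gt_atTop 0] with N hN μ hμ ν hν hμν
    refine off_diagonal N (Nat.cast_pos.2 hN) _ _ _ ?_ (mul_sq_le_norm_smul_gridPoint_sub hcₛ.le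
      hd.le hε.le separated hm (fun k hk => Icc_subset (grid_mem N k hk)) hν hμ hμν.symm)
    rw [norm_smul, Real.norm_of_nonneg (by positivity), mul_right_comm]
    gcongr
    exact norm_le _ (Icc_subset (grid_mem N ν hν))

theorem IsFlatConormal.mul_le_half_add_one_div (hn : 0 < n) (hm : 3 ≤ m) (hp : 2 ≤ p) (hα : 0 ≤ α)
    (hα₁ : α ≤ 1) (hγ : Continuous γ) (hχ : Integrable χ) (nonneg : ∀ s, 0 ≤ χ s)
    (support_subset : χ.support ⊆ S) (hK : ∀ s, χ s ≤ K) (hc₁ : 0 < c₁)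
    (lower_lipschitz : ∀ s ∈ S, ∀ t ∈ S, c₁ * |s - t| ≤ ‖γ s - γ t‖) (hd : 0 < d)
    (conormal : IsFlatConormal m d γ e S)
    (Icc_subset : Icc s₀ (s₀ + d) ⊆ S) (hc : 0 < c)
    (mass_ge : ∀ t ∈ Icc s₀ (s₀ + d), ∀ N ≥ 1, c / N ≤ kernelMass N γ χ t)
    (bounded : ∃ C, AveragingBound p α γ χ C) : m * α ≤ 1 / 2 + (1 / p).toReal := by
  obtain ⟨cₛ, hcₛ, separated⟩ := conormal.exists_mul_abs_sub_le_norm_sub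
  obtain ⟨ε, hε, c', hc', lower⟩ := exists_eventually_mul_rpow_le_norm_sum_packetForm hn hm hα hα₁
    hγ hχ nonneg support_subset hK hc₁ lower_lipschitz hd conormal
    Icc_subset hc mass_ge
  obtain ⟨C, -, upper⟩ := exists_norm_sum_packetForm_gridPoint_le hp hα hγ hχ bounded hc₁
    lower_lipschitz hd one_pos
  obtain ⟨C', hC', almost_orthogonal⟩ := exists_sum_sum_freqGauss_le_of_separated (V := Euc n)
    (by positivity : 0 < ε * cₛ * d)
  suffices exponents : (n : ℝ) + m * α ≤ n + (1 / p).toReal + 1 / 2 by linarith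
  refine le_of_eventually_mul_rpow_le (C := C * C') hc' ?_
  filter_upwards [lower, Filter.eventually_gt_atTop 0] with N lower hN
  have grid_mem (ν : ℕ) (hν : ν < N) : gridPoint s₀ d N ν ∈ S := by
    simpa only [add_zero] using Icc_subset
      (gridPoint_add_mem_Icc (a := s₀) hd.le hν (left_mem_Icc.2 (by positivity : 0 ≤ d / N)))
  set ξ : ℕ → Euc n := fun ν => (ε * (N : ℝ) ^ m) • e (gridPoint s₀ d N ν)
  have upper := upper N hN s₀ grid_mem (fun _ => 1) (fun _ => by simp) ξ ξ (Finset.range N)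
    (C' * (N : ℝ) ^ (1 / 2 : ℝ)) (by positivity) (almost_orthogonal N hN ξ fun μ hμ ν hν hμν =>
      mul_sq_le_norm_smul_gridPoint_sub hcₛ.le hd.le hε.le separated hm grid_mem hμ hν hμν)
  simp only [Complex.ofReal_one, one_mul] at upper
  calc c' * (N : ℝ) ^ ((n : ℝ) + m * α)
      ≤ C * (N : ℝ) ^ ((n : ℝ) + (1 / p).toReal) * (C' * (N : ℝ) ^ (1 / 2 : ℝ)) := lower.trans upper
    _ = C * C' * (N : ℝ) ^ ((n : ℝ) + (1 / p).toReal + 1 / 2) := by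
        rw [Real.rpow_add (Nat.cast_pos.2 hN) _ (1 / 2)]
        ring

end FlatConormal

section NonDegenerateCurve

variable {n : ℕ} {p : ℝ≥0∞} {α a b c₁ : ℝ} {γ : ℝ → Euc n} {χ : ℝ → ℝ}

theorem NonDeg.mul_le_half_add_one_div (hnd : NonDeg γ (Icc a b)) (hn : 3 ≤ n) (hp : 2 ≤ p)
    (hα : 0 ≤ α) (hα₁ : α ≤ 1) (hγ : ContDiff ℝ n γ) (hc₁ : 0 < c₁)
    (lower_lipschitz : ∀ s ∈ Icc a b, ∀ t ∈ Icc a b, c₁ * |s - t| ≤ ‖γ s - γ t‖)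
    (hχ : Continuous χ) (support_subset : χ.support ⊆ Icc a b) (nonneg : ∀ s, 0 ≤ χ s)
    (ne_zero : χ ≠ 0) (bounded : ∃ C, AveragingBound p α γ χ C) :
    n * α ≤ 1 / 2 + (1 / p).toReal := by
  have compact_support : HasCompactSupport χ :=
    .of_support_subset_isCompact isCompact_Icc support_subset
  have hχi : Integrable χ := hχ.integrable_of_hasCompactSupport compact_support
  obtain ⟨K, hK⟩ := hχ.bounded_above_of_compact_support compact_support
  have hγ₁ : ContDiff ℝ 1 γ := hγ.of_le (by exact_mod_cast (by lia : 1 ≤ n))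
  obtain ⟨s₀, δ, hδ, κ, hκ, c, hc, lower⟩ :=
    exists_div_le_kernelMass hγ₁.locallyLipschitz hχ hχi nonneg ne_zero
  obtain ⟨e, osculating⟩ := hnd.exists_isOsculatingConormal (by lia) hγ
  obtain ⟨δ', hδ', flat⟩ := osculating.exists_isFlatConormal (by lia) hγ
  have subset : Icc s₀ (s₀ + min δ δ') ⊆ Icc s₀ (s₀ + δ) := by
    gcongr
    exact min_le_left δ δ'
  exact (flat (min δ δ') (min_le_right _ _)).mul_le_half_add_one_div (by lia) hn hp hα hα₁
    hγ.continuous hχi nonneg support_subset (fun s => (le_abs_self _).trans (hK s)) hc₁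
    lower_lipschitz (lt_min hδ hδ')
    (fun t ht => support_subset (hκ.trans_le (lower t (subset ht)).1).ne') hc
    (fun t ht => (lower t (subset ht)).2) bounded

theorem NonDeg.exists_mul_abs_sub_le_norm_sub (hnd : NonDeg γ (Icc a b)) (hn : 0 < n)
    (hγ : ContDiff ℝ n γ) (hinj : InjOn γ (Icc a b)) :
    ∃ c > 0, ∀ s ∈ Icc a b, ∀ t ∈ Icc a b, c * |s - t| ≤ ‖γ s - γ t‖ :=
  _root_.exists_mul_abs_sub_le_norm_sub isCompact_Icc
    (fun _ _ => hγ.contDiffAt.hasStrictDerivAt (by exact_mod_cast hn.ne'))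
    (fun _ hs => hnd.deriv_ne_zero hn hs) hinj

theorem one_div_toReal_le_half (hp : 2 ≤ p) : (1 / p).toReal ≤ 1 / 2 :=
  calc (1 / p).toReal ≤ (1 / 2 : ℝ≥0∞).toReal :=
        ENNReal.toReal_mono (by simp) (ENNReal.div_le_div_left hp 1)
    _ = 1 / 2 := by simp

theorem statement1_general (hn : 2 ≤ n) (hp : 2 ≤ p) (hα : 0 ≤ α) (hab : a < b)
    (hγ : ContDiff ℝ n γ) (hinj : InjOn γ (Icc a b)) (hnd : NonDeg γ (Icc a b))
    (hχ : Continuous χ) (support_subset : χ.support ⊆ Icc a b) (nonneg : ∀ s, 0 ≤ χ s)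
    (ne_zero : χ ≠ 0) (bounded : ∃ C, AveragingBound p α γ χ C) :
    α ≤ min ((1 / (n : ℝ)) * (1 / 2 + (1 / p).toReal)) (1 / p).toReal := by
  obtain ⟨c₁, hc₁, lower_lipschitz⟩ := hnd.exists_mul_abs_sub_le_norm_sub (by lia) hγ hinj
  have hγ₁ : ContDiff ℝ 1 γ := hγ.of_le (by exact_mod_cast (by lia : 1 ≤ n))
  have le_one_div : α ≤ (1 / p).toReal := le_one_div_of_averagingBound hn hp hα hab
    hγ₁.locallyLipschitz hc₁ lower_lipschitz hχ support_subset nonneg ne_zero bounded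
  have le_half := one_div_toReal_le_half hp
  refine le_min ?_ le_one_div
  rw [one_div_mul_eq_div, le_div_iff₀' (by positivity)]
  obtain rfl | three_le : n = 2 ∨ 3 ≤ n := by lia
  · push_cast
    linarith
  · exact hnd.mul_le_half_add_one_div three_le hp hα (by linarith) hγ hc₁ lower_lipschitz hχ
      support_subset nonneg ne_zero bounded

end NonDegenerateCurve

/-- necessary conditions for `L^p → L^p_α` boundedness of the averaging
operator over a non-degenerate curve: `α ≤ min{(1/n)(1/2 + 1/p), 1/p}`. -/
theorem statement1
    (n : ℕ) (hn : 2 ≤ n)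
    (p : ℝ≥0∞) (hp : 2 ≤ p)
    (α : ℝ) (hα : 0 ≤ α)
    (a b : ℝ) (hab : a < b)
    (γ : ℝ → Euc n) (hγ : ContDiff ℝ (⊤ : ℕ∞) γ)
    (hinj : Set.InjOn γ (Set.Icc a b))
    (hreg : ∀ s ∈ Set.Icc a b, deriv γ s ≠ 0)
    (hnd : NonDeg γ (Set.Icc a b))
    (χ : ℝ → ℝ) (hχ : ContDiff ℝ (⊤ : ℕ∞) χ) (hχc : HasCompactSupport χ)
    (hχs : tsupport χ ⊆ Set.Ioo a b)
    (hχpos : ∀ s, 0 ≤ χ s) (hχne : χ ≠ 0)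
    (hbdd : ∃ C : ℝ, ∀ f : SchwartzMap (Euc n) ℂ,
      sobolevNorm p α (avgOp γ χ ⇑f) ≤ ENNReal.ofReal C * eLpNorm (⇑f) p volume) :
    α ≤ min ((1 / (n : ℝ)) * (1 / 2 + (1 / p).toReal)) (1 / p).toReal :=
  statement1_general hn hp hα hab (hγ.of_le (by exact_mod_cast le_top)) hinj hnd hχ.continuous
    ((subset_tsupport χ).trans (hχs.trans Ioo_subset_Icc_self)) hχpos hχne hbdd
end
end

section
/- Let n ≥ 1, let γ : I₀ → ℝⁿ be a smooth curve on a compact interval I₀, let χ ∈ C_c^∞(ℝ) be supported in I₀, let a ∈ C_c^∞(ℝⁿ × ℝ) have s-support contained in I₀, let σ > 0, λ₁, …, λ_n > 0, and let {v₁, …, v_n} be an orthonormal basis of ℝⁿ. Assume: (i) the set {s ∈ ℝ : (ξ; s) ∈ supp a for some ξ ∈ ℝⁿ} has Lebesgue measure at most σ; (ii) every ξ in the ξ-projection of supp a satisfies |⟨ξ, v_j⟩| ≤ λ_j for 1 ≤ j ≤ n; (iii) for every N ∈ ℕ₀ and every 1 ≤ j ≤ n there is a constant C_N with |∇_{v_j}^N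 a(ξ; s)| ≤ C_N λ_j^{−N} for all (ξ; s), where ∇_{v_j} is the directional derivative in ξ along v_j. Then ‖m[a]‖_{M^∞(ℝⁿ)} ≤ C σ, i.e. ‖𝓕^{−1}(m[a] · 𝓕f)‖_{L^∞(ℝⁿ)} ≤ C σ ‖f‖_{L^∞(ℝⁿ)} for every Schwartz function f, where C depends only on n, sup|χ| and finitely many of the constants C_N. -/
open MeasureTheory Set
open scoped FourierTransform InnerProductSpace ENNReal

noncomputable section

/-- The multiplier `m[a](ξ) = ∫ e^{−i⟨γ(s), ξ⟩} a(ξ; s) χ(s) ds`. -/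
def symbMult {n : ℕ} (γ : ℝ → Euc n) (χ : ℝ → ℝ) (a : Euc n → ℝ → ℂ) (ξ : Euc n) : ℂ :=
  ∫ s : ℝ, Complex.exp (-(⟪γ s, ξ⟫_ℝ : ℂ) * Complex.I) * a ξ s * (χ s : ℂ)

/-!
Exchanging the order of integration writes `𝓕⁻¹(m[a] · 𝓕 f)` as a superposition over `s`, with
weight `χ s`, of translates of `𝓕⁻¹(a(·; s) · 𝓕 f)`; only a set of parameters `s` of measure at most
`σ` contributes. For fixed `s` the multiplier `a(·; s)` acts by convolution with a reflection of
`𝓕 a(·; s)`, so its `M^∞` norm is at most `‖𝓕 a(·; s)‖_{L¹}`, and this is bounded independently of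
the `λ_j`: estimating the Fourier integrals of `a(·; s)` and of its derivatives of order `2n` along
each `v_j` by the volume `∏ 2λ_j` of the frequency box gives

  `|𝓕 a(x; s)| ≤ C (∏ 2λ_j) ∏ (1 + (2π λ_j ⟨x, v_j⟩)²)⁻¹`,

and the last product has integral exactly `∏ (2λ_j)⁻¹`.
-/

section DirectionalDerivative

variable {V E : Type*} [NormedAddCommGroup V] [NormedSpace ℝ V] [NormedAddCommGroup E]
  [NormedSpace ℝ E]

/-- The directional derivative `∇_w G`, as an operator on functions so that it can be iterated:
`(dirDeriv w)^[N]` is `∇_w^N`. -/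
def dirDeriv (w : V) (G : V → E) : V → E :=
  fun ζ => fderiv ℝ G ζ w

lemma contDiff_dirDeriv {N : ℕ} {g : V → E} (hg : ContDiff ℝ (N + 1 : ℕ) g) (w : V) :
    ContDiff ℝ N (dirDeriv w g) :=
  (hg.fderiv_right (by norm_cast)).clm_apply contDiff_const

lemma tsupport_iterate_dirDeriv_subset (w : V) (N : ℕ) (g : V → E) :
    tsupport ((dirDeriv w)^[N] g) ⊆ tsupport g := by
  induction N generalizing g with
  | zero => rfl
  | succ N ih =>
    exact (ih (dirDeriv w g)).trans (tsupport_fderiv_apply_subset ℝ w)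

end DirectionalDerivative

section FourierTransform

variable {V E : Type*} [NormedAddCommGroup V] [InnerProductSpace ℝ V] [MeasurableSpace V]
  [BorelSpace V] [FiniteDimensional ℝ V] [NormedAddCommGroup E] [NormedSpace ℂ E]

lemma fourier_fourierChar_inner_smul (g : V → E) (y z : V) :
    𝓕 (fun ξ => Real.fourierChar ⟪ξ, y⟫_ℝ • g ξ) z = 𝓕 g (z - y) := by
  simp only [Real.fourier_eq, smul_smul, ← AddChar.map_add_eq_mul, inner_sub_right]
  congr! 4
  ring

lemma fourierInv_smul_fourier_eq_integral_fourier_sub_smul [CompleteSpace E] {g : V → ℂ}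
    {f : V → E} (hg : Integrable g) (hf : Integrable f) (y : V) :
    𝓕⁻ (fun ξ => g ξ • 𝓕 f ξ) y = ∫ z, 𝓕 g (z - y) • f z := by
  have hmod : Integrable (fun ξ => Real.fourierChar ⟪ξ, y⟫_ℝ • g ξ) := by
    simpa using (Real.fourierIntegral_convergent_iff (-y)).2 hg
  have hswap := VectorFourier.integral_fourierIntegral_smul_eq_flip (μ := volume) (ν := volume)
    (L := innerₗ V) Real.continuous_fourierChar continuous_inner hmod hf
  rw [flip_innerₗ] at hswap
  calc 𝓕⁻ (fun ξ => g ξ • 𝓕 f ξ) y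
      = ∫ ξ, (Real.fourierChar ⟪ξ, y⟫_ℝ • g ξ) • 𝓕 f ξ := by
        simp only [Real.fourierInv_eq, smul_assoc]
    _ = ∫ z, 𝓕 (fun ξ => Real.fourierChar ⟪ξ, y⟫_ℝ • g ξ) z • f z := hswap.symm
    _ = ∫ z, 𝓕 g (z - y) • f z := by simp only [fourier_fourierChar_inner_smul]

lemma continuous_fourier_of_integrable {f : V → E} (hf : Integrable f) : Continuous (𝓕 f) :=
  VectorFourier.fourierIntegral_continuous Real.continuous_fourierChar continuous_inner hf

lemma enorm_fourierInv_smul_fourier_le [CompleteSpace E] {g : V → ℂ} {f : V → E}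
    (hg : Integrable g) (hf : Integrable f) (y : V) :
    ‖𝓕⁻ (fun ξ => g ξ • 𝓕 f ξ) y‖ₑ ≤ eLpNorm (𝓕 g) 1 volume * eLpNorm f ⊤ volume := by
  rw [fourierInv_smul_fourier_eq_integral_fourier_sub_smul hg hf]
  have hcont : Continuous (𝓕 g) := continuous_fourier_of_integrable hg
  calc ‖∫ z, 𝓕 g (z - y) • f z‖ₑ
      ≤ ∫⁻ z, ‖𝓕 g (z - y)‖ₑ * ‖f z‖ₑ := by
        simpa only [enorm_smul] using
          enorm_integral_le_lintegral_enorm (fun z => 𝓕 g (z - y) • f z)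
    _ ≤ ∫⁻ z, ‖𝓕 g (z - y)‖ₑ * eLpNorm f ⊤ volume := by
        refine lintegral_mono_ae ?_
        filter_upwards [enorm_ae_le_eLpNormEssSup f volume] with z hz
        gcongr
        exact hz
    _ = eLpNorm (𝓕 g) 1 volume * eLpNorm f ⊤ volume := by
        rw [lintegral_sub_right_eq_self (fun z => ‖𝓕 g z‖ₑ * eLpNorm f ⊤ volume) y,
          lintegral_mul_const _ hcont.enorm.measurable, eLpNorm_one_eq_lintegral_enorm]

lemma norm_fourier_le_of_support_subset {g : V → E} {S : Set V} {A : ℝ}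
    (hS : volume S < ⊤) (hgS : Function.support g ⊆ S) (hA : ∀ ξ, ‖g ξ‖ ≤ A) (x : V) :
    ‖𝓕 g x‖ ≤ A * volume.real S := by
  rw [Real.fourier_eq, ← setIntegral_eq_integral_of_forall_compl_eq_zero (s := S)]
  · exact norm_setIntegral_le_of_norm_le_const hS fun ξ _ => by
      simpa only [Circle.norm_smul] using hA ξ
  · intro ξ hξ
    rw [Function.notMem_support.1 fun h => hξ (hgS h), smul_zero]

lemma fourier_dirDeriv {g : V → E} (hg : ContDiff ℝ 1 g) (hc : HasCompactSupport g) (w x : V) :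
    𝓕 (dirDeriv w g) x = (2 * Real.pi * Complex.I * ⟪x, w⟫_ℝ : ℂ) • 𝓕 g x := by
  have hfderiv : Continuous (fderiv ℝ g) := hg.continuous_fderiv one_ne_zero
  have hint : Integrable (fderiv ℝ g) :=
    hfderiv.integrable_of_hasCompactSupport (hc.fderiv ℝ)
  have happly : 𝓕 (dirDeriv w g) x = 𝓕 (fderiv ℝ g) x w :=
    (Real.fourier_continuousLinearMap_apply hint).symm
  rw [happly, Real.fourier_fderiv (hg.continuous.integrable_of_hasCompactSupport hc)
    (hg.differentiable one_ne_zero) hint]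
  simp [VectorFourier.fourierSMulRight_apply, innerSL_apply_apply ℝ, mul_smul]

lemma fourier_iterate_dirDeriv {N : ℕ} {g : V → E} (hg : ContDiff ℝ N g)
    (hc : HasCompactSupport g) (w x : V) :
    𝓕 ((dirDeriv w)^[N] g) x = (2 * Real.pi * Complex.I * ⟪x, w⟫_ℝ : ℂ) ^ N • 𝓕 g x := by
  induction N generalizing g with
  | zero => simp
  | succ N ih =>
    rw [Function.iterate_succ_apply, ih (contDiff_dirDeriv hg w) (hc.fderiv_apply ℝ w),
      fourier_dirDeriv (hg.of_le (by simp)) hc, smul_smul, ← pow_succ]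

end FourierTransform

section Box

variable {V ι : Type*} [NormedAddCommGroup V] [InnerProductSpace ℝ V] [Fintype ι]

/-- The box with centre `0` and half-side `lam j` in the direction `b j`; it is the frequency
support allowed for a symbol. -/
def innerBox (b : OrthonormalBasis ι ℝ V) (lam : ι → ℝ) : Set V :=
  {x | ∀ j, |⟪x, b j⟫_ℝ| ≤ lam j}

lemma ofLp_comp_repr (b : OrthonormalBasis ι ℝ V) :
    WithLp.ofLp ∘ b.repr = fun x j => ⟪x, b j⟫_ℝ := by
  ext x j
  simp only [Function.comp_apply, b.repr_apply_apply, real_inner_comm]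

lemma innerBox_eq_preimage_pi_Icc (b : OrthonormalBasis ι ℝ V) (lam : ι → ℝ) :
    innerBox b lam = (WithLp.ofLp ∘ b.repr) ⁻¹' univ.pi fun j => Icc (-lam j) (lam j) := by
  ext x
  simp only [innerBox, ofLp_comp_repr, mem_ofPred_eq, mem_preimage, mem_univ_pi, mem_Icc, abs_le]

lemma isCompact_innerBox (b : OrthonormalBasis ι ℝ V) (lam : ι → ℝ) :
    IsCompact (innerBox b lam) := by
  rw [innerBox_eq_preimage_pi_Icc]
  exact (b.repr.toHomeomorph.trans (PiLp.homeomorph 2 _)).isCompact_preimage.2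
    (isCompact_univ_pi fun _ => isCompact_Icc)

variable [MeasurableSpace V] [BorelSpace V] [FiniteDimensional ℝ V]

lemma measurePreserving_ofLp_comp_repr (b : OrthonormalBasis ι ℝ V) :
    MeasurePreserving (WithLp.ofLp ∘ b.repr) :=
  (PiLp.volume_preserving_ofLp ι).comp b.measurePreserving_repr

lemma volume_real_innerBox (b : OrthonormalBasis ι ℝ V) {lam : ι → ℝ} (hlam : ∀ j, 0 ≤ lam j) :
    volume.real (innerBox b lam) = ∏ j, 2 * lam j := by
  rw [innerBox_eq_preimage_pi_Icc, measureReal_def,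
    (measurePreserving_ofLp_comp_repr b).measure_preimage
      (MeasurableSet.univ_pi fun _ => measurableSet_Icc).nullMeasurableSet,
    volume_pi_pi, ENNReal.toReal_prod]
  refine Finset.prod_congr rfl fun j _ => ?_
  rw [← measureReal_def, Real.volume_real_Icc_of_le (neg_le_self (hlam j))]
  ring

lemma lintegral_ofReal_prod_comp_inner (b : OrthonormalBasis ι ℝ V) {φ : ι → ℝ → ℝ}
    (hφ : ∀ j, Integrable (φ j)) (hφ₀ : ∀ j t, 0 ≤ φ j t) :
    ∫⁻ x, ENNReal.ofReal (∏ j, φ j ⟪x, b j⟫_ℝ) = ENNReal.ofReal (∏ j, ∫ t, φ j t) := by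
  have hprod : Integrable fun y : ι → ℝ => ∏ j, φ j (y j) := Integrable.fintype_prod hφ
  have hcoord := measurePreserving_ofLp_comp_repr b
  have hmeas : AEMeasurable (fun y : ι → ℝ => ENNReal.ofReal (∏ j, φ j (y j)))
      (volume.map (WithLp.ofLp ∘ b.repr)) := by
    rw [hcoord.map_eq]
    exact hprod.aemeasurable.ennreal_ofReal
  calc ∫⁻ x, ENNReal.ofReal (∏ j, φ j ⟪x, b j⟫_ℝ)
      = ∫⁻ y : ι → ℝ, ENNReal.ofReal (∏ j, φ j (y j)) := by
        rw [← hcoord.map_eq, lintegral_map' hmeas hcoord.aemeasurable, ofLp_comp_repr]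
    _ = ENNReal.ofReal (∏ j, ∫ t, φ j t) := by
        rw [← ofReal_integral_eq_lintegral_ofReal hprod
            (.of_forall fun y => Finset.prod_nonneg fun j _ => hφ₀ j (y j)),
          integral_fintype_prod_volume_eq_prod]

lemma integral_inv_one_add_mul_sq (c : ℝ) : ∫ t : ℝ, (1 + (c * t) ^ 2)⁻¹ = Real.pi / |c| := by
  rw [Measure.integral_comp_mul_left (fun t : ℝ => (1 + t ^ 2)⁻¹), integral_univ_inv_one_add_sq,
    smul_eq_mul, abs_inv, mul_comm, div_eq_mul_inv]

lemma lintegral_ofReal_prod_inv_one_add_mul_inner_sq (b : OrthonormalBasis ι ℝ V) {c : ι → ℝ}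
    (hc : ∀ j, 0 < c j) :
    ∫⁻ x, ENNReal.ofReal (∏ j, (1 + (c j * ⟪x, b j⟫_ℝ) ^ 2)⁻¹) =
      ENNReal.ofReal (∏ j, Real.pi / c j) := by
  rw [lintegral_ofReal_prod_comp_inner b
    (fun j => integrable_inv_one_add_sq.comp_mul_left' (hc j).ne') fun j t => by positivity]
  simp only [integral_inv_one_add_mul_sq, abs_of_pos (hc _)]

end Box

lemma prod_one_add_le_two_pow_card_mul {ι : Type*} [Fintype ι] {u : ι → ℝ} (hu : ∀ i, 0 ≤ u i) :
    ∏ i, (1 + u i) ≤ 2 ^ Fintype.card ι * (1 + ∑ i, u i ^ Fintype.card ι) := by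
  rcases isEmpty_or_nonempty ι with _ | _
  · simp
  obtain ⟨j, hj⟩ := Finite.exists_max u
  calc ∏ i, (1 + u i)
      ≤ ∏ _i : ι, (1 + u j) :=
        Finset.prod_le_prod (fun i _ => by linarith [hu i]) fun i _ => by linarith [hj i]
    _ = (1 + u j) ^ Fintype.card ι := by rw [Finset.prod_const, Finset.card_univ]
    _ ≤ 2 ^ (Fintype.card ι - 1) * (1 ^ Fintype.card ι + u j ^ Fintype.card ι) :=
        add_pow_le zero_le_one (hu j) _
    _ ≤ 2 ^ Fintype.card ι * (1 + ∑ i, u i ^ Fintype.card ι) := by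
        have hsingle : u j ^ Fintype.card ι ≤ ∑ i, u i ^ Fintype.card ι :=
          Finset.single_le_sum (fun i _ => pow_nonneg (hu i) _) (Finset.mem_univ j)
        have := pow_nonneg (hu j) (Fintype.card ι)
        rw [one_pow]
        gcongr
        · exact one_le_two
        · exact Nat.sub_le _ _

section FourierDecay

variable {V E ι : Type*} [NormedAddCommGroup V] [InnerProductSpace ℝ V] [MeasurableSpace V]
  [BorelSpace V] [FiniteDimensional ℝ V] [NormedAddCommGroup E] [NormedSpace ℂ E] [Fintype ι]
  {b : OrthonormalBasis ι ℝ V} {lam : ι → ℝ} {g : V → E} {A₀ A : ℝ}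

lemma norm_fourier_le_of_support_subset_innerBox (hlam : ∀ j, 0 ≤ lam j)
    (hsupp : Function.support g ⊆ innerBox b lam) (hA : ∀ ξ, ‖g ξ‖ ≤ A) (x : V) :
    ‖𝓕 g x‖ ≤ A * ∏ j, 2 * lam j := by
  rw [← volume_real_innerBox b hlam]
  exact norm_fourier_le_of_support_subset (isCompact_innerBox b lam).measure_lt_top hsupp hA x

lemma pow_mul_norm_fourier_le_of_support_subset_innerBox {N : ℕ} (hlam : ∀ j, 0 < lam j)
    (hg : ContDiff ℝ N g) (hsupp : Function.support g ⊆ innerBox b lam) {j : ι}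
    (hA : ∀ ξ, ‖(dirDeriv (b j))^[N] g ξ‖ ≤ A * (lam j ^ N)⁻¹) (x : V) :
    |2 * Real.pi * lam j * ⟪x, b j⟫_ℝ| ^ N * ‖𝓕 g x‖ ≤ A * ∏ j, 2 * lam j := by
  have hbox := isCompact_innerBox b lam
  have hderiv_supp : Function.support ((dirDeriv (b j))^[N] g) ⊆ innerBox b lam :=
    (subset_tsupport _).trans <| (tsupport_iterate_dirDeriv_subset (b j) N g).trans <|
      closure_minimal hsupp hbox.isClosed
  have hderiv_fourier :
      ‖𝓕 ((dirDeriv (b j))^[N] g) x‖ = |2 * Real.pi * ⟪x, b j⟫_ℝ| ^ N * ‖𝓕 g x‖ := by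
    rw [fourier_iterate_dirDeriv hg (.of_support_subset_isCompact hbox hsupp), norm_smul, norm_pow]
    simp [abs_mul]
  calc |2 * Real.pi * lam j * ⟪x, b j⟫_ℝ| ^ N * ‖𝓕 g x‖
      = lam j ^ N * ‖𝓕 ((dirDeriv (b j))^[N] g) x‖ := by
        rw [hderiv_fourier, ← mul_assoc, ← mul_pow, ← abs_of_pos (hlam j), ← abs_mul,
          abs_of_pos (hlam j)]
        ring_nf
    _ ≤ lam j ^ N * (A * (lam j ^ N)⁻¹ * ∏ j, 2 * lam j) := by
        gcongr
        · exact pow_nonneg (hlam j).le N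
        · exact norm_fourier_le_of_support_subset_innerBox (fun j => (hlam j).le) hderiv_supp hA x
    _ = A * ∏ j, 2 * lam j := by
        have := (pow_pos (hlam j) N).ne'
        field_simp

lemma norm_fourier_le_prod_inv_one_add_sq (hlam : ∀ j, 0 < lam j)
    (hg : ContDiff ℝ (2 * Fintype.card ι : ℕ) g) (hsupp : Function.support g ⊆ innerBox b lam)
    (hA₀ : ∀ ξ, ‖g ξ‖ ≤ A₀)
    (hA : ∀ j ξ, ‖(dirDeriv (b j))^[2 * Fintype.card ι] g ξ‖ ≤
      A * (lam j ^ (2 * Fintype.card ι))⁻¹) (x : V) :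
    ‖𝓕 g x‖ ≤ 2 ^ Fintype.card ι * (A₀ + Fintype.card ι * A) * (∏ j, 2 * lam j) *
      ∏ j, (1 + (2 * Real.pi * lam j * ⟪x, b j⟫_ℝ) ^ 2)⁻¹ := by
  set d := Fintype.card ι
  set t : ι → ℝ := fun j => 2 * Real.pi * lam j * ⟪x, b j⟫_ℝ
  have hpow (j : ι) : (t j ^ 2) ^ d * ‖𝓕 g x‖ ≤ A * ∏ j, 2 * lam j := by
    rw [← pow_mul, ← (even_two_mul d).pow_abs]
    exact pow_mul_norm_fourier_le_of_support_subset_innerBox hlam hg hsupp (hA j) x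
  rw [Finset.prod_inv_distrib, ← div_eq_mul_inv,
    le_div_iff₀ (Finset.prod_pos fun j _ => by positivity)]
  calc ‖𝓕 g x‖ * ∏ j, (1 + t j ^ 2)
      ≤ ‖𝓕 g x‖ * (2 ^ d * (1 + ∑ j, (t j ^ 2) ^ d)) := by
        gcongr
        exact prod_one_add_le_two_pow_card_mul fun j => sq_nonneg (t j)
    _ = 2 ^ d * (‖𝓕 g x‖ + ∑ j, (t j ^ 2) ^ d * ‖𝓕 g x‖) := by
        rw [← Finset.sum_mul]
        ring
    _ ≤ 2 ^ d * (A₀ * (∏ j, 2 * lam j) + ∑ _j : ι, A * ∏ j, 2 * lam j) := by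
        refine mul_le_mul_of_nonneg_left (add_le_add ?_ (Finset.sum_le_sum fun j _ => hpow j))
          (by positivity)
        exact norm_fourier_le_of_support_subset_innerBox (fun j => (hlam j).le) hsupp hA₀ x
    _ = 2 ^ d * (A₀ + d * A) * ∏ j, 2 * lam j := by
        rw [Finset.sum_const, Finset.card_univ, nsmul_eq_mul]
        ring

lemma eLpNorm_fourier_one_le (hlam : ∀ j, 0 < lam j)
    (hg : ContDiff ℝ (2 * Fintype.card ι : ℕ) g) (hsupp : Function.support g ⊆ innerBox b lam)
    (hA₀ : ∀ ξ, ‖g ξ‖ ≤ A₀)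
    (hA : ∀ j ξ, ‖(dirDeriv (b j))^[2 * Fintype.card ι] g ξ‖ ≤
      A * (lam j ^ (2 * Fintype.card ι))⁻¹) :
    eLpNorm (𝓕 g) 1 volume ≤ ENNReal.ofReal (2 ^ Fintype.card ι * (A₀ + Fintype.card ι * A)) := by
  set B := 2 ^ Fintype.card ι * (A₀ + Fintype.card ι * A)
  have hπlam (j : ι) : 0 < 2 * Real.pi * lam j := mul_pos Real.two_pi_pos (hlam j)
  have hmajorant : ∏ j, Real.pi / (2 * Real.pi * lam j) = (∏ j, 2 * lam j)⁻¹ := by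
    rw [← Finset.prod_inv_distrib]
    refine Finset.prod_congr rfl fun j _ => ?_
    field_simp [Real.pi_ne_zero]
  have hvol : 0 < ∏ j, 2 * lam j := Finset.prod_pos fun j _ => mul_pos two_pos (hlam j)
  calc eLpNorm (𝓕 g) 1 volume
      ≤ ∫⁻ x, ENNReal.ofReal (B * ∏ j, 2 * lam j) *
          ENNReal.ofReal (∏ j, (1 + (2 * Real.pi * lam j * ⟪x, b j⟫_ℝ) ^ 2)⁻¹) := by
        rw [eLpNorm_one_eq_lintegral_enorm]
        refine lintegral_mono fun x => ?_
        rw [← ofReal_norm,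
          ← ENNReal.ofReal_mul' (Finset.prod_nonneg fun j _ => by positivity)]
        exact ENNReal.ofReal_le_ofReal
          (norm_fourier_le_prod_inv_one_add_sq hlam hg hsupp hA₀ hA x)
    _ = ENNReal.ofReal B := by
        rw [lintegral_const_mul' _ _ ENNReal.ofReal_ne_top,
          lintegral_ofReal_prod_inv_one_add_mul_inner_sq b hπlam, hmajorant,
          ← ENNReal.ofReal_mul' (inv_nonneg.2 hvol.le), mul_inv_cancel_right₀ hvol.ne']

end FourierDecay

section SymbolMultiplier

lemma hasCompactSupport_slice {X Y Z : Type*} [TopologicalSpace X] [R1Space X] [TopologicalSpace Y]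
    [Zero Z] {a : X → Y → Z} (ha : HasCompactSupport fun q : X × Y => a q.1 q.2) (y : Y) :
    HasCompactSupport fun x => a x y :=
  .intro (ha.isCompact.image continuous_fst) fun x hx => by_contra fun h =>
    hx ⟨(x, y), subset_tsupport (fun q : X × Y => a q.1 q.2) h, rfl⟩

variable {n : ℕ} {γ : ℝ → Euc n} {χ : ℝ → ℝ} {a : Euc n → ℝ → ℂ}

/- The phase of `symbMult` carries no `2π`, unlike `Real.fourierChar`, hence the rescaled curve. -/
lemma fourierChar_inner_sub_two_pi_inv_smul {V : Type*} [NormedAddCommGroup V]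
    [InnerProductSpace ℝ V] (ξ x c : V) :
    (Real.fourierChar ⟪ξ, x - (2 * Real.pi)⁻¹ • c⟫_ℝ : ℂ) =
      Real.fourierChar ⟪ξ, x⟫_ℝ * Complex.exp (-(⟪c, ξ⟫_ℝ : ℂ) * Complex.I) := by
  simp only [Real.fourierChar_apply, ← Complex.exp_add, inner_sub_right, inner_smul_right,
    real_inner_comm ξ c]
  congr 1
  push_cast
  field_simp [Real.pi_ne_zero]
  ring

lemma fourierInv_symbMult_mul (hγ : Measurable γ) {h : Euc n → ℂ}
    (hint : Integrable fun q : Euc n × ℝ => a q.1 q.2 * χ q.2 * h q.1) (x : Euc n) :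
    𝓕⁻ (fun ξ => symbMult γ χ a ξ * h ξ) x =
      ∫ s, (χ s : ℂ) * 𝓕⁻ (fun ξ => a ξ s * h ξ) (x - (2 * Real.pi)⁻¹ • γ s) := by
  set phase : Euc n → ℝ → ℂ := fun ξ s => Real.fourierChar ⟪ξ, x - (2 * Real.pi)⁻¹ • γ s⟫_ℝ
  have hphase : Measurable fun q : Euc n × ℝ => phase q.1 q.2 := by
    have hchar : Continuous fun t : ℝ => (Real.fourierChar t : ℂ) :=
      continuous_subtype_val.comp Real.continuous_fourierChar
    exact hchar.measurable.comp (by fun_prop)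
  have hint' : Integrable fun q : Euc n × ℝ =>
      phase q.1 q.2 * (a q.1 q.2 * χ q.2 * h q.1) :=
    hint.bdd_mul (c := 1) hphase.aestronglyMeasurable (.of_forall fun _ => (Circle.norm_coe _).le)
  calc 𝓕⁻ (fun ξ => symbMult γ χ a ξ * h ξ) x
      = ∫ ξ, ∫ s, phase ξ s * (a ξ s * χ s * h ξ) := by
        simp only [Real.fourierInv_eq, Circle.smul_def, smul_eq_mul, symbMult,
          ← integral_mul_const, ← integral_const_mul, phase,
          fourierChar_inner_sub_two_pi_inv_smul]
        congr! 4
        ring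
    _ = ∫ s, ∫ ξ, phase ξ s * (a ξ s * χ s * h ξ) := integral_integral_swap hint'
    _ = ∫ s, (χ s : ℂ) * 𝓕⁻ (fun ξ => a ξ s * h ξ) (x - (2 * Real.pi)⁻¹ • γ s) := by
        simp only [Real.fourierInv_eq, Circle.smul_def, smul_eq_mul, ← integral_const_mul, phase]
        congr! 4
        ring

lemma integrable_symbol_mul_cutoff_mul (hχ : Measurable χ) {M : ℝ} (hM : ∀ s, |χ s| ≤ M)
    (ha : Continuous fun q : Euc n × ℝ => a q.1 q.2)
    (hac : HasCompactSupport fun q : Euc n × ℝ => a q.1 q.2) {h : Euc n → ℂ} (hh : Continuous h) :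
    Integrable fun q : Euc n × ℝ => a q.1 q.2 * χ q.2 * h q.1 := by
  have hah : Integrable fun q : Euc n × ℝ => a q.1 q.2 * h q.1 :=
    (ha.mul (hh.comp continuous_fst)).integrable_of_hasCompactSupport hac.mul_right
  have hχ' : Measurable fun q : Euc n × ℝ => (χ q.2 : ℂ) := by fun_prop
  refine (hah.bdd_mul hχ'.aestronglyMeasurable (c := M) (.of_forall fun q => ?_)).congr
    (.of_forall fun q => by ring)
  simpa only [Complex.norm_real, Real.norm_eq_abs] using hM q.2

lemma eLpNorm_top_fourierInv_symbMult_mul_fourier_le (hγ : Measurable γ) (hχ : Measurable χ)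
    {M : ℝ} (hM : ∀ s, |χ s| ≤ M) (ha : Continuous fun q : Euc n × ℝ => a q.1 q.2)
    (hac : HasCompactSupport fun q : Euc n × ℝ => a q.1 q.2) {K : ℝ≥0∞}
    (hK : ∀ s, eLpNorm (𝓕 fun ξ => a ξ s) 1 volume ≤ K) {f : Euc n → ℂ} (hf : Integrable f) :
    eLpNorm (𝓕⁻ fun ξ => symbMult γ χ a ξ * 𝓕 f ξ) ⊤ volume ≤
      ENNReal.ofReal M * K * volume {s | ∃ ξ, a ξ s ≠ 0} * eLpNorm f ⊤ volume := by
  set S := {s | ∃ ξ, a ξ s ≠ 0}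
  rw [eLpNorm_exponent_top]
  refine eLpNormEssSup_le_of_ae_enorm_bound (.of_forall fun x => ?_)
  rw [fourierInv_symbMult_mul hγ (integrable_symbol_mul_cutoff_mul hχ hM ha hac
    (continuous_fourier_of_integrable hf))]
  have hslice (s : ℝ) (y : Euc n) : ‖(χ s : ℂ) * 𝓕⁻ (fun ξ => a ξ s * 𝓕 f ξ) y‖ₑ ≤
      S.indicator (fun _ => ENNReal.ofReal M * (K * eLpNorm f ⊤ volume)) s := by
    by_cases hs : s ∈ S
    · have hint : Integrable fun ξ => a ξ s :=
        (ha.comp (.prodMk_left s)).integrable_of_hasCompactSupport (hasCompactSupport_slice hac s)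
      rw [indicator_of_mem hs, enorm_mul, ← ofReal_norm, Complex.norm_real]
      gcongr
      · exact hM s
      · exact (enorm_fourierInv_smul_fourier_le hint hf y).trans (by gcongr; exact hK s)
    · have hzero (ξ : Euc n) : a ξ s = 0 := by_contra fun h => hs ⟨ξ, h⟩
      simp [hzero, Real.fourierInv_eq]
  calc ‖∫ s, (χ s : ℂ) * 𝓕⁻ (fun ξ => a ξ s * 𝓕 f ξ) (x - (2 * Real.pi)⁻¹ • γ s)‖ₑ
      ≤ ∫⁻ s, S.indicator (fun _ => ENNReal.ofReal M * (K * eLpNorm f ⊤ volume)) s :=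
        (enorm_integral_le_lintegral_enorm _).trans (lintegral_mono fun s => hslice s _)
    _ ≤ ENNReal.ofReal M * (K * eLpNorm f ⊤ volume) * volume S :=
        lintegral_indicator_const_le _ _
    _ = ENNReal.ofReal M * K * volume S * eLpNorm f ⊤ volume := by ring

end SymbolMultiplier

theorem statement19_general {n : ℕ} {γ : ℝ → Euc n} (hγ : Measurable γ) {χ : ℝ → ℝ}
    (hχ : Measurable χ) {M : ℝ} (hM : ∀ s, |χ s| ≤ M) {a : Euc n → ℝ → ℂ}
    (ha : ContDiff ℝ (2 * n : ℕ) fun q : Euc n × ℝ => a q.1 q.2)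
    (hac : HasCompactSupport fun q : Euc n × ℝ => a q.1 q.2) {lam : Fin n → ℝ}
    (hlam : ∀ j, 0 < lam j) {v : Fin n → Euc n} (hv : Orthonormal ℝ v)
    (hbox : ∀ ξ s, a ξ s ≠ 0 → ∀ j, |⟪ξ, v j⟫_ℝ| ≤ lam j) {A₀ A : ℝ}
    (hA₀ : ∀ ξ s, ‖a ξ s‖ ≤ A₀)
    (hA : ∀ j ξ s, ‖(dirDeriv (v j))^[2 * n] (fun ζ => a ζ s) ξ‖ ≤ A * (lam j ^ (2 * n))⁻¹)
    {f : Euc n → ℂ} (hf : Integrable f) :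
    eLpNorm (𝓕⁻ fun ξ => symbMult γ χ a ξ * 𝓕 f ξ) ⊤ volume ≤
      ENNReal.ofReal (M * (2 ^ n * (A₀ + n * A))) * volume {s | ∃ ξ, a ξ s ≠ 0} *
        eLpNorm f ⊤ volume := by
  obtain ⟨b, hb⟩ := Orthonormal.exists_orthonormalBasis_extension_of_card_eq (s := univ) (v := v)
    (by simp) (hv.comp _ Subtype.val_injective)
  obtain rfl : ⇑b = v := funext fun j => hb j (mem_univ j)
  have hK (s : ℝ) : eLpNorm (𝓕 fun ξ => a ξ s) 1 volume ≤
      ENNReal.ofReal (2 ^ n * (A₀ + n * A)) := by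
    have hslice : ContDiff ℝ (2 * n : ℕ) fun ξ => a ξ s := ha.comp (contDiff_prodMk_left s)
    have hsupp : (Function.support fun ξ => a ξ s) ⊆ innerBox b lam := fun ξ => hbox ξ s
    simpa only [Fintype.card_fin] using eLpNorm_fourier_one_le hlam
      (by rwa [Fintype.card_fin]) hsupp (hA₀ · s)
      (by simpa only [Fintype.card_fin] using (hA · · s))
  rw [ENNReal.ofReal_mul ((abs_nonneg _).trans (hM 0))]
  exact eLpNorm_top_fourierInv_symbMult_mul_fourier_le hγ hχ hM ha.continuous hac hK hf

/-- the `M^∞` kernel estimate `‖m[a]‖_{M^∞(ℝⁿ)} ≤ C σ` for symbols with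
thin `s`-support, frequency support in a box adapted to an orthonormal basis and matching
derivative bounds.  The constant depends only on `n`, `χ` and the constants `cst`. -/
theorem statement19 (n : ℕ) (hn : 1 ≤ n)
    (c₁ c₂ : ℝ) (hc : c₁ < c₂)
    (χ : ℝ → ℝ) (hχ : ContDiff ℝ (⊤ : ℕ∞) χ) (hχc : HasCompactSupport χ)
    (hχs : tsupport χ ⊆ Set.Icc c₁ c₂)
    (cst : ℕ → ℝ) :
    ∃ C : ℝ, 0 < C ∧
    ∀ γ : ℝ → Euc n, ContDiff ℝ (⊤ : ℕ∞) γ →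
    ∀ a : Euc n → ℝ → ℂ,
      ContDiff ℝ (⊤ : ℕ∞) (fun q : Euc n × ℝ => a q.1 q.2) →
      HasCompactSupport (fun q : Euc n × ℝ => a q.1 q.2) →
      (∀ ξ s, a ξ s ≠ 0 → s ∈ Set.Icc c₁ c₂) →
    ∀ σ : ℝ, 0 < σ →
    ∀ lam : Fin n → ℝ, (∀ j, 0 < lam j) →
    ∀ v : Fin n → Euc n, Orthonormal ℝ v →
      volume {s : ℝ | ∃ ξ, a ξ s ≠ 0} ≤ ENNReal.ofReal σ →
      (∀ ξ s, a ξ s ≠ 0 → ∀ j, |⟪ξ, v j⟫_ℝ| ≤ lam j) →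
      (∀ N : ℕ, ∀ j : Fin n, ∀ (ξ : Euc n) (s : ℝ),
        ‖(fun G : Euc n → ℂ => fun ζ => fderiv ℝ G ζ (v j))^[N] (fun ζ => a ζ s) ξ‖ ≤
          cst N * (lam j ^ N)⁻¹) →
    ∀ f : SchwartzMap (Euc n) ℂ,
      eLpNorm (𝓕⁻ (fun ξ => symbMult γ χ a ξ * 𝓕 (⇑f) ξ)) ⊤ volume ≤
        ENNReal.ofReal (C * σ) * eLpNorm (⇑f) ⊤ volume := by
  obtain ⟨M, hM⟩ := hχc.exists_bound_of_continuous hχ.continuous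
  refine ⟨max 1 (M * (2 ^ n * (cst 0 + n * cst (2 * n)))), by positivity, ?_⟩
  intro γ hγ a ha hac _ σ _ lam hlam v hv hvol hbox hder f
  refine (statement19_general hγ.continuous.measurable hχ.continuous.measurable hM
    (contDiff_infty.1 ha _) hac hlam hv hbox
    (fun ξ s => by simpa using hder 0 ⟨0, hn⟩ ξ s) (hder (2 * n)) f.integrable).trans ?_
  rw [ENNReal.ofReal_mul (p := max _ _) (by positivity)]
  gcongr
  exact le_max_right _ _
end
end
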